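/- arXiv:2309.16766 — 2 statements merged into one kernel-verified Lean document; each statement's English description precedes it below -/
import Mathlib

section
/- Let H be a complex Hilbert space, 𝒜 a von Neumann algebra on H, and Ω ∈ H a vector that is cyclic and separating for 𝒜. Then there exists a strongly continuous one-parameter unitary group U on H such that the triple (𝒜, Ω, U) satisfies the KMS condition at inverse temperature β = 1. In particular, U(t)Ω = Ω for all t ∈ ℝ, and U(t) a U(t)⁻¹ ∈ 𝒜 for every a ∈ 𝒜 and every t ∈ ℝ (Tomita's theorem, combined with the modular KMS theorem). -/
open scoped ComplexInnerProductSpace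

noncomputable section

variable {H : Type*} [NormedAddCommGroup H] [InnerProductSpace ℂ H] [CompleteSpace H]

/-- A vector `Ω` is cyclic for a set `S` of bounded operators if `{a Ω : a ∈ S}` is dense. -/
def IsCyclicVector (S : Set (H →L[ℂ] H)) (Ω : H) : Prop :=
  Dense {x : H | ∃ a ∈ S, a Ω = x}

/-- A strongly continuous one-parameter unitary group on `H`. -/
def IsOneParamUnitaryGroup (U : ℝ → (H →L[ℂ] H)) : Prop :=
  (∀ t : ℝ, U t ∈ unitary (H →L[ℂ] H)) ∧
  U 0 = 1 ∧
  (∀ s t : ℝ, U (s + t) = U s * U t) ∧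
  (∀ x : H, Continuous fun t : ℝ => U t x)

/-- The closed strip `0 ≤ Re z ≤ 1`. -/
def unitStrip : Set ℂ := {z : ℂ | 0 ≤ z.re ∧ z.re ≤ 1}

/-- The KMS condition at inverse temperature `β = 1` for the triple `(A, Ω, U)`.
Since `U` is a one-parameter group, `U t` has inverse `U (-t)`. -/
def SatisfiesKMS (A : VonNeumannAlgebra H) (Ω : H) (U : ℝ → (H →L[ℂ] H)) : Prop :=
  (∀ t : ℝ, U t Ω = Ω) ∧
  (∀ t : ℝ, ∀ a ∈ A, U t * a * U (-t) ∈ A) ∧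
  (∀ a ∈ A, ∀ b ∈ A, ∃ F : ℂ → ℂ,
    (∃ M : ℝ, ∀ z ∈ unitStrip, ‖F z‖ ≤ M) ∧
    ContinuousOn F unitStrip ∧
    DifferentiableOn ℂ F (interior unitStrip) ∧
    (∀ t : ℝ, F (Complex.I * (t : ℂ)) = ⟪Ω, a (U (-t) (b Ω))⟫) ∧
    (∀ t : ℝ, F (1 + Complex.I * (t : ℂ)) = ⟪Ω, b (U t (a Ω))⟫))

/-!
The proof follows the bounded-operator approach of Rieffel and van Daele. Let `K` be the closure of
`A_sa Ω`, a real subspace with `K ∩ iK = 0` and `K + iK` dense, and let `P`, `Q` be the real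
projections onto `K` and `iK`. With `R = P + Q`, the conjugate-linear operator `P - Q` has polar
decomposition `J (R (2 - R))^½`, and `R^(-it) (2 - R)^(it)` is the modular group `Δ^(it)`, so that
no unbounded operator is needed; `U t = Δ^(-it)` and `σ_t = Ad Δ^(it)`.

Tomita's theorem rests on a Radon–Nikodym argument: for self-adjoint `x` in the commutant and
`Re l > 0` there is `a` in `A` with `(P - Q) x (P - Q) = l (2 - R) a R + l̄ R a (2 - R)`. Taking
`l = e^(-iθ/2)` with `|θ| < π`, the Poisson formula on a strip inverts this identity into
`∫ e^(θt) / cosh (πt) • σ_t (J x J) dt = 2 a`. Uniqueness of two-sided Laplace transforms then puts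
every `σ_t (J x J)` in `A`. Analytic continuation to the strip `0 ≤ Re z ≤ ½` gives conversely that
`J a J` is in the commutant whenever all `σ_t a` are in `A`, so the group preserves the commutant
and hence `A`.

For the KMS condition, write `b Ω = R^½ ζ_b` and `J b* Ω = (2 - R)^½ ζ_b`; the required function is
then `F z = ⟪ζ_(a*), R^(1-z) (2 - R)^z ζ_b⟫`.
-/

namespace TomitaTakesaki

section ComplexAnalysis

open Complex Set Filter Topology MeasureTheory
open Complex.HadamardThreeLines (verticalStrip)

variable {E : Type*} [NormedAddCommGroup E]

theorem integrable_exp_neg_mul_abs {c : ℝ} (hc : 0 < c) :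
    Integrable fun t : ℝ => Real.exp (-c * |t|) := by
  have hpos : IntegrableOn (fun t : ℝ => Real.exp (-c * |t|)) (Ioi 0) :=
    (integrableOn_exp_mul_Ioi (neg_lt_zero.2 hc) 0).congr_fun
      (fun t ht => by simp only [abs_of_pos (mem_Ioi.1 ht)]) measurableSet_Ioi
  have hneg : IntegrableOn (fun t : ℝ => Real.exp (-c * |t|)) (Iic 0) :=
    (integrableOn_exp_mul_Iic hc 0).congr_fun
      (fun t ht => by simp only [abs_of_nonpos (mem_Iic.1 ht), neg_mul_neg]) measurableSet_Iic
  simpa only [Iic_union_Ioi, integrableOn_univ] using hneg.union hpos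

theorem integrable_of_norm_le_exp_neg_mul_abs {f : ℝ → E} (hf : Continuous f) {C c : ℝ}
    (hc : 0 < c) (hb : ∀ t, ‖f t‖ ≤ C * Real.exp (-c * |t|)) : Integrable f :=
  ((integrable_exp_neg_mul_abs hc).const_mul C).mono' hf.aestronglyMeasurable
    (Eventually.of_forall hb)

theorem inv_cosh_pi_mul_le (t : ℝ) :
    (Real.cosh (Real.pi * t))⁻¹ ≤ 2 * Real.exp (-Real.pi * |t|) := by
  have hcosh : Real.exp (Real.pi * |t|) / 2 ≤ Real.cosh (Real.pi * t) := by
    rw [← Real.cosh_abs, abs_mul, abs_of_pos Real.pi_pos, Real.cosh_eq]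
    gcongr
    exact le_add_of_nonneg_right (Real.exp_pos _).le
  calc (Real.cosh (Real.pi * t))⁻¹ ≤ (Real.exp (Real.pi * |t|) / 2)⁻¹ := by gcongr
    _ = 2 * Real.exp (-Real.pi * |t|) := by rw [inv_div, neg_mul, Real.exp_neg, div_eq_mul_inv]

theorem norm_inv_cosh_smul_le [NormedSpace ℝ E] {f : ℝ → E} {M θ : ℝ}
    (hb : ∀ t, ‖f t‖ ≤ M * Real.exp (θ * |t|)) (t : ℝ) :
    ‖(Real.cosh (Real.pi * t))⁻¹ • f t‖ ≤ 2 * M * Real.exp (-(Real.pi - θ) * |t|) := by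
  rw [norm_smul, Real.norm_of_nonneg (inv_nonneg.2 (Real.cosh_pos _).le)]
  calc (Real.cosh (Real.pi * t))⁻¹ * ‖f t‖
      ≤ 2 * Real.exp (-Real.pi * |t|) * (M * Real.exp (θ * |t|)) := by
        gcongr
        exacts [inv_cosh_pi_mul_le t, hb t]
    _ = 2 * M * Real.exp (-(Real.pi - θ) * |t|) := by
        rw [show -(Real.pi - θ) * |t| = -Real.pi * |t| + θ * |t| by ring, Real.exp_add]
        ring

theorem continuous_inv_cosh_pi_mul : Continuous fun t : ℝ => (Real.cosh (Real.pi * t))⁻¹ :=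
  Continuous.inv₀ (by fun_prop) fun _ => (Real.cosh_pos _).ne'

theorem integrable_inv_cosh_smul [NormedSpace ℝ E] {f : ℝ → E} (hf : Continuous f) {M θ : ℝ}
    (hθ : θ < Real.pi) (hb : ∀ t, ‖f t‖ ≤ M * Real.exp (θ * |t|)) :
    Integrable fun t : ℝ => (Real.cosh (Real.pi * t))⁻¹ • f t :=
  integrable_of_norm_le_exp_neg_mul_abs (continuous_inv_cosh_pi_mul.smul hf) (sub_pos.2 hθ)
    (norm_inv_cosh_smul_le hb)

theorem integrable_inv_cosh_pi_mul : Integrable fun t : ℝ => (Real.cosh (Real.pi * t))⁻¹ := by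
  simpa using integrable_inv_cosh_smul (f := fun _ : ℝ => (1 : ℝ)) continuous_const
    Real.pi_pos (M := 1) (by simp)

theorem integral_inv_cosh_pi_mul : ∫ t : ℝ, (Real.cosh (Real.pi * t))⁻¹ = 1 := by
  have hderiv (t : ℝ) : HasDerivAt (fun t => Real.arctan (Real.sinh (Real.pi * t)) / Real.pi)
      (Real.cosh (Real.pi * t))⁻¹ t := by
    have hsinh : HasDerivAt (fun t => Real.sinh (Real.pi * t))
        (Real.cosh (Real.pi * t) * (Real.pi * 1)) t := ((hasDerivAt_id t).const_mul Real.pi).sinh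
    refine (hsinh.arctan.div_const Real.pi).congr_deriv ?_
    have := (Real.cosh_pos (Real.pi * t)).ne'
    rw [← Real.cosh_sq']
    field_simp
  have htop : Tendsto (fun t => Real.sinh (Real.pi * t)) atTop atTop :=
    Real.sinhOrderIso.tendsto_atTop.comp (tendsto_id.const_mul_atTop Real.pi_pos)
  have hbot : Tendsto (fun t => Real.sinh (Real.pi * t)) atBot atBot :=
    Real.sinhOrderIso.tendsto_atBot.comp (tendsto_id.const_mul_atBot Real.pi_pos)
  rw [integral_of_hasDerivAt_of_tendsto hderiv integrable_inv_cosh_pi_mul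
    (((Real.tendsto_arctan_atBot.mono_right nhdsWithin_le_nhds).comp hbot).div_const Real.pi)
    (((Real.tendsto_arctan_atTop.mono_right nhdsWithin_le_nhds).comp htop).div_const Real.pi)]
  field_simp
  norm_num

theorem exp_abs_im_le_four_mul_norm_cos {z : ℂ} (hz : 1 ≤ |z.im|) :
    Real.exp |z.im| ≤ 4 * ‖cos z‖ := by
  have htriangle : Real.exp |z.im| - Real.exp (-|z.im|) ≤ 2 * ‖cos z‖ := by
    have hcos : exp (z * I) + exp (-z * I) = 2 * cos z := by rw [cos]; ring
    have h1 := norm_sub_le_norm_add (exp (z * I)) (exp (-z * I))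
    have h2 := norm_sub_le_norm_add (exp (-z * I)) (exp (z * I))
    rw [add_comm (exp (-z * I))] at h2
    rw [hcos, norm_mul, Complex.norm_ofNat, norm_exp, norm_exp] at h1 h2
    rcases abs_cases z.im with ⟨h, -⟩ | ⟨h, -⟩ <;> simp [h] at * <;> linarith
  have hlarge : 2 ≤ Real.exp |z.im| := by linarith [Real.add_one_le_exp |z.im|]
  have hsmall : Real.exp (-|z.im|) ≤ 1 := Real.exp_le_one_iff.2 (by linarith)
  linarith

theorem cos_pi_mul_ne_zero {z : ℂ} (hz : z.re ∈ Icc 0 1) (hne : z ≠ 1 / 2) :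
    cos (Real.pi * z) ≠ 0 := by
  rw [Ne, cos_eq_zero_iff]
  rintro ⟨k, hk⟩
  have hzk : z = (2 * k + 1) / 2 :=
    mul_left_cancel₀ (ofReal_ne_zero.2 Real.pi_ne_zero) (hk.trans (by ring))
  have hre : z.re = (2 * k + 1) / 2 := by rw [hzk]; simp
  rw [hre] at hz
  have hk0 : k = 0 := by
    have h1 : (-1 : ℝ) < k := by linarith [hz.1]
    have h2 : (k : ℝ) < 1 := by linarith [hz.2]
    have h1' : -1 < k := by exact_mod_cast h1
    have h2' : k < 1 := by exact_mod_cast h2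
    omega
  exact hne (by rw [hzk, hk0]; simp)

variable [NormedSpace ℂ E]

theorem closure_verticalStrip {l u : ℝ} (hlu : l < u) :
    closure (verticalStrip l u) = re ⁻¹' Icc l u := by
  rw [verticalStrip, closure_preimage_re, closure_Ioo hlu.ne]

theorem tendsto_intervalIntegral_horizontal {q : ℂ → E} {l u : ℝ} (hlu : l < u) {g : ℝ → ℝ}
    (hg : Tendsto g atTop (𝓝 0)) (hqg : ∀ z, z.re ∈ Icc l u → 1 ≤ |z.im| → ‖q z‖ ≤ g |z.im|)
    {σ : ℝ → ℝ} (hσ : ∀ T, |σ T| = |T|) :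
    Tendsto (fun T : ℝ => ∫ x in l..u, q (x + σ T * I)) atTop (𝓝 0) := by
  rw [tendsto_zero_iff_norm_tendsto_zero]
  refine squeeze_zero' (Eventually.of_forall fun _ => norm_nonneg _) ?_
    (show Tendsto (fun T => g T * |u - l|) atTop (𝓝 0) by simpa using hg.mul_const |u - l|)
  filter_upwards [eventually_ge_atTop 1] with T hT
  have hσT : |σ T| = T := by rw [hσ, abs_of_pos (by linarith)]
  refine intervalIntegral.norm_integral_le_of_norm_le_const fun x hx => ?_
  rw [uIoc_of_le hlu.le] at hx
  simpa [hσT] using hqg (x + σ T * I) (by simpa using Ioc_subset_Icc_self hx) (by simpa [hσT])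

theorem exists_diffContOnCl_eq_inv_smul [CompleteSpace E] {U : Set ℂ} (hU : IsOpen U) {c : ℂ}
    (hc : c ∈ U) {s : ℂ → ℂ} {G : ℂ → E} (hs : DiffContOnCl ℂ s U) (hG : DiffContOnCl ℂ G U)
    (hsc : s c = 0) (hGc : G c = 0) (hs' : deriv s c ≠ 0)
    (hne : ∀ z ∈ closure U, z ≠ c → s z ≠ 0) :
    ∃ q : ℂ → E, DiffContOnCl ℂ q U ∧ ∀ z, z ≠ c → q z = (s z)⁻¹ • G z := by
  have hUc : U ∈ 𝓝 c := hU.mem_nhds hc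
  have hUc' : closure U ∈ 𝓝 c := mem_of_superset hUc subset_closure
  have hne' : ∀ z ∈ closure U, dslope s c z ≠ 0 := by
    intro z hz
    rcases eq_or_ne z c with rfl | h
    · rwa [dslope_same]
    · rw [dslope_of_ne _ h, slope_def_field, hsc, sub_zero]
      exact div_ne_zero (hne z hz h) (sub_ne_zero.2 h)
  refine ⟨fun z => (dslope s c z)⁻¹ • dslope G c z, ⟨?_, ?_⟩, fun z h => ?_⟩
  · exact (((differentiableOn_dslope hUc).2 hs.differentiableOn).inv
      fun z hz => hne' z (subset_closure hz)).smul
        ((differentiableOn_dslope hUc).2 hG.differentiableOn)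
  · exact (((continuousOn_dslope hUc').2
      ⟨hs.continuousOn, hs.differentiableOn.differentiableAt hUc⟩).inv₀ hne').smul
        ((continuousOn_dslope hUc').2
          ⟨hG.continuousOn, hG.differentiableOn.differentiableAt hUc⟩)
  · simp only [dslope_of_ne _ h, slope, vsub_eq_sub, hsc, hGc, sub_zero, smul_eq_mul, mul_inv,
      inv_inv, smul_smul]
    rw [mul_right_comm, mul_inv_cancel₀ (sub_ne_zero.2 h), one_mul]

theorem integral_vertical_line_eq {q : ℂ → E} {l u : ℝ} (hlu : l < u)
    (hq : DiffContOnCl ℂ q (verticalStrip l u)) (hl : Integrable fun t : ℝ => q (l + t * I))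
    (hu : Integrable fun t : ℝ => q (u + t * I)) {g : ℝ → ℝ} (hg : Tendsto g atTop (𝓝 0))
    (hqg : ∀ z, z.re ∈ Icc l u → 1 ≤ |z.im| → ‖q z‖ ≤ g |z.im|) :
    ∫ t : ℝ, q (l + t * I) = ∫ t : ℝ, q (u + t * I) := by
  have hrect (T : ℝ) : I • ((∫ t in -T..T, q (u + t * I)) - ∫ t in -T..T, q (l + t * I)) =
      (∫ x in l..u, q (x + T * I)) - ∫ x in l..u, q (x + (-T : ℝ) * I) := by
    have := integral_boundary_rect_eq_zero_of_continuousOn_of_differentiableOn q ⟨l, -T⟩ ⟨u, T⟩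
      (hq.continuousOn.mono fun z hz => ?_) (hq.differentiableOn.mono fun z hz => ?_)
    · rw [smul_sub, ← sub_eq_zero, ← this]
      abel
    · rw [closure_verticalStrip hlu, mem_preimage, ← uIcc_of_le hlu.le]
      exact hz.1
    · simpa only [min_eq_left hlu.le, max_eq_right hlu.le, verticalStrip] using hz.1
  have hlines : Tendsto (fun T : ℝ => I • ((∫ t in -T..T, q (u + t * I)) -
      ∫ t in -T..T, q (l + t * I))) atTop
      (𝓝 (I • ((∫ t : ℝ, q (u + t * I)) - ∫ t : ℝ, q (l + t * I)))) :=
    ((intervalIntegral_tendsto_integral hu tendsto_neg_atTop_atBot tendsto_id).sub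
      (intervalIntegral_tendsto_integral hl tendsto_neg_atTop_atBot tendsto_id)).const_smul I
  have hsides := (tendsto_intervalIntegral_horizontal hlu hg hqg (σ := id) fun _ => rfl).sub
    (tendsto_intervalIntegral_horizontal hlu hg hqg (σ := Neg.neg) abs_neg)
  have hzero := tendsto_nhds_unique hlines (by simpa only [hrect, sub_zero, id] using hsides)
  exact (sub_eq_zero.1 ((smul_eq_zero.1 hzero).resolve_left I_ne_zero)).symm

theorem tendsto_const_mul_exp_neg_mul_atTop {c : ℝ} (hc : 0 < c) (C : ℝ) :
    Tendsto (fun y : ℝ => C * Real.exp (-c * y)) atTop (𝓝 0) := by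
  simpa using (Real.tendsto_exp_atBot.comp
    (tendsto_id.const_mul_atTop_of_neg (neg_lt_zero.2 hc))).const_mul C

theorem diffContOnCl_cos_pi_mul {U : Set ℂ} :
    DiffContOnCl ℂ (fun z => cos (Real.pi * z)) U :=
  Differentiable.diffContOnCl (by fun_prop)

section Poisson

variable {G : ℂ → E} {M θ : ℝ}

theorem continuous_left_line (hG : DiffContOnCl ℂ G (verticalStrip 0 1)) :
    Continuous fun t : ℝ => G (I * t) :=
  hG.continuousOn.comp_continuous (by fun_prop) fun t => by
    simp [closure_verticalStrip zero_lt_one]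

theorem continuous_right_line (hG : DiffContOnCl ℂ G (verticalStrip 0 1)) :
    Continuous fun t : ℝ => G (1 + I * t) :=
  hG.continuousOn.comp_continuous (by fun_prop) fun t => by
    simp [closure_verticalStrip zero_lt_one]

theorem integrable_left_line (hG : DiffContOnCl ℂ G (verticalStrip 0 1)) (hθ : θ < Real.pi)
    (hM : ∀ z, z.re ∈ Icc 0 1 → ‖G z‖ ≤ M * Real.exp (θ * |z.im|)) :
    Integrable fun t : ℝ => (Real.cosh (Real.pi * t))⁻¹ • G (I * t) :=
  integrable_inv_cosh_smul (continuous_left_line hG) hθ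
    fun t => by simpa using hM (I * t) (by simp)

theorem integrable_right_line (hG : DiffContOnCl ℂ G (verticalStrip 0 1)) (hθ : θ < Real.pi)
    (hM : ∀ z, z.re ∈ Icc 0 1 → ‖G z‖ ≤ M * Real.exp (θ * |z.im|)) :
    Integrable fun t : ℝ => (Real.cosh (Real.pi * t))⁻¹ • G (1 + I * t) :=
  integrable_inv_cosh_smul (continuous_right_line hG) hθ
    fun t => by simpa using hM (1 + I * t) (by simp)

theorem cos_pi_mul_I_mul (t : ℝ) : cos (Real.pi * (I * t)) = Real.cosh (Real.pi * t) := by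
  rw [show (Real.pi * (I * t) : ℂ) = (Real.pi * t : ℝ) * I by push_cast; ring, cos_mul_I,
    ofReal_cosh]

theorem cos_pi_mul_one_add_I_mul (t : ℝ) :
    cos (Real.pi * (1 + I * t)) = -Real.cosh (Real.pi * t) := by
  rw [mul_add, mul_one, add_comm, cos_add_pi, cos_pi_mul_I_mul]

theorem norm_inv_cos_smul_le (hM : ∀ z, z.re ∈ Icc 0 1 → ‖G z‖ ≤ M * Real.exp (θ * |z.im|))
    {z : ℂ} (hz : z.re ∈ Icc 0 1) (him : 1 ≤ |z.im|) :
    ‖(cos (Real.pi * z))⁻¹ • G z‖ ≤ 4 * M * Real.exp (-(Real.pi - θ) * |z.im|) := by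
  have habs : |(Real.pi * z : ℂ).im| = Real.pi * |z.im| := by
    rw [im_ofReal_mul, abs_mul, abs_of_pos Real.pi_pos]
  have hcos : Real.exp (Real.pi * |z.im|) ≤ 4 * ‖cos (Real.pi * z)‖ := by
    rw [← habs]
    exact exp_abs_im_le_four_mul_norm_cos (by rw [habs]; nlinarith [Real.pi_gt_three])
  rw [norm_smul, norm_inv]
  calc ‖cos (Real.pi * z)‖⁻¹ * ‖G z‖
      ≤ (Real.exp (Real.pi * |z.im|) / 4)⁻¹ * (M * Real.exp (θ * |z.im|)) := by
        gcongr
        exacts [by linarith, hM z hz]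
    _ = 4 * M * Real.exp (-(Real.pi - θ) * |z.im|) := by
        rw [show -(Real.pi - θ) * |z.im| = θ * |z.im| - Real.pi * |z.im| by ring, Real.exp_sub]
        field_simp

theorem integral_inv_cosh_smul_add_eq_zero [CompleteSpace E]
    (hG : DiffContOnCl ℂ G (verticalStrip 0 1)) (hθ : θ < Real.pi)
    (hM : ∀ z, z.re ∈ Icc 0 1 → ‖G z‖ ≤ M * Real.exp (θ * |z.im|))
    (hG0 : G (1 / 2) = 0) :
    ∫ t : ℝ, (Real.cosh (Real.pi * t))⁻¹ • (G (I * t) + G (1 + I * t)) = 0 := by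
  have hderiv : HasDerivAt (fun z : ℂ => cos (Real.pi * z))
      (-sin (Real.pi * (1 / 2)) * (Real.pi * 1)) (1 / 2) :=
    ((hasDerivAt_id (1 / 2 : ℂ)).const_mul (Real.pi : ℂ)).ccos
  obtain ⟨q, hq, hqG⟩ := exists_diffContOnCl_eq_inv_smul (U := verticalStrip 0 1) (c := 1 / 2)
    (isOpen_Ioo.preimage continuous_re) (by norm_num [verticalStrip])
    diffContOnCl_cos_pi_mul hG (by rw [mul_one_div, cos_pi_div_two]) hG0
    (by rw [hderiv.deriv, mul_one_div, sin_pi_div_two]; simp)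
    fun z hz => cos_pi_mul_ne_zero (by rwa [closure_verticalStrip zero_lt_one] at hz)
  have hleft (t : ℝ) : q ((0 : ℝ) + t * I) = (Real.cosh (Real.pi * t))⁻¹ • G (I * t) := by
    rw [ofReal_zero, zero_add, mul_comm, hqG _ fun h => by simpa using congrArg re h,
      cos_pi_mul_I_mul, ← ofReal_inv, coe_smul]
  have hright (t : ℝ) :
      q ((1 : ℝ) + t * I) = -((Real.cosh (Real.pi * t))⁻¹ • G (1 + I * t)) := by
    rw [ofReal_one, mul_comm, hqG _ fun h => by norm_num [Complex.ext_iff] at h,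
      cos_pi_mul_one_add_I_mul, inv_neg, neg_smul,
      ← ofReal_inv, coe_smul]
  have hl := integrable_left_line hG hθ hM
  have hr := integrable_right_line hG hθ hM
  have hlines := integral_vertical_line_eq zero_lt_one hq (by simpa only [hleft] using hl)
    (by simp only [hright]; exact hr.neg)
    (tendsto_const_mul_exp_neg_mul_atTop (sub_pos.2 hθ) (4 * M)) fun z hz him => by
      rw [hqG z fun h => by norm_num [h] at him]
      exact norm_inv_cos_smul_le hM hz him
  simp_rw [smul_add]
  rw [integral_add hl hr, ← sub_neg_eq_add, ← integral_neg, sub_eq_zero]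
  simpa only [hleft, hright] using hlines

/-- The harmonic measure of the strip `0 ≤ Re z ≤ 1` seen from `1 / 2` has density
`1 / (2 cosh π t)` on each of the two boundary lines. -/
theorem integral_inv_cosh_smul_add [CompleteSpace E]
    (hG : DiffContOnCl ℂ G (verticalStrip 0 1)) (hθ0 : 0 ≤ θ)
    (hθ : θ < Real.pi) (hM : ∀ z, z.re ∈ Icc 0 1 → ‖G z‖ ≤ M * Real.exp (θ * |z.im|)) :
    ∫ t : ℝ, (Real.cosh (Real.pi * t))⁻¹ • (G (I * t) + G (1 + I * t)) = (2 : ℝ) • G (1 / 2) := by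
  have hbound (z : ℂ) (hz : z.re ∈ Icc 0 1) :
      ‖G z - G (1 / 2)‖ ≤ (M + ‖G (1 / 2)‖) * Real.exp (θ * |z.im|) := by
    have h1 : 1 ≤ Real.exp (θ * |z.im|) := Real.one_le_exp (by positivity)
    rw [add_mul]
    exact (norm_sub_le _ _).trans
      (add_le_add (hM z hz) (le_mul_of_one_le_right (norm_nonneg _) h1))
  have hzero := integral_inv_cosh_smul_add_eq_zero (hG.sub_const (G (1 / 2))) hθ hbound (sub_self _)
  have hconst :
      ∫ t : ℝ, (Real.cosh (Real.pi * t))⁻¹ • (2 : ℝ) • G (1 / 2) = (2 : ℝ) • G (1 / 2) := by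
    rw [integral_smul_const, integral_inv_cosh_pi_mul, one_smul]
  have hsum : Integrable fun t : ℝ =>
      (Real.cosh (Real.pi * t))⁻¹ • (G (I * t) + G (1 + I * t)) := by
    simpa only [smul_add, Pi.add_def] using
      (integrable_left_line hG hθ hM).add (integrable_right_line hG hθ hM)
  conv_rhs => rw [← hconst]
  rw [← sub_eq_zero, ← integral_sub hsum (integrable_inv_cosh_pi_mul.smul_const _), ← hzero]
  congr 1 with t
  rw [← smul_sub, two_smul]
  congr 1
  abel

end Poisson

section Laplace

variable {h : ℝ → E} {C c : ℝ}

theorem norm_exp_smul_le (hb : ∀ t, ‖h t‖ ≤ C * Real.exp (-c * |t|)) {z : ℂ} {r : ℝ}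
    (hz : |z.re| ≤ r) (t : ℝ) : ‖exp (z * t) • h t‖ ≤ C * Real.exp (-(c - r) * |t|) := by
  have hexp : ‖exp (z * t)‖ ≤ Real.exp (r * |t|) := by
    rw [norm_exp, re_mul_ofReal, Real.exp_le_exp]
    exact (le_abs_self _).trans (by rw [abs_mul]; gcongr)
  rw [norm_smul]
  calc ‖exp (z * t)‖ * ‖h t‖ ≤ Real.exp (r * |t|) * (C * Real.exp (-c * |t|)) := by
        gcongr
        exact hb t
    _ = C * Real.exp (-(c - r) * |t|) := by
        rw [show -(c - r) * |t| = r * |t| + -c * |t| by ring, Real.exp_add]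
        ring

theorem integrable_exp_smul (hh : Continuous h) (hb : ∀ t, ‖h t‖ ≤ C * Real.exp (-c * |t|))
    {z : ℂ} (hz : |z.re| < c) : Integrable fun t : ℝ => exp (z * t) • h t :=
  integrable_of_norm_le_exp_neg_mul_abs (by fun_prop) (sub_pos.2 hz) (norm_exp_smul_le hb le_rfl)

theorem differentiableOn_integral_exp_smul [CompleteSpace E] (hh : Continuous h)
    (hb : ∀ t, ‖h t‖ ≤ C * Real.exp (-c * |t|)) :
    DifferentiableOn ℂ (fun z => ∫ t : ℝ, exp (z * t) • h t) {z | |z.re| < c} := by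
  intro z hz
  obtain ⟨r, hzr, hrc⟩ := exists_between (show |z.re| < c from hz)
  set δ := (c - r) / 2 with hδ
  have hδ0 : 0 < δ := by linarith
  have hbound (t : ℝ) (w : ℂ) (hw : |w.re| < r) :
      ‖(t * exp (w * t)) • h t‖ ≤ δ⁻¹ * C * Real.exp (-δ * |t|) := by
    have ht : |t| ≤ δ⁻¹ * Real.exp (δ * |t|) := by
      rw [← div_eq_inv_mul, le_div_iff₀ hδ0, mul_comm]
      linarith [Real.add_one_le_exp (δ * |t|)]
    rw [mul_smul, norm_smul, norm_real, Real.norm_eq_abs]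
    calc |t| * ‖exp (w * t) • h t‖
        ≤ δ⁻¹ * Real.exp (δ * |t|) * (C * Real.exp (-(c - r) * |t|)) := by
          gcongr
          exact norm_exp_smul_le hb hw.le t
      _ = δ⁻¹ * C * Real.exp (-δ * |t|) := by
          rw [show -δ * |t| = δ * |t| + -(c - r) * |t| by rw [hδ]; ring, Real.exp_add]
          ring
  have hderiv (t : ℝ) (w : ℂ) :
      HasDerivAt (fun z : ℂ => exp (z * t) • h t) ((t * exp (w * t)) • h t) w := by
    have : HasDerivAt (fun z : ℂ => exp (z * t)) (exp (w * t) * (1 * t)) w :=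
      ((hasDerivAt_id w).mul_const (t : ℂ)).cexp
    exact (this.smul_const (h t)).congr_deriv (by rw [one_mul, mul_comm])
  have hopen : IsOpen {w : ℂ | |w.re| < r} := isOpen_lt (by fun_prop) continuous_const
  exact (hasDerivAt_integral_of_dominated_loc_of_deriv_le (hopen.mem_nhds hzr)
    (Eventually.of_forall fun w => Continuous.aestronglyMeasurable (by fun_prop))
    (integrable_exp_smul hh hb hz) (Continuous.aestronglyMeasurable (by fun_prop))
    (Eventually.of_forall hbound) ((integrable_exp_neg_mul_abs hδ0).const_mul (δ⁻¹ * C))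
    (Eventually.of_forall fun t w _ => hderiv t w)).2.differentiableAt.differentiableWithinAt

theorem eqOn_zero_of_forall_real_eq_zero [CompleteSpace E] {F : ℂ → E}
    (hc : 0 < c) (hF : DifferentiableOn ℂ F {z | |z.re| < c}) (h0 : ∀ θ : ℝ, |θ| < c → F θ = 0) :
    EqOn F 0 {z | |z.re| < c} := by
  have hopen : IsOpen {z : ℂ | |z.re| < c} := isOpen_lt (by fun_prop) continuous_const
  have hconvex : Convex ℝ {z : ℂ | |z.re| < c} := by
    simpa only [abs_lt, ofPred_and] using
      (convex_halfSpace_re_gt (-c)).inter (convex_halfSpace_re_lt c)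
  refine AnalyticOnNhd.eqOn_of_preconnected_of_frequently_eq (z₀ := 0)
    (hF.analyticOnNhd hopen) analyticOnNhd_const hconvex.isPreconnected (by simpa) ?_
  have htendsto : Tendsto (fun x : ℝ => (x : ℂ)) (𝓝[≠] 0) (𝓝[≠] 0) := by
    simpa using (continuous_ofReal.continuousWithinAt (s := {0}ᶜ) (x := 0)).tendsto_nhdsWithin
      fun x hx => by simpa using hx
  have hnear : ∀ᶠ x : ℝ in 𝓝[≠] 0, F x = 0 := by
    filter_upwards [nhdsWithin_le_nhds (Metric.ball_mem_nhds (0 : ℝ) hc)] with x hx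
    exact h0 x (by simpa using hx)
  exact htendsto.frequently hnear.frequently

theorem eq_zero_of_integral_exp_smul_eq_zero [CompleteSpace E] (hh : Continuous h)
    (hc : 0 < c) (hb : ∀ t, ‖h t‖ ≤ C * Real.exp (-c * |t|))
    (h0 : ∀ θ : ℝ, |θ| < c → ∫ t : ℝ, Real.exp (θ * t) • h t = 0) (t : ℝ) : h t = 0 := by
  have hzero := eqOn_zero_of_forall_real_eq_zero hc (differentiableOn_integral_exp_smul hh hb)
    fun θ hθ => by
      rw [← h0 θ hθ]
      simp_rw [← coe_smul, ofReal_exp, ofReal_mul]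
  have hfourier : FourierTransform.fourier h = 0 := by
    ext w
    have hw : ∫ t : ℝ, exp (-2 * Real.pi * w * I * t) • h t = 0 := hzero (by simpa)
    rw [Real.fourier_eq', Pi.zero_apply, ← hw]
    congr 1 with t
    congr 2
    simp
    ring
  have hint : Integrable h := integrable_of_norm_le_exp_neg_mul_abs hh hc hb
  rw [← hint.fourierInv_fourier_eq (by rw [hfourier]; exact integrable_zero _ _ _) hh.continuousAt,
    hfourier, Real.fourierInv_eq']
  simp

end Laplace

theorem eqOn_zero_of_eq_zero_on_left_line {f : ℂ → E} {l u M : ℝ} (hlu : l < u)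
    (hf : DiffContOnCl ℂ f (verticalStrip l u)) (hM : ∀ z, z.re ∈ Icc l u → ‖f z‖ ≤ M)
    (h0 : ∀ z, z.re = l → f z = 0) : EqOn f 0 (re ⁻¹' Icc l u) := by
  rw [← closure_verticalStrip hlu]
  refine EqOn.of_subset_closure (fun z hz => ?_) hf.continuousOn continuousOn_const
    subset_closure subset_rfl
  have hle := HadamardThreeLines.norm_le_interp_of_mem_verticalClosedStrip' (a := 0) (b := M) hlu
    (Ioo_subset_Icc_self hz) hf ⟨M, forall_mem_image.2 hM⟩
    (fun w hw => by rw [h0 w hw, norm_zero])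
    fun w hw => hM w (by rw [mem_preimage.1 hw]; exact right_mem_Icc.2 hlu.le)
  have hexp : 1 - (z.re - l) / (u - l) ≠ 0 := by
    rw [Ne, sub_eq_zero, eq_comm, div_eq_one_iff_eq (sub_pos.2 hlu).ne']
    linarith [hz.2]
  rwa [Real.zero_rpow hexp, zero_mul, norm_le_zero_iff] at hle

end ComplexAnalysis

section Intertwining

open Filter Topology

section NormedSpace

variable {G E : Type*} [NormedAddCommGroup G] [NormedSpace ℂ G] [NormedAddCommGroup E]
  [NormedSpace ℂ E] {σ : ℂ →+* ℂ} (D : G →SL[σ] E) {X : G →L[ℂ] G} {X' : E →L[ℂ] E}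

include D in
theorem pow_intertwine (h : ∀ v, D (X v) = X' (D v)) (n : ℕ) (v : G) :
    D ((X ^ n) v) = (X' ^ n) (D v) := by
  induction n generalizing v with
  | zero => simp
  | succ n ih => simp only [pow_succ, mul_apply_eq_comp, ih, h]

theorem aeval_intertwine (h : ∀ v, D (X v) = X' (D v)) (p : Polynomial ℝ) (v : G) :
    D (p.aeval X v) = p.aeval X' (D v) := by
  induction p using Polynomial.induction_on' with
  | add p q hp hq => simp only [map_add, add_apply, hp, hq]
  | monomial n a =>
    simp only [Polynomial.aeval_monomial, ← Algebra.smul_def, smul_apply,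
      map_real_smul D D.continuous, pow_intertwine D h]

theorem exp_intertwine [CompleteSpace G] [CompleteSpace E] (h : ∀ v, D (X v) = X' (D v)) (v : G) :
    D (NormedSpace.exp X v) = NormedSpace.exp X' (D v) := by
  have hX := ((NormedSpace.exp_series_hasSum_exp' (𝕂 := ℝ) X).mapL
    (ContinuousLinearMap.apply ℂ G v)).map D D.continuous
  have hX' := (NormedSpace.exp_series_hasSum_exp' (𝕂 := ℝ) X').mapL
    (ContinuousLinearMap.apply ℂ E (D v))
  refine hX.unique (hX'.congr_fun fun n => ?_)
  simp only [Function.comp_apply, ContinuousLinearMap.apply_apply, smul_apply,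
    map_real_smul D D.continuous, pow_intertwine D h]

end NormedSpace

theorem exists_polynomial_tendstoUniformlyOn {f : ℝ → ℝ} (hf : Continuous f) {s : Set ℝ}
    (hs : IsCompact s) :
    ∃ p : ℕ → Polynomial ℝ, TendstoUniformlyOn (fun n => (p n).eval) f atTop s := by
  obtain ⟨r, hr⟩ := hs.isBounded.subset_closedBall 0
  rw [Real.closedBall_eq_Icc] at hr
  choose p hp using fun n : ℕ => exists_polynomial_near_of_continuousOn (0 - r) (0 + r) f
    hf.continuousOn (1 / ((n : ℝ) + 1)) Nat.one_div_pos_of_nat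
  refine ⟨p, Metric.tendstoUniformlyOn_iff.2 fun ε hε => ?_⟩
  filter_upwards [tendsto_one_div_add_atTop_nhds_zero_nat.eventually_lt_const hε] with n hn t ht
  rw [dist_comm, Real.dist_eq]
  exact (hp n t (hr ht)).trans hn

theorem cfc_intertwine {G E : Type*} [NormedAddCommGroup G] [InnerProductSpace ℂ G]
    [CompleteSpace G] [NormedAddCommGroup E] [InnerProductSpace ℂ E] [CompleteSpace E]
    {σ : ℂ →+* ℂ} (D : G →SL[σ] E) {X : G →L[ℂ] G} {X' : E →L[ℂ] E}
    (h : ∀ v, D (X v) = X' (D v)) (hX : IsSelfAdjoint X) (hX' : IsSelfAdjoint X') {f : ℝ → ℝ}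
    (hf : Continuous f) (v : G) : D (cfc f X v) = cfc f X' (D v) := by
  obtain ⟨p, hp⟩ := exists_polynomial_tendstoUniformlyOn hf
    ((spectrum.isCompact (𝕜 := ℝ) X).union (spectrum.isCompact (𝕜 := ℝ) X'))
  have hlim := tendsto_cfc_fun (hp.mono Set.subset_union_left)
    (Eventually.of_forall fun n => (p n).continuous.continuousOn)
  have hlim' := tendsto_cfc_fun (hp.mono Set.subset_union_right)
    (Eventually.of_forall fun n => (p n).continuous.continuousOn)
  simp only [cfc_polynomial _ _ hX] at hlim
  simp only [cfc_polynomial _ _ hX'] at hlim'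
  refine tendsto_nhds_unique
    ((D.continuous.comp (ContinuousLinearMap.apply ℂ G v).continuous).tendsto _ |>.comp hlim)
    (((ContinuousLinearMap.apply ℂ E (D v)).continuous.tendsto _ |>.comp hlim').congr fun n => ?_)
  exact (aeval_intertwine D h (p n) v).symm

end Intertwining

section StrictlyBetween

open Complex Set Filter Topology

/-- `0 < R < 2` in the sense of forms: `0 ≤ R ≤ 2` and both `R` and `2 - R` are injective. This is
what allows one to form the products `R ^ α * (2 - R) ^ β`, imaginary powers included. -/
structure IsStrictlyBetweenZeroTwo (R : H →L[ℂ] H) : Prop where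
  nonneg : 0 ≤ R
  le_two : R ≤ 2
  injective : Function.Injective R
  injective_two_sub : Function.Injective (2 - R : H →L[ℂ] H)

namespace IsStrictlyBetweenZeroTwo

variable {R : H →L[ℂ] H}

theorem two_sub (hR : IsStrictlyBetweenZeroTwo R) : IsStrictlyBetweenZeroTwo (2 - R) where
  nonneg := sub_nonneg.2 hR.le_two
  le_two := sub_le_self 2 hR.nonneg
  injective := hR.injective_two_sub
  injective_two_sub := by simpa only [sub_sub_cancel] using hR.injective

theorem isSelfAdjoint (hR : IsStrictlyBetweenZeroTwo R) : IsSelfAdjoint R :=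
  .of_nonneg hR.nonneg

theorem spectrum_subset_Icc (hR : IsStrictlyBetweenZeroTwo R) : spectrum ℝ R ⊆ Icc 0 2 := by
  intro r hr
  refine ⟨spectrum_nonneg_of_nonneg hR.nonneg hr, ?_⟩
  have h : (2 : ℝ) - r ∈ spectrum ℝ (2 - R) := by
    rw [← map_ofNat (algebraMap ℝ (H →L[ℂ] H)) 2, ← spectrum.singleton_sub_eq]
    exact Set.sub_mem_sub rfl hr
  linarith [spectrum_nonneg_of_nonneg hR.two_sub.nonneg h]

theorem norm_cfc_re_le (hR : IsStrictlyBetweenZeroTwo R) {g : ℝ → ℂ} {C : ℝ} (hC : 0 ≤ C)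
    (hg : ∀ r ∈ Icc (0 : ℝ) 2, ‖g r‖ ≤ C) : ‖cfc (fun z : ℂ => g z.re) R‖ ≤ C :=
  norm_cfc_le hC fun _ hz =>
    hg _ (hR.spectrum_subset_Icc (hR.isSelfAdjoint.spectrumRestricts.apply_mem hz))

theorem denseRange_mul_two_sub (hR : IsStrictlyBetweenZeroTwo R) :
    DenseRange (R * (2 - R) : H →L[ℂ] H) := by
  have hcomm : Commute R (2 - R) := (Commute.ofNat_right R 2).sub_right (Commute.refl R)
  have hadj : IsSelfAdjoint (R * (2 - R)) :=
    (hR.isSelfAdjoint.commute_iff hR.two_sub.isSelfAdjoint).1 hcomm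
  have hker : (R * (2 - R) : H →L[ℂ] H).ker = ⊥ :=
    LinearMap.ker_eq_bot.2 (hR.injective.comp hR.injective_two_sub)
  have horth := ContinuousLinearMap.orthogonal_range (R * (2 - R))
  rw [hadj.adjoint_eq, hker, ← Submodule.topologicalClosure_eq_top_iff] at horth
  exact Submodule.dense_iff_topologicalClosure_eq_top.2 horth

end IsStrictlyBetweenZeroTwo

end StrictlyBetween

section TruncatedPowers

open Complex Set Filter Topology

/-- The logarithm, cut off below `1 / (n + 2)` so that it becomes continuous on `ℝ`. -/
def truncLog (n : ℕ) (r : ℝ) : ℝ :=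
  Real.log (max r (1 / ((n : ℝ) + 2)))

theorem max_one_div_pos (n : ℕ) (r : ℝ) : 0 < max r (1 / ((n : ℝ) + 2)) :=
  lt_max_of_lt_right (by positivity)

@[fun_prop]
theorem continuous_truncLog (n : ℕ) : Continuous (truncLog n) :=
  (continuous_id.max continuous_const).log fun r => (max_one_div_pos n r).ne'

theorem exp_truncLog (n : ℕ) (r : ℝ) :
    Real.exp (truncLog n r) = max r (1 / ((n : ℝ) + 2)) :=
  Real.exp_log (max_one_div_pos n r)

theorem one_div_add_two_le_half (n : ℕ) : 1 / ((n : ℝ) + 2) ≤ 1 / 2 :=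
  one_div_le_one_div_of_le two_pos (le_add_of_nonneg_left n.cast_nonneg)

theorem truncLog_le_log_two (n : ℕ) {r : ℝ} (hr : r ≤ 2) : truncLog n r ≤ Real.log 2 :=
  Real.log_le_log (max_one_div_pos n r) <|
    max_le hr ((one_div_add_two_le_half n).trans (by norm_num))

theorem truncLog_one (n : ℕ) : truncLog n 1 = 0 := by
  rw [truncLog, max_eq_left ((one_div_add_two_le_half n).trans (by norm_num)), Real.log_one]

theorem truncLog_eq_log {k n : ℕ} (hkn : k ≤ n) {r : ℝ} (hr : 1 / ((k : ℝ) + 2) ≤ r) :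
    truncLog n r = Real.log r := by
  rw [truncLog, max_eq_left (le_trans (by gcongr) hr)]

/-- The function `r ^ α * (2 - r) ^ β` with truncated logarithms. -/
def truncPowFun (n : ℕ) (α β : ℂ) (r : ℝ) : ℂ :=
  exp (α * truncLog n r + β * truncLog n (2 - r))

@[fun_prop]
theorem continuous_truncPowFun (n : ℕ) (α β : ℂ) : Continuous (truncPowFun n α β) := by
  unfold truncPowFun
  fun_prop

/-- Exponents for which `r ^ α * (2 - r) ^ β` is bounded on `[0, 2]`, uniformly in `α` and `β`. -/
def IsAdmissible (α β : ℂ) : Prop :=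
  α ∈ unitStrip ∧ β ∈ unitStrip

theorem star_one_half : star (1 / 2 : ℂ) = 1 / 2 := by simp

theorem IsAdmissible.star {α β : ℂ} (h : IsAdmissible α β) : IsAdmissible (star α) (star β) := by
  simpa [IsAdmissible, unitStrip] using h

theorem IsAdmissible.symm {α β : ℂ} (h : IsAdmissible α β) : IsAdmissible β α :=
  And.symm h

theorem isAdmissible_one_zero : IsAdmissible 1 0 := by
  simp [IsAdmissible, unitStrip]

theorem isAdmissible_one_half : IsAdmissible (1 / 2) (1 / 2) := by
  norm_num [IsAdmissible, unitStrip]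

theorem isAdmissible_one_half_zero : IsAdmissible (1 / 2) 0 := by
  norm_num [IsAdmissible, unitStrip]

theorem isAdmissible_zero_one_half : IsAdmissible 0 (1 / 2) := by
  norm_num [IsAdmissible, unitStrip]

theorem isAdmissible_one_sub {w : ℂ} (hw : w.re ∈ Icc 0 1) : IsAdmissible (1 - w) w := by
  obtain ⟨h0, h1⟩ := hw
  simp [IsAdmissible, unitStrip, h0, h1]

theorem isAdmissible_one_half_sub {w : ℂ} (hw : w.re ∈ Icc 0 (1 / 2)) :
    IsAdmissible (1 / 2 - w) w := by
  obtain ⟨h0, h1⟩ := hw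
  have hre : (1 / 2 - w).re = 1 / 2 - w.re := by simp
  exact ⟨⟨by linarith, by linarith⟩, h0, by linarith⟩

variable {α β : ℂ}

theorem norm_truncPowFun_le (n : ℕ) (h : IsAdmissible α β) {r : ℝ} (hr : r ∈ Icc 0 2) :
    ‖truncPowFun n α β r‖ ≤ 4 := by
  obtain ⟨⟨hα0, hα1⟩, hβ0, hβ1⟩ := h
  have hlog : 0 ≤ Real.log 2 := Real.log_nonneg one_le_two
  have hle : ∀ {c s : ℝ}, 0 ≤ c → c ≤ 1 → s ≤ 2 → c * truncLog n s ≤ Real.log 2 :=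
    fun h0 h1 hs => (mul_le_mul_of_nonneg_left (truncLog_le_log_two n hs) h0).trans
      (mul_le_of_le_one_left hlog h1)
  calc ‖truncPowFun n α β r‖
      = Real.exp (α.re * truncLog n r + β.re * truncLog n (2 - r)) := by
        simp [truncPowFun, norm_exp]
    _ ≤ Real.exp (Real.log 2 + Real.log 2) :=
        Real.exp_le_exp.2 (add_le_add (hle hα0 hα1 hr.2) (hle hβ0 hβ1 (by linarith [hr.1])))
    _ = 4 := by rw [Real.exp_add, Real.exp_log two_pos]; norm_num

theorem norm_truncPowFun_sub_mul_le {k n m : ℕ} (hn : k ≤ n) (hm : k ≤ m) (h : IsAdmissible α β)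
    {r : ℝ} (hr : r ∈ Icc 0 2) :
    ‖(truncPowFun n α β r - truncPowFun m α β r) * (r * (2 - r) : ℝ)‖ ≤ 16 / ((k : ℝ) + 2) := by
  have hk : 0 < 1 / ((k : ℝ) + 2) := by positivity
  obtain ⟨hr0, hr2⟩ := hr
  by_cases hc : 1 / ((k : ℝ) + 2) ≤ r ∧ 1 / ((k : ℝ) + 2) ≤ 2 - r
  · simp only [truncPowFun, truncLog_eq_log hn hc.1, truncLog_eq_log hm hc.1,
      truncLog_eq_log hn hc.2, truncLog_eq_log hm hc.2, sub_self, zero_mul, norm_zero]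
    positivity
  · have hsmall : r * (2 - r) ≤ 2 * (1 / ((k : ℝ) + 2)) := by
      rcases not_and_or.1 hc with h | h <;> nlinarith
    have hdiff : ‖truncPowFun n α β r - truncPowFun m α β r‖ ≤ 4 + 4 :=
      (norm_sub_le _ _).trans
        (add_le_add (norm_truncPowFun_le n h ⟨hr0, hr2⟩) (norm_truncPowFun_le m h ⟨hr0, hr2⟩))
    rw [norm_mul, norm_real, Real.norm_of_nonneg (mul_nonneg hr0 (sub_nonneg.2 hr2))]
    calc _ ≤ (4 + 4) * (2 * (1 / ((k : ℝ) + 2))) := by gcongr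
      _ = 16 / ((k : ℝ) + 2) := by ring

theorem norm_truncPowFun_one_zero_sub_le (n : ℕ) {r : ℝ} (hr : 0 ≤ r) :
    ‖truncPowFun n 1 0 r - r‖ ≤ 1 / ((n : ℝ) + 2) := by
  have hexp : truncPowFun n 1 0 r - r = ((max r (1 / ((n : ℝ) + 2)) - r : ℝ) : ℂ) := by
    rw [← exp_truncLog]
    simp [truncPowFun]
  rw [hexp, norm_real, Real.norm_of_nonneg (sub_nonneg.2 (le_max_left _ _)), sub_le_iff_le_add]
  exact max_le (le_add_of_nonneg_left (by positivity)) (le_add_of_nonneg_right hr)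

/-- The operator `R ^ α * (2 - R) ^ β` with truncated logarithms. -/
def truncPow (R : H →L[ℂ] H) (n : ℕ) (α β : ℂ) : H →L[ℂ] H :=
  NormedSpace.exp (α • cfc (truncLog n) R + β • cfc (truncLog n) (2 - R))

theorem two_sub_eq_cfc {R : H →L[ℂ] H} (hR : IsSelfAdjoint R) :
    2 - R = cfc (fun r : ℝ => 2 - r) R := by
  rw [cfc_sub _ _ _, cfc_const (2 : ℝ) R, cfc_id' ℝ R, map_ofNat]

theorem truncPow_eq_cfc {R : H →L[ℂ] H} (hR : IsSelfAdjoint R) (n : ℕ) (α β : ℂ) :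
    truncPow R n α β = cfc (fun z : ℂ => truncPowFun n α β z.re) R := by
  have hsnd : cfc (truncLog n) (2 - R) = cfc (fun r => truncLog n (2 - r)) R := by
    rw [cfc_comp' (truncLog n) (fun r => 2 - r) R (by fun_prop), ← two_sub_eq_cfc hR]
  have hexponent : α • cfc (truncLog n) R + β • cfc (truncLog n) (2 - R)
      = cfc (fun z : ℂ => α * truncLog n z.re + β * truncLog n (2 - z.re)) R := by
    rw [hsnd, cfc_real_eq_complex (truncLog n), cfc_real_eq_complex fun r => truncLog n (2 - r),
      cfc_add _ _ _ (by fun_prop) (by fun_prop), cfc_const_mul _ _ _ (by fun_prop),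
      cfc_const_mul _ _ _ (by fun_prop)]
  rw [truncPow, hexponent, ← CFC.complex_exp_eq_normedSpace_exp (cfc_predicate _ _)]
  exact (cfc_comp' Complex.exp _ R (by fun_prop) (by fun_prop)).symm

theorem truncPow_add {R : H →L[ℂ] H} (hR : IsSelfAdjoint R) (n : ℕ) (α β α' β' : ℂ) :
    truncPow R n (α + α') (β + β') = truncPow R n α β * truncPow R n α' β' := by
  rw [truncPow_eq_cfc hR, truncPow_eq_cfc hR, truncPow_eq_cfc hR,
    ← cfc_mul _ _ _ (by fun_prop) (by fun_prop)]
  congr 1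
  ext z
  rw [truncPowFun, truncPowFun, truncPowFun, ← exp_add]
  ring_nf

theorem star_truncPow (R : H →L[ℂ] H) (n : ℕ) (α β : ℂ) :
    star (truncPow R n α β) = truncPow R n (star α) (star β) := by
  have hlog : ∀ S : H →L[ℂ] H, star (cfc (truncLog n) S) = cfc (truncLog n) S :=
    fun S => cfc_predicate (truncLog n) S
  rw [truncPow, NormedSpace.star_exp, star_add, star_smul, star_smul, hlog, hlog, truncPow]

theorem truncPow_zero (R : H →L[ℂ] H) (n : ℕ) : truncPow R n 0 0 = 1 := by
  simp [truncPow]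

theorem truncPow_two_sub (R : H →L[ℂ] H) (n : ℕ) (α β : ℂ) :
    truncPow (2 - R) n α β = truncPow R n β α := by
  rw [truncPow, truncPow, sub_sub_cancel, add_comm]

theorem differentiable_truncPow (R : H →L[ℂ] H) (n : ℕ) :
    Differentiable ℂ fun p : ℂ × ℂ => truncPow R n p.1 p.2 := by
  have hexp : Differentiable ℂ (NormedSpace.exp : (H →L[ℂ] H) → (H →L[ℂ] H)) :=
    fun T => (NormedSpace.exp_analytic T).differentiableAt
  exact hexp.comp (by fun_prop)

theorem exp_apply_eq_self {X : H →L[ℂ] H} {v : H} (hv : X v = 0) : NormedSpace.exp X v = v := by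
  have h := exp_intertwine (ContinuousLinearMap.toSpanSingleton ℂ v) (X := 0) (X' := X)
    (fun z => by simp [hv]) 1
  simpa using h.symm

theorem cfc_apply_of_apply_eq_self {X : H →L[ℂ] H} (hX : IsSelfAdjoint X) {f : ℝ → ℝ}
    (hf : Continuous f) {v : H} (hv : X v = v) : cfc f X v = f 1 • v := by
  have h := cfc_intertwine (ContinuousLinearMap.toSpanSingleton ℂ v) (X := 1) (X' := X)
    (fun z => by simp [hv]) (.one _) hX hf 1
  simpa [Algebra.algebraMap_eq_smul_one] using h.symm

theorem truncPow_apply_of_apply_eq_self {R : H →L[ℂ] H} (hR : IsSelfAdjoint R) {v : H}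
    (hv : R v = v) (n : ℕ) (α β : ℂ) : truncPow R n α β v = v := by
  have hR2 : IsSelfAdjoint (2 - R) := (IsSelfAdjoint.ofNat _).sub hR
  have hv2 : (2 - R : H →L[ℂ] H) v = v := by simp [hv, two_smul]
  refine exp_apply_eq_self ?_
  simp [cfc_apply_of_apply_eq_self hR (continuous_truncLog n) hv,
    cfc_apply_of_apply_eq_self hR2 (continuous_truncLog n) hv2, truncLog_one]

theorem truncPow_intertwine {R : H →L[ℂ] H} (hR : IsSelfAdjoint R) {D : H →L⋆[ℂ] H}
    (hD : ∀ v, D (R v) = (2 - R) (D v)) (n : ℕ) (α β : ℂ) (v : H) :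
    D (truncPow R n α β v) = truncPow R n (star β) (star α) (D v) := by
  have hR2 : IsSelfAdjoint (2 - R) := (IsSelfAdjoint.ofNat _).sub hR
  have hD2 : ∀ v, D ((2 - R) v) = R (D v) := fun v => by
    simp [two_smul, hD]
  have hlog := cfc_intertwine D hD hR hR2 (continuous_truncLog n)
  have hlog2 := cfc_intertwine D hD2 hR2 hR (continuous_truncLog n)
  refine exp_intertwine D (fun w => ?_) v
  simp [hlog, hlog2, add_comm]

end TruncatedPowers

section ModularPowers

open Complex Set Filter Topology

/-- The operator `R ^ α * (2 - R) ^ β`, for `0 < R < 2` and admissible exponents, as the strong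
limit of its truncations; zero where that limit does not exist. -/
def modularPow (R : H →L[ℂ] H) (α β : ℂ) : H →L[ℂ] H :=
  open Classical in
  if h : ∃ T : H →L[ℂ] H, ∀ x, Tendsto (fun n => truncPow R n α β x) atTop (𝓝 (T x))
  then h.choose else 0

namespace IsStrictlyBetweenZeroTwo

variable {R : H →L[ℂ] H} (hR : IsStrictlyBetweenZeroTwo R) {α β α' β' : ℂ}
include hR

theorem norm_truncPow_le (n : ℕ) (h : IsAdmissible α β) : ‖truncPow R n α β‖ ≤ 4 := by
  rw [truncPow_eq_cfc hR.isSelfAdjoint]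
  exact hR.norm_cfc_re_le (by norm_num) fun r hr => norm_truncPowFun_le n h hr

theorem norm_truncPow_sub_mul_le {k n m : ℕ} (hn : k ≤ n) (hm : k ≤ m) (h : IsAdmissible α β) :
    ‖(truncPow R n α β - truncPow R m α β) * (R * (2 - R))‖ ≤ 16 / ((k : ℝ) + 2) := by
  have hprod : R * (2 - R) = cfc (fun z : ℂ => ((z.re * (2 - z.re) : ℝ) : ℂ)) R := by
    rw [← cfc_real_eq_complex (fun r : ℝ => r * (2 - r)) hR.isSelfAdjoint,
      cfc_mul _ _ _ (by fun_prop) (by fun_prop), ← two_sub_eq_cfc hR.isSelfAdjoint,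
      cfc_id' ℝ R hR.isSelfAdjoint]
  rw [truncPow_eq_cfc hR.isSelfAdjoint, truncPow_eq_cfc hR.isSelfAdjoint, hprod,
    ← cfc_sub _ _ _ (by fun_prop) (by fun_prop), ← cfc_mul _ _ _ (by fun_prop) (by fun_prop)]
  exact hR.norm_cfc_re_le (g := fun r => (truncPowFun n α β r - truncPowFun m α β r) *
    (r * (2 - r) : ℝ)) (by positivity) fun r hr => norm_truncPowFun_sub_mul_le hn hm h hr

theorem norm_truncPow_one_zero_sub_le (n : ℕ) : ‖truncPow R n 1 0 - R‖ ≤ 1 / ((n : ℝ) + 2) := by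
  have hid : R = cfc (fun z : ℂ => (z.re : ℂ)) R := by
    rw [← cfc_real_eq_complex (fun r : ℝ => r) hR.isSelfAdjoint, cfc_id' ℝ R hR.isSelfAdjoint]
  rw [truncPow_eq_cfc hR.isSelfAdjoint]
  nth_rw 2 [hid]
  rw [← cfc_sub _ _ _ (by fun_prop) (by fun_prop)]
  exact hR.norm_cfc_re_le (g := fun r => truncPowFun n 1 0 r - r) (by positivity)
    fun r hr => norm_truncPowFun_one_zero_sub_le n hr.1

/-- On the dense range of `R * (2 - R)` the truncations differ little by
`norm_truncPow_sub_mul_le`; elsewhere they are controlled by the uniform bound. -/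
theorem uniformCauchySeqOn_truncPow (x : H) :
    UniformCauchySeqOn (fun n (p : ℂ × ℂ) => truncPow R n p.1 p.2 x) atTop
      {p | IsAdmissible p.1 p.2} := by
  rw [Metric.uniformCauchySeqOn_iff]
  intro ε hε
  set N : H →L[ℂ] H := R * (2 - R) with hN
  obtain ⟨y, hy⟩ := hR.denseRange_mul_two_sub.exists_dist_lt x (show 0 < ε / 16 by positivity)
  rw [dist_eq_norm, ← hN] at hy
  have hlim : Tendsto (fun k : ℕ => 16 / ((k : ℝ) + 2) * ‖y‖) atTop (𝓝 0) := by
    simpa using (tendsto_const_nhds (x := (16 : ℝ))).div_atTop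
      (tendsto_atTop_add_const_right atTop 2 tendsto_natCast_atTop_atTop) |>.mul_const ‖y‖
  obtain ⟨k, hk⟩ := (hlim.eventually_lt_const (half_pos hε)).exists
  refine ⟨k, fun n hn m hm p hp => ?_⟩
  have hsplit : truncPow R n p.1 p.2 x - truncPow R m p.1 p.2 x
      = truncPow R n p.1 p.2 (x - N y) - truncPow R m p.1 p.2 (x - N y)
        + ((truncPow R n p.1 p.2 - truncPow R m p.1 p.2) * N) y := by
    simp only [map_sub, mul_apply_eq_comp, sub_apply]
    abel
  rw [dist_eq_norm, hsplit]
  calc _ ≤ 4 * ‖x - N y‖ + 4 * ‖x - N y‖ + 16 / ((k : ℝ) + 2) * ‖y‖ :=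
        norm_add_le_of_le (norm_sub_le_of_le
            (ContinuousLinearMap.le_of_opNorm_le _ (hR.norm_truncPow_le n hp) _)
            (ContinuousLinearMap.le_of_opNorm_le _ (hR.norm_truncPow_le m hp) _))
          (ContinuousLinearMap.le_of_opNorm_le _ (hR.norm_truncPow_sub_mul_le hn hm hp) _)
    _ < ε := by linarith

theorem tendsto_truncPow (h : IsAdmissible α β) (x : H) :
    Tendsto (fun n => truncPow R n α β x) atTop (𝓝 (modularPow R α β x)) := by
  have hex : ∃ T : H →L[ℂ] H, ∀ x, Tendsto (fun n => truncPow R n α β x) atTop (𝓝 (T x)) := by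
    choose f hf using fun x => cauchySeq_tendsto_of_complete
      ((hR.uniformCauchySeqOn_truncPow x).cauchySeq (show (α, β) ∈ {p | _} from h))
    have hbdd : Bornology.IsBounded (range fun n => truncPow R n α β) :=
      isBounded_iff_forall_norm_le.2 ⟨4, forall_mem_range.2 fun n => hR.norm_truncPow_le n h⟩
    exact ⟨.ofTendstoOfBoundedRange f _ (tendsto_pi_nhds.2 hf) hbdd, hf⟩
  rw [modularPow, dif_pos hex]
  exact hex.choose_spec x

theorem tendstoUniformlyOn_truncPow (x : H) :
    TendstoUniformlyOn (fun n (p : ℂ × ℂ) => truncPow R n p.1 p.2 x)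
      (fun p => modularPow R p.1 p.2 x) atTop {p | IsAdmissible p.1 p.2} :=
  (hR.uniformCauchySeqOn_truncPow x).tendstoUniformlyOn_of_tendsto
    fun _ hp => hR.tendsto_truncPow hp x

theorem norm_modularPow_apply_le (h : IsAdmissible α β) (x : H) :
    ‖modularPow R α β x‖ ≤ 4 * ‖x‖ :=
  le_of_tendsto (hR.tendsto_truncPow h x).norm <| Eventually.of_forall fun n =>
    ContinuousLinearMap.le_of_opNorm_le _ (hR.norm_truncPow_le n h) x

theorem modularPow_mul (h : IsAdmissible α β) (h' : IsAdmissible α' β')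
    (h'' : IsAdmissible (α + α') (β + β')) :
    modularPow R α β * modularPow R α' β' = modularPow R (α + α') (β + β') := by
  ext x
  refine tendsto_nhds_unique ?_ (hR.tendsto_truncPow h'' x)
  have hsmall : Tendsto (fun n => truncPow R n α β (truncPow R n α' β' x - modularPow R α' β' x))
      atTop (𝓝 0) := by
    refine squeeze_zero_norm (fun n => ContinuousLinearMap.le_of_opNorm_le _
      (hR.norm_truncPow_le n h) _) ?_
    simpa using ((hR.tendsto_truncPow h' x).sub_const (modularPow R α' β' x)).norm.const_mul 4
  have hsum := hsmall.add (hR.tendsto_truncPow h (modularPow R α' β' x))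
  rw [zero_add] at hsum
  refine hsum.congr fun n => ?_
  rw [map_sub, sub_add_cancel, truncPow_add hR.isSelfAdjoint, mul_apply_eq_comp]

theorem modularPow_apply_modularPow (h : IsAdmissible α β) (h' : IsAdmissible α' β')
    (h'' : IsAdmissible (α + α') (β + β')) (x : H) :
    modularPow R α β (modularPow R α' β' x) = modularPow R (α + α') (β + β') x := by
  rw [← hR.modularPow_mul h h' h'', mul_apply_eq_comp]

theorem star_modularPow (h : IsAdmissible α β) :
    star (modularPow R α β) = modularPow R (star α) (star β) := by
  rw [ContinuousLinearMap.star_eq_adjoint, eq_comm, ContinuousLinearMap.eq_adjoint_iff]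
  intro x y
  refine tendsto_nhds_unique ((hR.tendsto_truncPow h.star x).inner tendsto_const_nhds)
    ((tendsto_const_nhds.inner (hR.tendsto_truncPow h y)).congr fun n => ?_)
  rw [← star_truncPow, ContinuousLinearMap.star_eq_adjoint,
    ContinuousLinearMap.adjoint_inner_left]

theorem inner_modularPow_left (h : IsAdmissible α β) (x y : H) :
    ⟪modularPow R α β x, y⟫ = ⟪x, modularPow R (star α) (star β) y⟫ := by
  rw [← hR.star_modularPow h, ContinuousLinearMap.star_eq_adjoint,
    ContinuousLinearMap.adjoint_inner_right]

theorem modularPow_zero : modularPow R 0 0 = 1 := by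
  ext x
  refine tendsto_nhds_unique (hR.tendsto_truncPow (by simp [IsAdmissible, unitStrip]) x) ?_
  simp only [truncPow_zero, tendsto_const_nhds]

theorem modularPow_one_zero : modularPow R 1 0 = R := by
  ext x
  refine tendsto_nhds_unique (hR.tendsto_truncPow isAdmissible_one_zero x) ?_
  rw [tendsto_iff_norm_sub_tendsto_zero]
  refine squeeze_zero (fun _ => norm_nonneg _) (fun n => ContinuousLinearMap.le_of_opNorm_le
    (truncPow R n 1 0 - R) (hR.norm_truncPow_one_zero_sub_le n) x) ?_
  simpa using (tendsto_const_nhds (x := (1 : ℝ))).div_atTop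
    (tendsto_atTop_add_const_right atTop 2 tendsto_natCast_atTop_atTop) |>.mul_const ‖x‖

theorem modularPow_zero_one : modularPow R 0 1 = 2 - R := by
  ext x
  refine tendsto_nhds_unique (hR.tendsto_truncPow isAdmissible_one_zero.symm x) ?_
  simpa only [truncPow_two_sub, hR.two_sub.modularPow_one_zero] using
    hR.two_sub.tendsto_truncPow isAdmissible_one_zero x

theorem modularPow_apply_of_apply_eq_self {v : H} (hv : R v = v) (h : IsAdmissible α β) :
    modularPow R α β v = v := by
  refine tendsto_nhds_unique (hR.tendsto_truncPow h v) ?_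
  simp only [truncPow_apply_of_apply_eq_self hR.isSelfAdjoint hv, tendsto_const_nhds]

theorem modularPow_intertwine {D : H →L⋆[ℂ] H} (hD : ∀ v, D (R v) = (2 - R) (D v))
    (h : IsAdmissible α β) (v : H) :
    D (modularPow R α β v) = modularPow R (star β) (star α) (D v) :=
  tendsto_nhds_unique ((D.continuous.tendsto _).comp (hR.tendsto_truncPow h v))
    ((hR.tendsto_truncPow h.symm.star (D v)).congr fun n =>
      (truncPow_intertwine hR.isSelfAdjoint hD n α β v).symm)

theorem tendstoLocallyUniformlyOn_truncPow {X : Type*} [TopologicalSpace X] {a b : X → ℂ}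
    {y : X → H} {s : Set X} (hab : ∀ w ∈ s, IsAdmissible (a w) (b w)) (hy : ContinuousOn y s) :
    TendstoLocallyUniformlyOn (fun n w => truncPow R n (a w) (b w) (y w))
      (fun w => modularPow R (a w) (b w) (y w)) atTop s := by
  rw [Metric.tendstoLocallyUniformlyOn_iff]
  intro ε hε w₀ hw₀
  have hnear : ∀ᶠ w in 𝓝[s] w₀, dist (y w) (y w₀) < ε / 16 :=
    Metric.tendsto_nhds.1 (hy w₀ hw₀) _ (by positivity)
  refine ⟨{w | dist (y w) (y w₀) < ε / 16} ∩ s, inter_mem hnear self_mem_nhdsWithin, ?_⟩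
  filter_upwards [Metric.tendstoUniformlyOn_iff.1 (hR.tendstoUniformlyOn_truncPow (y w₀))
    (ε / 2) (half_pos hε)] with n hn w ⟨hw, hws⟩
  have hlim := hn (a w, b w) (hab w hws)
  rw [mem_ofPred_eq, dist_eq_norm] at hw
  rw [dist_eq_norm] at hlim ⊢
  have hsplit : modularPow R (a w) (b w) (y w) - truncPow R n (a w) (b w) (y w)
      = modularPow R (a w) (b w) (y w - y w₀) - truncPow R n (a w) (b w) (y w - y w₀)
        + (modularPow R (a w) (b w) (y w₀) - truncPow R n (a w) (b w) (y w₀)) := by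
    simp only [map_sub]
    abel
  rw [hsplit]
  calc _ ≤ 4 * ‖y w - y w₀‖ + 4 * ‖y w - y w₀‖
          + ‖modularPow R (a w) (b w) (y w₀) - truncPow R n (a w) (b w) (y w₀)‖ :=
        norm_add_le_of_le (norm_sub_le_of_le (hR.norm_modularPow_apply_le (hab w hws) _)
          (ContinuousLinearMap.le_of_opNorm_le _ (hR.norm_truncPow_le n (hab w hws)) _)) le_rfl
    _ < ε := by linarith

theorem continuousOn_modularPow {X : Type*} [TopologicalSpace X] {a b : X → ℂ} {y : X → H}
    {s : Set X} (hab : ∀ w ∈ s, IsAdmissible (a w) (b w)) (ha : ContinuousOn a s)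
    (hb : ContinuousOn b s) (hy : ContinuousOn y s) :
    ContinuousOn (fun w => modularPow R (a w) (b w) (y w)) s :=
  (hR.tendstoLocallyUniformlyOn_truncPow hab hy).continuousOn <| Frequently.of_forall fun n =>
    ((differentiable_truncPow R n).continuous.comp_continuousOn (ha.prodMk hb)).clm_apply hy

theorem diffContOnCl_modularPow {a b : ℂ → ℂ} {y : ℂ → H} {U : Set ℂ} (hU : IsOpen U)
    (hab : ∀ w ∈ closure U, IsAdmissible (a w) (b w)) (ha : DiffContOnCl ℂ a U)
    (hb : DiffContOnCl ℂ b U) (hy : DiffContOnCl ℂ y U) :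
    DiffContOnCl ℂ (fun w => modularPow R (a w) (b w) (y w)) U where
  differentiableOn := (hR.tendstoLocallyUniformlyOn_truncPow (fun w hw => hab w (subset_closure hw))
    hy.differentiableOn.continuousOn).differentiableOn (Eventually.of_forall fun n =>
      ((differentiable_truncPow R n).comp_differentiableOn
        (ha.differentiableOn.prodMk hb.differentiableOn)).clm_apply hy.differentiableOn) hU
  continuousOn := hR.continuousOn_modularPow hab ha.continuousOn hb.continuousOn hy.continuousOn

end IsStrictlyBetweenZeroTwo

end ModularPowers

section ModularUnitary

open Complex Set Filter Topology

/-- The modular unitary `Δ ^ (it)`, where `Δ = (2 - R) * R⁻¹`. -/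
def modularUnitary (R : H →L[ℂ] H) (t : ℝ) : H →L[ℂ] H :=
  modularPow R (-(I * t)) (I * t)

/-- The action `a ↦ Δ ^ (it) * a * Δ ^ (-it)` on bounded operators. -/
def modularAut (R : H →L[ℂ] H) (t : ℝ) (a : H →L[ℂ] H) : H →L[ℂ] H :=
  modularUnitary R t * a * modularUnitary R (-t)

theorem isAdmissible_neg_I_mul (t : ℝ) : IsAdmissible (-(I * t)) (I * t) := by
  simp [IsAdmissible, unitStrip]

theorem IsAdmissible.sub_add_I_mul {α β : ℂ} (h : IsAdmissible α β) (t : ℝ) :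
    IsAdmissible (α - I * t) (β + I * t) := by
  simpa [IsAdmissible, unitStrip] using h

namespace IsStrictlyBetweenZeroTwo

variable {R : H →L[ℂ] H} (hR : IsStrictlyBetweenZeroTwo R)
include hR

theorem modularUnitary_apply_modularPow (t : ℝ) {α β : ℂ} (h : IsAdmissible α β) (x : H) :
    modularUnitary R t (modularPow R α β x) = modularPow R (α - I * t) (β + I * t) x := by
  have hcomm : -(I * t) + α = α - I * t ∧ I * t + β = β + I * t := ⟨by ring, add_comm _ _⟩
  rw [modularUnitary, hR.modularPow_apply_modularPow (isAdmissible_neg_I_mul t) h, hcomm.1, hcomm.2]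
  rw [hcomm.1, hcomm.2]
  exact h.sub_add_I_mul t

theorem modularPow_apply_modularUnitary (t : ℝ) {α β : ℂ} (h : IsAdmissible α β) (x : H) :
    modularPow R α β (modularUnitary R t x) = modularPow R (α - I * t) (β + I * t) x :=
  hR.modularPow_apply_modularPow h (isAdmissible_neg_I_mul t) (h.sub_add_I_mul t) x

theorem modularUnitary_add (s t : ℝ) :
    modularUnitary R (s + t) = modularUnitary R s * modularUnitary R t := by
  ext x
  rw [mul_apply_eq_comp, modularUnitary.eq_def R t,
    hR.modularUnitary_apply_modularPow s (isAdmissible_neg_I_mul t), modularUnitary]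
  push_cast
  ring_nf

theorem modularUnitary_zero : modularUnitary R 0 = 1 := by
  simp [modularUnitary, hR.modularPow_zero]

theorem modularUnitary_mul_neg (t : ℝ) : modularUnitary R t * modularUnitary R (-t) = 1 := by
  rw [← hR.modularUnitary_add, add_neg_cancel, hR.modularUnitary_zero]

theorem modularUnitary_neg_mul (t : ℝ) : modularUnitary R (-t) * modularUnitary R t = 1 := by
  rw [← hR.modularUnitary_add, neg_add_cancel, hR.modularUnitary_zero]

theorem star_modularUnitary (t : ℝ) : star (modularUnitary R t) = modularUnitary R (-t) := by
  rw [modularUnitary, hR.star_modularPow (isAdmissible_neg_I_mul t)]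
  simp [modularUnitary]

theorem modularUnitary_mem_unitary (t : ℝ) : modularUnitary R t ∈ unitary (H →L[ℂ] H) := by
  rw [Unitary.mem_iff, hR.star_modularUnitary]
  exact ⟨hR.modularUnitary_neg_mul t, hR.modularUnitary_mul_neg t⟩

theorem inner_modularUnitary_left (t : ℝ) (x y : H) :
    ⟪modularUnitary R t x, y⟫ = ⟪x, modularUnitary R (-t) y⟫ := by
  rw [← hR.star_modularUnitary, ContinuousLinearMap.star_eq_adjoint,
    ContinuousLinearMap.adjoint_inner_right]

theorem norm_modularUnitary_apply (t : ℝ) (x : H) : ‖modularUnitary R t x‖ = ‖x‖ :=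
  ContinuousLinearMap.norm_map_of_mem_unitary (hR.modularUnitary_mem_unitary t) x

theorem continuous_modularUnitary_apply {X : Type*} [TopologicalSpace X] {t : X → ℝ} {y : X → H}
    (ht : Continuous t) (hy : Continuous y) :
    Continuous fun w => modularUnitary R (t w) (y w) := by
  rw [← continuousOn_univ] at hy ⊢
  exact hR.continuousOn_modularPow (fun w _ => isAdmissible_neg_I_mul (t w)) (by fun_prop)
    (by fun_prop) hy

theorem modularUnitary_apply_of_apply_eq_self {v : H} (hv : R v = v) (t : ℝ) :
    modularUnitary R t v = v :=
  hR.modularPow_apply_of_apply_eq_self hv (isAdmissible_neg_I_mul t)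

theorem continuous_modularAut_apply (a : H →L[ℂ] H) (x : H) :
    Continuous fun t => modularAut R t a x :=
  hR.continuous_modularUnitary_apply continuous_id
    (a.continuous.comp (hR.continuous_modularUnitary_apply continuous_neg continuous_const))

theorem norm_modularAut_apply_le (t : ℝ) (a : H →L[ℂ] H) (x : H) :
    ‖modularAut R t a x‖ ≤ ‖a‖ * ‖x‖ := by
  rw [modularAut, mul_apply_eq_comp, mul_apply_eq_comp, hR.norm_modularUnitary_apply]
  simpa only [hR.norm_modularUnitary_apply] using a.le_opNorm (modularUnitary R (-t) x)

theorem star_modularAut (t : ℝ) (a : H →L[ℂ] H) :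
    star (modularAut R t a) = modularAut R t (star a) := by
  simp only [modularAut, star_mul, hR.star_modularUnitary, neg_neg, mul_assoc]

theorem modularAut_modularAut (s t : ℝ) (a : H →L[ℂ] H) :
    modularAut R s (modularAut R t a) = modularAut R (s + t) a := by
  simp only [modularAut, hR.modularUnitary_add s t, neg_add_rev,
    hR.modularUnitary_add (-t) (-s), mul_assoc]

theorem modularAut_zero (a : H →L[ℂ] H) : modularAut R 0 a = a := by
  simp [modularAut, hR.modularUnitary_zero]

theorem modularAut_apply_of_apply_eq_self {v : H} (hv : R v = v) (t : ℝ) (a : H →L[ℂ] H) :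
    modularAut R t a v = modularUnitary R t (a v) := by
  simp only [modularAut, mul_apply_eq_comp, hR.modularUnitary_apply_of_apply_eq_self hv]

theorem modularAut_mul (t : ℝ) (a b : H →L[ℂ] H) :
    modularAut R t (a * b) = modularAut R t a * modularAut R t b := by
  simp only [modularAut, mul_assoc]
  rw [← mul_assoc (modularUnitary R (-t)), hR.modularUnitary_neg_mul, one_mul]

end IsStrictlyBetweenZeroTwo

end ModularUnitary

section StandardSubspace

open Complex Set

attribute [local instance] InnerProductSpace.complexToReal

section Projections

variable {E : Type*} [NormedAddCommGroup E] [InnerProductSpace ℂ E]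
variable (K : Submodule ℝ E) [K.HasOrthogonalProjection]

theorem starProjection_complex_smul (c : ℂ) (x : E) :
    K.starProjection (c • x) =
      (c.re : ℂ) • K.starProjection x + (c.im : ℂ) • K.starProjection (I • x) := by
  conv_lhs => rw [← re_add_im c]
  rw [add_smul, mul_smul, map_add, Complex.coe_smul, Complex.coe_smul, map_smul, map_smul,
    Complex.coe_smul, Complex.coe_smul]

/-- A closed real subspace `K` is standard if `K ∩ iK = 0` and `K + iK` is dense; density is
expressed as `Kᗮ ∩ iKᗮ = 0`, where `Kᗮ` is the orthogonal complement for `Re ⟪·, ·⟫`. -/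
structure IsStandard (K : Submodule ℝ E) : Prop where
  eq_zero_of_mem : ∀ x ∈ K, I • x ∈ K → x = 0
  eq_zero_of_mem_orthogonal : ∀ x ∈ Kᗮ, I • x ∈ Kᗮ → x = 0

/-- The sum `R = P + Q` of the projections onto `K` and `iK`; it is complex linear. -/
def sumProj : E →L[ℂ] E where
  toFun x := K.starProjection x - I • K.starProjection (I • x)
  map_add' x y := by simp only [smul_add, map_add]; abel
  map_smul' c x := by
    rw [smul_comm I c x, starProjection_complex_smul K c x,
      starProjection_complex_smul K c (I • x), smul_smul I I x, I_mul_I, neg_one_smul, map_neg,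
      RingHom.id_apply]
    nth_rw 5 [← re_add_im c]
    match_scalars
    · ring
    · linear_combination (c.im : ℂ) * I_mul_I
  cont := by fun_prop

/-- The difference `D = P - Q` of the projections onto `K` and `iK`; it is antilinear. -/
def diffProj : E →L⋆[ℂ] E where
  toFun x := K.starProjection x + I • K.starProjection (I • x)
  map_add' x y := by simp only [smul_add, map_add]; abel
  map_smul' c x := by
    have hconj : (starRingEnd ℂ) c = c.re - c.im * I := by apply Complex.ext <;> simp
    rw [smul_comm I c x, starProjection_complex_smul K c x,
      starProjection_complex_smul K c (I • x), smul_smul I I x, I_mul_I, neg_one_smul, map_neg,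
      hconj]
    match_scalars
    · ring
    · linear_combination (c.im : ℂ) * I_mul_I
  cont := by fun_prop

theorem sumProj_apply (x : E) :
    sumProj K x = K.starProjection x - I • K.starProjection (I • x) := rfl

theorem diffProj_apply (x : E) :
    diffProj K x = K.starProjection x + I • K.starProjection (I • x) := rfl

theorem two_smul_starProjection (x : E) :
    (2 : ℂ) • K.starProjection x = sumProj K x + diffProj K x := by
  rw [sumProj_apply, diffProj_apply]
  module

theorem sumProj_orthogonal : sumProj Kᗮ = 2 - sumProj K := by
  ext x
  simp only [sumProj_apply, Submodule.starProjection_orthogonal_val, sub_apply, smul_sub,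
    smul_smul, I_mul_I]
  simp [two_smul]
  abel

variable {K} in
theorem sumProj_of_I_smul_mem_orthogonal {x : E} (hx : I • x ∈ Kᗮ) :
    sumProj K x = K.starProjection x := by
  rw [sumProj_apply, K.starProjection_apply_eq_zero_iff.mpr hx, smul_zero, sub_zero]

variable {K} in
theorem diffProj_of_I_smul_mem_orthogonal {x : E} (hx : I • x ∈ Kᗮ) :
    diffProj K x = K.starProjection x := by
  rw [diffProj_apply, K.starProjection_apply_eq_zero_iff.mpr hx, smul_zero, add_zero]

variable {K} in
theorem diffProj_of_mem {x : E} (hx : x ∈ K) :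
    diffProj K x = (2 - sumProj K : E →L[ℂ] E) x := by
  rw [← sumProj_orthogonal, sumProj_apply, diffProj_apply]
  simp [Submodule.starProjection_eq_self_iff.mpr hx, smul_sub, smul_smul, add_comm]

theorem starProjection_starProjection (x : E) :
    K.starProjection (K.starProjection x) = K.starProjection x :=
  Submodule.starProjection_eq_self_iff.mpr (K.starProjection_apply_mem x)

theorem diffProj_diffProj (x : E) :
    diffProj K (diffProj K x) = sumProj K ((2 - sumProj K : E →L[ℂ] E) x) := by
  simp [sumProj_apply, diffProj_apply, smul_sub, two_smul, smul_smul,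
    starProjection_starProjection]
  abel

theorem diffProj_sumProj (x : E) :
    diffProj K (sumProj K x) = (2 - sumProj K : E →L[ℂ] E) (diffProj K x) := by
  simp [sumProj_apply, diffProj_apply, smul_sub, two_smul, smul_smul,
    starProjection_starProjection]
  abel

theorem re_inner_starProjection_left (x y : E) :
    (⟪K.starProjection x, y⟫).re = (⟪x, K.starProjection y⟫).re :=
  K.inner_starProjection_left_eq_right x y

theorem inner_sumProj_left (x y : E) : ⟪sumProj K x, y⟫ = ⟪x, sumProj K y⟫ := by
  have h1 := re_inner_starProjection_left K x y
  have h2 := re_inner_starProjection_left K (I • x) (I • y)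
  have h3 := re_inner_starProjection_left K x (I • y)
  have h4 := re_inner_starProjection_left K (I • x) y
  simp only [inner_smul_left, inner_smul_right, conj_I, mul_re, neg_re, I_re, I_im,
    zero_mul, one_mul, neg_mul, zero_sub, neg_neg] at h2 h3 h4
  apply Complex.ext
  · simp [sumProj_apply]
    linarith
  · simp [sumProj_apply]
    linarith

theorem inner_diffProj_right (x y : E) : ⟪x, diffProj K y⟫ = ⟪y, diffProj K x⟫ := by
  rw [← inner_conj_symm y]
  have h1 := re_inner_starProjection_left K x y
  have h2 := re_inner_starProjection_left K (I • x) (I • y)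
  have h3 := re_inner_starProjection_left K x (I • y)
  have h4 := re_inner_starProjection_left K (I • x) y
  simp only [inner_smul_left, inner_smul_right, conj_I, mul_re, neg_re, I_re, I_im,
    zero_mul, one_mul, neg_mul, zero_sub, neg_neg] at h2 h3 h4
  apply Complex.ext
  · simp [diffProj_apply, inner_add_left, inner_smul_left, -inner_conj_symm]
    linarith
  · simp [diffProj_apply, inner_add_left, inner_smul_left, -inner_conj_symm]
    linarith

theorem re_inner_starProjection_self (x : E) :
    (⟪K.starProjection x, x⟫).re = ‖K.starProjection x‖ ^ 2 := by
  rw [← starProjection_starProjection, re_inner_starProjection_left,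
    starProjection_starProjection, ← inner_self_eq_norm_sq (𝕜 := ℂ)]
  rfl

theorem re_inner_sumProj_self (x : E) :
    (⟪sumProj K x, x⟫).re = ‖K.starProjection x‖ ^ 2 + ‖K.starProjection (I • x)‖ ^ 2 := by
  rw [← re_inner_starProjection_self, ← re_inner_starProjection_self, sumProj_apply]
  simp

variable {K}

theorem IsStandard.orthogonal (hK : IsStandard K) : IsStandard Kᗮ where
  eq_zero_of_mem := hK.eq_zero_of_mem_orthogonal
  eq_zero_of_mem_orthogonal := by
    rw [K.orthogonal_orthogonal]
    exact hK.eq_zero_of_mem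

theorem IsStandard.sumProj_injective (hK : IsStandard K) : Function.Injective (sumProj K) := by
  rw [injective_iff_map_eq_zero]
  intro x hx
  have hsum := re_inner_sumProj_self K x
  rw [hx, inner_zero_left, zero_re] at hsum
  have hmem : ∀ y, ‖K.starProjection y‖ ^ 2 ≤ 0 → y ∈ Kᗮ := fun y hy => by
    rw [← K.starProjection_apply_eq_zero_iff, ← norm_eq_zero]
    exact pow_eq_zero_iff two_ne_zero |>.mp (hy.antisymm (sq_nonneg _))
  exact hK.eq_zero_of_mem_orthogonal x (hmem x (by linarith [sq_nonneg ‖K.starProjection (I • x)‖]))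
    (hmem _ (by linarith [sq_nonneg ‖K.starProjection x‖]))

end Projections

theorem sumProj_nonneg (K : Submodule ℝ H) [K.HasOrthogonalProjection] : 0 ≤ sumProj K := by
  rw [ContinuousLinearMap.nonneg_iff_isPositive, ContinuousLinearMap.isPositive_def']
  refine ⟨?_, fun x => ?_⟩
  · rw [ContinuousLinearMap.isSelfAdjoint_iff_isSymmetric]
    exact inner_sumProj_left K
  · rw [ContinuousLinearMap.reApplyInnerSelf_apply, RCLike.re_to_complex, re_inner_sumProj_self]
    positivity

variable {K : Submodule ℝ H} [K.HasOrthogonalProjection]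

theorem IsStandard.isStrictlyBetweenZeroTwo (hK : IsStandard K) :
    IsStrictlyBetweenZeroTwo (sumProj K) where
  nonneg := sumProj_nonneg K
  le_two := by
    rw [← sub_nonneg, ← sumProj_orthogonal]
    exact sumProj_nonneg Kᗮ
  injective := hK.sumProj_injective
  injective_two_sub := by
    rw [← sumProj_orthogonal]
    exact hK.orthogonal.sumProj_injective

/-- The modular conjugation `J`, determined by `D = J * (R * (2 - R)) ^ (1 / 2)`. -/
def modularConj (K : Submodule ℝ H) [K.HasOrthogonalProjection] : H →L⋆[ℂ] H :=
  LinearMap.extendOfNorm (diffProj K : H →ₛₗ[starRingEnd ℂ] H)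
    (modularPow (sumProj K) (1 / 2) (1 / 2) : H →ₗ[ℂ] H)

/-- The operator `J * a * J`. -/
def conjOp (K : Submodule ℝ H) [K.HasOrthogonalProjection] (a : H →L[ℂ] H) : H →L[ℂ] H :=
  (modularConj K).comp (a.comp (modularConj K))

theorem conjOp_apply (a : H →L[ℂ] H) (x : H) :
    conjOp K a x = modularConj K (a (modularConj K x)) := rfl

namespace IsStrictlyBetweenZeroTwo

variable {R : H →L[ℂ] H} (hR : IsStrictlyBetweenZeroTwo R)
include hR

theorem modularPow_half_half_mul_self :
    modularPow R (1 / 2) (1 / 2) * modularPow R (1 / 2) (1 / 2) = R * (2 - R) := by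
  have h11 : IsAdmissible 1 1 := by simp [IsAdmissible, unitStrip]
  calc modularPow R (1 / 2) (1 / 2) * modularPow R (1 / 2) (1 / 2) = modularPow R 1 1 := by
        rw [hR.modularPow_mul isAdmissible_one_half isAdmissible_one_half] <;> norm_num [h11]
    _ = modularPow R 1 0 * modularPow R 0 1 := by
        rw [hR.modularPow_mul isAdmissible_one_zero isAdmissible_one_zero.symm] <;> norm_num [h11]
    _ = R * (2 - R) := by rw [hR.modularPow_one_zero, hR.modularPow_zero_one]

theorem modularPow_half_zero_mul_self :
    modularPow R (1 / 2) 0 * modularPow R (1 / 2) 0 = R := by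
  rw [hR.modularPow_mul isAdmissible_one_half_zero isAdmissible_one_half_zero] <;>
  norm_num [isAdmissible_one_zero, hR.modularPow_one_zero]

theorem commute_modularPow_half_half : Commute R (modularPow R (1 / 2) (1 / 2)) := by
  have h : IsAdmissible (1 / 2 + 1 / 2) (0 + 1 / 2) := by norm_num [IsAdmissible, unitStrip]
  have hcomm : Commute (modularPow R (1 / 2) 0) (modularPow R (1 / 2) (1 / 2)) := by
    rw [commute_iff_eq, hR.modularPow_mul isAdmissible_one_half_zero isAdmissible_one_half h,
      hR.modularPow_mul isAdmissible_one_half isAdmissible_one_half_zero (by simpa using h),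
      zero_add, add_zero]
  have := hcomm.mul_left hcomm
  rwa [hR.modularPow_half_zero_mul_self] at this

theorem denseRange_modularPow_half_half : DenseRange (modularPow R (1 / 2) (1 / 2)) := by
  refine hR.denseRange_mul_two_sub.mono ?_
  rw [← hR.modularPow_half_half_mul_self]
  rintro _ ⟨x, rfl⟩
  exact ⟨modularPow R (1 / 2) (1 / 2) x, rfl⟩

theorem modularPow_half_zero_injective : Function.Injective (modularPow R (1 / 2) 0) := by
  refine Function.Injective.of_comp (f := modularPow R (1 / 2) 0) ?_
  have := hR.injective
  rwa [← hR.modularPow_half_zero_mul_self, FunLike.coe_mul_eq_comp] at this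

theorem modularPow_half_half_injective : Function.Injective (modularPow R (1 / 2) (1 / 2)) := by
  refine Function.Injective.of_comp (f := modularPow R (1 / 2) (1 / 2)) ?_
  have := hR.injective.comp hR.injective_two_sub
  rwa [← FunLike.coe_mul_eq_comp, ← hR.modularPow_half_half_mul_self] at this

end IsStrictlyBetweenZeroTwo

namespace IsStandard

variable (hK : IsStandard K)
include hK

theorem norm_diffProj_apply (x : H) :
    ‖diffProj K x‖ = ‖modularPow (sumProj K) (1 / 2) (1 / 2) x‖ := by
  have hR := hK.isStrictlyBetweenZeroTwo
  rw [← sq_eq_sq₀ (norm_nonneg _) (norm_nonneg _), ← ofReal_inj]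
  push_cast
  rw [← coe_algebraMap, ← inner_self_eq_norm_sq_to_K, ← inner_self_eq_norm_sq_to_K,
    inner_diffProj_right, diffProj_diffProj, hR.inner_modularPow_left isAdmissible_one_half,
    star_one_half, ← mul_apply_eq_comp, ← mul_apply_eq_comp, hR.modularPow_half_half_mul_self]

theorem modularConj_modularPow_half_half (x : H) :
    modularConj K (modularPow (sumProj K) (1 / 2) (1 / 2) x) = diffProj K x :=
  LinearMap.extendOfNorm_eq (f := (diffProj K : H →ₛₗ[starRingEnd ℂ] H))
    (e := (modularPow (sumProj K) (1 / 2) (1 / 2) : H →ₗ[ℂ] H))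
    hK.isStrictlyBetweenZeroTwo.denseRange_modularPow_half_half
    ⟨1, fun x => by rw [one_mul]; exact (hK.norm_diffProj_apply x).le⟩ x

theorem modularConj_sumProj (x : H) :
    modularConj K (sumProj K x) = (2 - sumProj K : H →L[ℂ] H) (modularConj K x) := by
  have hR := hK.isStrictlyBetweenZeroTwo
  refine hR.denseRange_modularPow_half_half.induction_on x
    (isClosed_eq (by fun_prop) (by fun_prop)) fun y => ?_
  rw [← mul_apply_eq_comp, hR.commute_modularPow_half_half.eq, mul_apply_eq_comp,
    hK.modularConj_modularPow_half_half, hK.modularConj_modularPow_half_half, diffProj_sumProj]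

theorem modularConj_modularPow {α β : ℂ} (h : IsAdmissible α β) (x : H) :
    modularConj K (modularPow (sumProj K) α β x) =
      modularPow (sumProj K) (star β) (star α) (modularConj K x) :=
  hK.isStrictlyBetweenZeroTwo.modularPow_intertwine hK.modularConj_sumProj h x

theorem modularPow_half_half_modularConj (x : H) :
    modularPow (sumProj K) (1 / 2) (1 / 2) (modularConj K x) = diffProj K x := by
  rw [← hK.modularConj_modularPow_half_half, hK.modularConj_modularPow isAdmissible_one_half,
    star_one_half]

theorem modularConj_modularConj (x : H) : modularConj K (modularConj K x) = x := by
  have hR := hK.isStrictlyBetweenZeroTwo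
  apply hR.modularPow_half_half_injective
  rw [hK.modularPow_half_half_modularConj]
  apply hR.modularPow_half_half_injective
  conv_lhs => rw [← star_one_half]
  rw [← hR.modularPow_intertwine (diffProj_sumProj K) isAdmissible_one_half,
    hK.modularPow_half_half_modularConj, diffProj_diffProj, ← mul_apply_eq_comp,
    ← mul_apply_eq_comp, hR.modularPow_half_half_mul_self]

theorem inner_modularConj_right (x y : H) : ⟪x, modularConj K y⟫ = ⟪y, modularConj K x⟫ := by
  have hR := hK.isStrictlyBetweenZeroTwo
  refine hR.denseRange_modularPow_half_half.induction_on y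
    (isClosed_eq (by fun_prop) (by fun_prop)) fun z => ?_
  rw [hK.modularConj_modularPow_half_half, inner_diffProj_right,
    hR.inner_modularPow_left isAdmissible_one_half, star_one_half,
    hK.modularPow_half_half_modularConj]

theorem inner_modularConj_left (x y : H) : ⟪modularConj K x, y⟫ = ⟪modularConj K y, x⟫ := by
  rw [← inner_conj_symm, hK.inner_modularConj_right, inner_conj_symm]

theorem modularConj_modularUnitary (t : ℝ) (x : H) :
    modularConj K (modularUnitary (sumProj K) t x) =
      modularUnitary (sumProj K) t (modularConj K x) := by
  rw [modularUnitary, hK.modularConj_modularPow (isAdmissible_neg_I_mul t)]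
  simp

theorem conjOp_modularAut_conjOp (t : ℝ) (x : H →L[ℂ] H) :
    conjOp K (modularAut (sumProj K) t (conjOp K x)) = modularAut (sumProj K) t x := by
  ext v
  simp only [modularAut, conjOp_apply, mul_apply_eq_comp, hK.modularConj_modularUnitary,
    hK.modularConj_modularConj]

theorem exists_modularPow_eq_of_mem {x : H} (hx : x ∈ K) :
    ∃ ζ, modularPow (sumProj K) (1 / 2) 0 ζ = x ∧
      modularPow (sumProj K) 0 (1 / 2) ζ = modularConj K x := by
  have hR := hK.isStrictlyBetweenZeroTwo
  let ζ := (1 / 2 : ℂ) •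
    (modularPow (sumProj K) (1 / 2) 0 x + modularPow (sumProj K) 0 (1 / 2) (modularConj K x))
  have hζ : modularPow (sumProj K) (1 / 2) 0 ζ = x := by
    have h : IsAdmissible (1 / 2 + 0) (0 + 1 / 2) := by norm_num [IsAdmissible, unitStrip]
    rw [map_smul, map_add, ← mul_apply_eq_comp, hR.modularPow_half_zero_mul_self,
      hR.modularPow_apply_modularPow isAdmissible_one_half_zero isAdmissible_zero_one_half h,
      add_zero, zero_add, hK.modularPow_half_half_modularConj, ← two_smul_starProjection,
      Submodule.starProjection_eq_self_iff.mpr hx, smul_smul]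
    norm_num
  have hJζ : modularConj K ζ = ζ := by
    simp only [ζ, map_smulₛₗ, map_add, hK.modularConj_modularPow isAdmissible_one_half_zero,
      hK.modularConj_modularPow isAdmissible_zero_one_half, hK.modularConj_modularConj,
      star_one_half, star_zero, starRingEnd_apply]
    rw [add_comm]
  refine ⟨ζ, hζ, ?_⟩
  rw [← hζ, hK.modularConj_modularPow isAdmissible_one_half_zero, hJζ, star_one_half, star_zero]

theorem exists_modularPow_eq_add_I_smul {x y : H} (hx : x ∈ K) (hy : y ∈ K) :
    ∃ ζ, modularPow (sumProj K) (1 / 2) 0 ζ = x + I • y ∧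
      modularPow (sumProj K) 0 (1 / 2) ζ = modularConj K (x - I • y) := by
  obtain ⟨ζ, hζ, hζ'⟩ := hK.exists_modularPow_eq_of_mem hx
  obtain ⟨ξ, hξ, hξ'⟩ := hK.exists_modularPow_eq_of_mem hy
  refine ⟨ζ + I • ξ, ?_, ?_⟩
  · rw [map_add, map_smul, hζ, hξ]
  · rw [map_add, map_smul, hζ', hξ', map_sub, map_smulₛₗ, conj_I, neg_smul, sub_neg_eq_add]

end IsStandard

end StandardSubspace

section VonNeumannAlgebra

open Complex Set Filter Topology

attribute [local instance] InnerProductSpace.complexToReal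

variable {A : VonNeumannAlgebra H} {Ω : H}

theorem complex_smul_mem {a : H →L[ℂ] H} (ha : a ∈ A) (c : ℂ) : c • a ∈ A :=
  A.toStarSubalgebra.smul_mem ha c

theorem apply_comm_of_mem_commutant {a x : H →L[ℂ] H} (ha : a ∈ A) (hx : x ∈ A.commutant)
    (v : H) : a (x v) = x (a v) :=
  DFunLike.congr_fun (VonNeumannAlgebra.mem_commutant_iff.mp hx a ha) v

theorem mem_of_forall_mem_commutant {a : H →L[ℂ] H}
    (h : ∀ x ∈ A.commutant, ∀ v, x (a v) = a (x v)) : a ∈ A := by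
  rw [← A.commutant_commutant]
  exact VonNeumannAlgebra.mem_commutant_iff.mpr fun x hx => ContinuousLinearMap.ext (h x hx)

theorem cfc_mem {y : H →L[ℂ] H} (hy : y ∈ A) (f : ℝ → ℝ) : cfc f y ∈ A :=
  mem_of_forall_mem_commutant fun x hx v =>
    have hcomm : Commute y x := VonNeumannAlgebra.mem_commutant_iff.mp hx y hy
    (DFunLike.congr_fun (hcomm.cfc_real f).eq v).symm

theorem exists_eq_add_I_smul {a : H →L[ℂ] H} (ha : a ∈ A) :
    ∃ b ∈ A, ∃ c ∈ A, IsSelfAdjoint b ∧ IsSelfAdjoint c ∧ a = b + I • c ∧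
      star a = b - I • c := by
  refine ⟨(1 / 2 : ℂ) • (a + star a), complex_smul_mem (add_mem ha (star_mem ha)) _,
    (-I / 2) • (a - star a), complex_smul_mem (sub_mem ha (star_mem ha)) _, ?_, ?_, ?_, ?_⟩
  · simp [isSelfAdjoint_iff, add_comm]
  · simp [isSelfAdjoint_iff, neg_div, ← smul_neg]
  · match_scalars <;> grind [I_mul_I]
  · match_scalars <;> grind [I_mul_I]

theorem inner_apply_left_of_isSelfAdjoint {a : H →L[ℂ] H} (ha : IsSelfAdjoint a) (x y : H) :
    ⟪a x, y⟫ = ⟪x, a y⟫ := by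
  rw [← ContinuousLinearMap.adjoint_inner_right, ← ContinuousLinearMap.star_eq_adjoint, ha.star_eq]

theorem isSelfAdjoint_ofReal_smul {a : H →L[ℂ] H} (ha : IsSelfAdjoint a) (r : ℝ) :
    IsSelfAdjoint ((r : ℂ) • a) :=
  IsSelfAdjoint.smul (conj_ofReal r) ha

theorem im_inner_eq_zero_of_mem_commutant {a x : H →L[ℂ] H} (ha : a ∈ A) (ha' : IsSelfAdjoint a)
    (hx : x ∈ A.commutant) (hx' : IsSelfAdjoint x) : (⟪a Ω, x Ω⟫).im = 0 := by
  rw [← conj_eq_iff_im, inner_conj_symm, inner_apply_left_of_isSelfAdjoint hx',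
    inner_apply_left_of_isSelfAdjoint ha', apply_comm_of_mem_commutant ha hx]

theorem eq_zero_of_forall_isSelfAdjoint (hΩ : IsCyclicVector (A : Set (H →L[ℂ] H)) Ω) {x : H}
    (h : ∀ a ∈ A, IsSelfAdjoint a → ⟪a Ω, x⟫ = 0) : x = 0 := by
  refine hΩ.eq_zero_of_inner_right ℂ ?_
  rintro _ ⟨a, ha, rfl⟩
  obtain ⟨b, hb, c, hc, hb', hc', rfl, -⟩ := exists_eq_add_I_smul (A := A) ha
  simp [h b hb hb', h c hc hc', inner_add_left, inner_smul_left]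

/-- The real subspace `{a Ω : a ∈ A, a = a*}`. -/
def selfAdjointOrbit (A : VonNeumannAlgebra H) (Ω : H) : Submodule ℝ H where
  carrier := {x | ∃ a ∈ A, IsSelfAdjoint a ∧ a Ω = x}
  add_mem' := by
    rintro _ _ ⟨a, ha, ha', rfl⟩ ⟨b, hb, hb', rfl⟩
    exact ⟨a + b, add_mem ha hb, ha'.add hb', rfl⟩
  zero_mem' := ⟨0, zero_mem A, IsSelfAdjoint.zero _, rfl⟩
  smul_mem' := by
    rintro r _ ⟨a, ha, ha', rfl⟩
    exact ⟨(r : ℂ) • a, complex_smul_mem ha _, isSelfAdjoint_ofReal_smul ha' r, rfl⟩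

/-- The closed real subspace generated by `a Ω` for self-adjoint `a ∈ A`. It is standard when `Ω`
is cyclic and separating. -/
def standardSubspace (A : VonNeumannAlgebra H) (Ω : H) : Submodule ℝ H :=
  (selfAdjointOrbit A Ω).topologicalClosure

instance (A : VonNeumannAlgebra H) (Ω : H) : CompleteSpace (standardSubspace A Ω) :=
  (Submodule.isClosed_topologicalClosure _).completeSpace_coe

theorem apply_mem_standardSubspace {a : H →L[ℂ] H} (ha : a ∈ A) (ha' : IsSelfAdjoint a) :
    a Ω ∈ standardSubspace A Ω :=
  Submodule.le_topologicalClosure _ ⟨a, ha, ha', rfl⟩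

theorem I_smul_apply_mem_orthogonal {x : H →L[ℂ] H} (hx : x ∈ A.commutant)
    (hx' : IsSelfAdjoint x) : I • x Ω ∈ (standardSubspace A Ω)ᗮ := by
  rw [standardSubspace, Submodule.orthogonal_closure, Submodule.mem_orthogonal]
  rintro _ ⟨a, ha, ha', rfl⟩
  change (⟪a Ω, I • x Ω⟫).re = 0
  simp [im_inner_eq_zero_of_mem_commutant ha ha' hx hx']

theorem isStandard_standardSubspace (hΩ : IsCyclicVector (A : Set (H →L[ℂ] H)) Ω)
    (hΩ' : IsCyclicVector (A.commutant : Set (H →L[ℂ] H)) Ω) :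
    IsStandard (standardSubspace A Ω) where
  eq_zero_of_mem v hv hIv := eq_zero_of_forall_isSelfAdjoint hΩ' fun x hx hx' => by
    have horth := I_smul_apply_mem_orthogonal (Ω := Ω) hx hx'
    have h1 : (⟪v, I • x Ω⟫).re = 0 := horth v hv
    have h2 : (⟪I • v, I • x Ω⟫).re = 0 := horth _ hIv
    rw [← inner_conj_symm]
    apply Complex.ext <;> simp_all [-inner_conj_symm]
  eq_zero_of_mem_orthogonal v hv hIv := eq_zero_of_forall_isSelfAdjoint hΩ fun a ha ha' => by
    have hmem := apply_mem_standardSubspace (Ω := Ω) ha ha'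
    have h1 : (⟪a Ω, v⟫).re = 0 := hv _ hmem
    have h2 : (⟪a Ω, I • v⟫).re = 0 := hIv _ hmem
    apply Complex.ext <;> simp_all

theorem sumProj_apply_of_mem_commutant {x : H →L[ℂ] H} (hx : x ∈ A.commutant)
    (hx' : IsSelfAdjoint x) :
    sumProj (standardSubspace A Ω) (x Ω) = (standardSubspace A Ω).starProjection (x Ω) :=
  sumProj_of_I_smul_mem_orthogonal (I_smul_apply_mem_orthogonal hx hx')

theorem diffProj_apply_of_mem_commutant {x : H →L[ℂ] H} (hx : x ∈ A.commutant)
    (hx' : IsSelfAdjoint x) :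
    diffProj (standardSubspace A Ω) (x Ω) = (standardSubspace A Ω).starProjection (x Ω) :=
  diffProj_of_I_smul_mem_orthogonal (I_smul_apply_mem_orthogonal hx hx')

theorem starProjection_apply_of_isSelfAdjoint {a : H →L[ℂ] H} (ha : a ∈ A)
    (ha' : IsSelfAdjoint a) : (standardSubspace A Ω).starProjection (a Ω) = a Ω :=
  Submodule.starProjection_eq_self_iff.mpr (apply_mem_standardSubspace ha ha')

theorem sumProj_vacuum : sumProj (standardSubspace A Ω) Ω = Ω := by
  have h := sumProj_apply_of_mem_commutant (Ω := Ω) (one_mem A.commutant) (IsSelfAdjoint.one _)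
  rwa [starProjection_apply_of_isSelfAdjoint (one_mem A) (IsSelfAdjoint.one _)] at h

theorem diffProj_apply_of_mem {a : H →L[ℂ] H} (ha : a ∈ A) :
    diffProj (standardSubspace A Ω) (a Ω) =
      (2 - sumProj (standardSubspace A Ω) : H →L[ℂ] H) (star a Ω) := by
  obtain ⟨b, hb, c, hc, hb', hc', rfl, hstar⟩ := exists_eq_add_I_smul ha
  rw [hstar, add_apply, _root_.sub_apply b, smul_apply, map_add, map_sub, map_smulₛₗ, map_smul,
    diffProj_of_mem (apply_mem_standardSubspace hb hb'),
    diffProj_of_mem (apply_mem_standardSubspace hc hc'), conj_I, neg_smul, ← sub_eq_add_neg]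

theorem exists_mem_apply_eq (hΩ' : IsCyclicVector (A.commutant : Set (H →L[ℂ] H)) Ω) {v : H}
    {r : ℝ} (hr : 0 ≤ r) (hv : ∀ x ∈ A.commutant, ‖x v‖ ≤ r * ‖x Ω‖) :
    ∃ h ∈ A, ‖h‖ ≤ r ∧ ∀ x ∈ A.commutant, h (x Ω) = x v := by
  let orbit (w : H) : A.commutant.toStarSubalgebra →ₗ[ℂ] H :=
    { toFun := fun x => (x : H →L[ℂ] H) w
      map_add' := fun _ _ => rfl
      map_smul' := fun _ _ => rfl }
  have hdense : DenseRange (orbit Ω) := by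
    refine Dense.mono ?_ hΩ'
    rintro _ ⟨x, hx, rfl⟩
    exact ⟨⟨x, hx⟩, rfl⟩
  have hbound : ∀ x, ‖orbit v x‖ ≤ r * ‖orbit Ω x‖ := fun x => hv x x.2
  let h : H →L[ℂ] H := (orbit v).extendOfNorm (orbit Ω)
  have happly : ∀ x ∈ A.commutant, h (x Ω) = x v := fun x hx =>
    LinearMap.extendOfNorm_eq hdense ⟨r, hbound⟩ ⟨x, hx⟩
  refine ⟨h, mem_of_forall_mem_commutant fun x hx => ?_,
    LinearMap.opNorm_extendOfNorm_le hdense hr hbound, happly⟩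
  refine congrFun (Continuous.ext_on hΩ' (by fun_prop) (by fun_prop) ?_)
  rintro _ ⟨y, hy, rfl⟩
  change x (h (y Ω)) = h ((x * y) Ω)
  rw [happly y hy, happly _ (mul_mem hx hy), mul_apply_eq_comp]

theorem eq_of_forall_inner_apply_eq (hΩ : IsCyclicVector (A : Set (H →L[ℂ] H)) Ω) {v w : H}
    (h : ∀ a ∈ A, ⟪a Ω, v⟫ = ⟪a Ω, w⟫) : v = w := by
  refine hΩ.eq_of_inner_right ℂ ?_
  rintro _ ⟨a, ha, rfl⟩
  exact h a ha

theorem isSelfAdjoint_of_inner_apply_comm (hΩ : IsCyclicVector (A : Set (H →L[ℂ] H)) Ω)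
    {h : H →L[ℂ] H} (hcomm : ∀ a ∈ A, ∀ b ∈ A, ⟪h (a Ω), b Ω⟫ = ⟪a Ω, h (b Ω)⟫) :
    IsSelfAdjoint h := by
  rw [isSelfAdjoint_iff, ContinuousLinearMap.star_eq_adjoint]
  ext w
  refine congrFun (Continuous.ext_on hΩ (by fun_prop) (by fun_prop) ?_) w
  rintro _ ⟨b, hb, rfl⟩
  refine eq_of_forall_inner_apply_eq hΩ fun a ha => ?_
  rw [ContinuousLinearMap.adjoint_inner_right, hcomm a ha b hb]

/-- The vectors `h Ω` with `h ∈ A` self-adjoint and `‖h‖ ≤ r`. -/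
def selfAdjointBall (A : VonNeumannAlgebra H) (Ω : H) (r : ℝ) : Set H :=
  {v | ∃ h ∈ A, IsSelfAdjoint h ∧ ‖h‖ ≤ r ∧ h Ω = v}

theorem convex_selfAdjointBall (r : ℝ) : Convex ℝ (selfAdjointBall A Ω r) := by
  rintro _ ⟨h, hA, hs, hn, rfl⟩ _ ⟨k, kA, ks, kn, rfl⟩ s t hs0 ht0 hst
  refine ⟨(s : ℂ) • h + (t : ℂ) • k, add_mem (complex_smul_mem hA _) (complex_smul_mem kA _),
    (isSelfAdjoint_ofReal_smul hs s).add (isSelfAdjoint_ofReal_smul ks t), ?_, rfl⟩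
  have hball := convex_closedBall (0 : H →L[ℂ] H) r (x := h) (y := k)
    (mem_closedBall_zero_iff.mpr hn) (mem_closedBall_zero_iff.mpr kn) hs0 ht0 hst
  exact mem_closedBall_zero_iff.mp hball

theorem mem_selfAdjointBall_iff (hΩ' : IsCyclicVector (A.commutant : Set (H →L[ℂ] H)) Ω) {r : ℝ}
    (hr : 0 ≤ r) {v : H} :
    v ∈ selfAdjointBall A Ω r ↔ (∀ x ∈ A.commutant, ‖x v‖ ≤ r * ‖x Ω‖) ∧
      ∀ x ∈ A.commutant, ∀ y ∈ A.commutant, ⟪x v, y Ω⟫ = ⟪x Ω, y v⟫ := by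
  constructor
  · rintro ⟨h, hA, hs, hn, rfl⟩
    refine ⟨fun x hx => ?_, fun x hx y hy => ?_⟩
    · rw [← apply_comm_of_mem_commutant hA hx]
      exact h.le_of_opNorm_le hn _
    · rw [← apply_comm_of_mem_commutant hA hx, ← apply_comm_of_mem_commutant hA hy,
        inner_apply_left_of_isSelfAdjoint hs]
  · rintro ⟨hbound, hsymm⟩
    obtain ⟨h, hA, hn, happly⟩ := exists_mem_apply_eq hΩ' hr hbound
    refine ⟨h, hA, isSelfAdjoint_of_inner_apply_comm hΩ' fun x hx y hy => ?_, hn, ?_⟩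
    · rw [happly x hx, happly y hy, hsymm x hx y hy]
    · simpa using happly 1 (one_mem _)

theorem isClosed_selfAdjointBall (hΩ' : IsCyclicVector (A.commutant : Set (H →L[ℂ] H)) Ω) {r : ℝ}
    (hr : 0 ≤ r) : IsClosed (selfAdjointBall A Ω r) := by
  have heq : selfAdjointBall A Ω r = {v | ∀ x ∈ A.commutant, ‖x v‖ ≤ r * ‖x Ω‖} ∩
      {v | ∀ x ∈ A.commutant, ∀ y ∈ A.commutant, ⟪x v, y Ω⟫ = ⟪x Ω, y v⟫} :=
    Set.ext fun _ => mem_selfAdjointBall_iff hΩ' hr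
  rw [heq]
  simp only [ofPred_forall]
  exact (isClosed_biInter fun x _ => isClosed_le (by fun_prop) (by fun_prop)).inter <|
    isClosed_biInter fun x _ => isClosed_biInter fun y _ =>
      isClosed_eq (by fun_prop) (by fun_prop)

end VonNeumannAlgebra

section RadonNikodym

open Complex Set Filter Topology

attribute [local instance] InnerProductSpace.complexToReal

section Separation

variable {F : Type*} [NormedAddCommGroup F] [InnerProductSpace ℝ F]

theorem mem_of_forall_exists_inner_le {S : Set F} {V : Submodule ℝ F} {p : F} {C : ℝ}
    (hne : S.Nonempty) (hcomplete : IsComplete S) (hconvex : Convex ℝ S) (hC : ∀ s ∈ S, ‖s‖ ≤ C)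
    (hSV : S ⊆ V.topologicalClosure) (hp : p ∈ V.topologicalClosure)
    (h : ∀ y ∈ V, ∀ ε > 0, ∃ s ∈ S, inner ℝ y p ≤ inner ℝ y s + ε) : p ∈ S := by
  obtain ⟨w, hw, hmin⟩ := exists_norm_eq_iInf_of_complete_convex hne hcomplete hconvex p
  rw [norm_eq_iInf_iff_real_inner_le_zero hconvex hw] at hmin
  have hM : 0 < 1 + ‖p‖ + C := by linarith [norm_nonneg p, (norm_nonneg w).trans (hC w hw)]
  suffices hle : ‖p - w‖ ^ 2 ≤ 0 by
    rwa [sub_eq_zero.mp (norm_eq_zero.mp (pow_eq_zero_iff two_ne_zero |>.mp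
      (hle.antisymm (sq_nonneg _))))]
  refine le_of_forall_pos_le_add fun ε hε => ?_
  obtain ⟨y, hy, hdist⟩ := Metric.mem_closure_iff.mp (sub_mem hp (hSV hw)) _ (div_pos hε hM)
  obtain ⟨s, hs, hys⟩ := h y hy _ (div_pos hε hM)
  have hclose (v : F) : |inner ℝ (p - w) v - inner ℝ y v| ≤ ε / (1 + ‖p‖ + C) * ‖v‖ := by
    rw [← inner_sub_left]
    refine (abs_real_inner_le_norm _ _).trans ?_
    gcongr
    exact (dist_eq_norm (p - w) y ▸ hdist).le
  have hs' : ε / (1 + ‖p‖ + C) * ‖s‖ ≤ ε / (1 + ‖p‖ + C) * C := by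
    gcongr
    exact hC s hs
  have hε' : ε / (1 + ‖p‖ + C) * (1 + ‖p‖ + C) = ε := div_mul_cancel₀ _ hM.ne'
  have hmin' := hmin s hs
  have hsq : ‖p - w‖ ^ 2 = inner ℝ (p - w) p - inner ℝ (p - w) w := by
    rw [← inner_sub_right, real_inner_self_eq_norm_sq]
  rw [inner_sub_right] at hmin'
  linarith [(abs_le.mp (hclose p)).2, (abs_le.mp (hclose s)).1]

end Separation

section TwistedProjection

variable {E : Type*} [NormedAddCommGroup E] [InnerProductSpace ℂ E] (K : Submodule ℝ E)
  [K.HasOrthogonalProjection]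

/-- The real linear map `v ↦ 2 P (conj l • v)`, where `P` is the projection onto `K`. -/
def twistedProj (l : ℂ) : E →L[ℝ] E :=
  (2 : ℝ) • K.starProjection.comp ((star l • (1 : E →L[ℂ] E)).restrictScalars ℝ)

theorem twistedProj_apply (l : ℂ) (v : E) :
    twistedProj K l v = (2 : ℝ) • K.starProjection (star l • v) := rfl

theorem twistedProj_mem (l : ℂ) (v : E) : twistedProj K l v ∈ K :=
  K.smul_mem _ (K.starProjection_apply_mem _)

theorem inner_twistedProj_of_mem {v : E} (hv : v ∈ K) (l : ℂ) (w : E) :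
    inner ℝ v (twistedProj K l w) = 2 * (star l * ⟪v, w⟫).re := by
  rw [twistedProj_apply, real_inner_smul_right, ← K.inner_starProjection_left_eq_right,
    Submodule.starProjection_eq_self_iff.mpr hv, ← inner_smul_right v w (star l)]
  rfl

theorem le_norm_twistedProj {l : ℂ} {v : E} (hv : v ∈ K) :
    2 * l.re * ‖v‖ ≤ ‖twistedProj K l v‖ := by
  rcases eq_or_ne v 0 with rfl | hv0
  · simp
  refine le_of_mul_le_mul_left ?_ (norm_pos_iff.mpr hv0)
  calc ‖v‖ * (2 * l.re * ‖v‖) = inner ℝ v (twistedProj K l v) := by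
        rw [inner_twistedProj_of_mem K hv, inner_self_eq_norm_sq_to_K]
        simp [← ofReal_pow]
        ring
    _ ≤ ‖v‖ * ‖twistedProj K l v‖ := real_inner_le_norm _ _

theorem isComplete_image_twistedProj {l : ℂ} (hl : 0 < l.re) {S : Set E} (hS : IsComplete S)
    (hSK : S ⊆ K) : IsComplete (twistedProj K l '' S) := by
  have := hS.completeSpace_coe
  rw [image_eq_range]
  refine AntilipschitzWith.isComplete_range (K := (1 / (2 * l.re)).toNNReal)
    (.of_le_mul_dist fun v w => ?_)
    ((twistedProj K l).uniformContinuous.comp uniformContinuous_subtype_val)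
  rw [Real.coe_toNNReal _ (by positivity), Subtype.dist_eq, dist_eq_norm, dist_eq_norm, ← map_sub,
    div_mul_eq_mul_div, one_mul, le_div_iff₀' (by positivity)]
  exact le_norm_twistedProj K (K.sub_mem (hSK v.2) (hSK w.2))

end TwistedProjection

-- `s / (|s| + ε)` approximates the sign function.
theorem exists_cfc_sign_approx {B : Type*} [CStarAlgebra B] {y : B} (hy : IsSelfAdjoint y) {ε : ℝ}
    (hε : 0 < ε) : ∃ f g : ℝ → ℝ, ‖cfc f y‖ ≤ 1 ∧ cfc g y * cfc g y = y * cfc f y ∧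
      ‖y - cfc g y * cfc f y * cfc g y‖ ≤ 2 * ε := by
  let f : ℝ → ℝ := fun s => s / (|s| + ε)
  let g : ℝ → ℝ := fun s => |s| / √(|s| + ε)
  have hpos (s : ℝ) : 0 < |s| + ε := by positivity
  have hf : Continuous f := by fun_prop (disch := intro s; exact (hpos s).ne')
  have hg : Continuous g := by
    fun_prop (disch := intro s; exact (Real.sqrt_pos.mpr (hpos s)).ne')
  have hgg (s : ℝ) : g s * g s = s * f s := by
    simp only [f, g]
    rw [div_mul_div_comm, Real.mul_self_sqrt (hpos s).le, abs_mul_abs_self, mul_div_assoc]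
  have hgfg (s : ℝ) : |s - g s * f s * g s| ≤ 2 * ε := by
    have heq : s - g s * f s * g s = s * (ε * (2 * |s| + ε)) / (|s| + ε) ^ 2 := by
      rw [mul_right_comm, hgg]
      simp only [f]
      field_simp [(hpos s).ne']
      rw [← sq_abs s]
      ring
    rw [heq, abs_div, abs_mul, abs_of_nonneg (by positivity : 0 ≤ ε * (2 * |s| + ε)),
      abs_of_pos (pow_pos (hpos s) 2), div_le_iff₀ (by positivity)]
    nlinarith [abs_nonneg s, mul_nonneg (abs_nonneg s) hε.le, sq_nonneg ε]
  refine ⟨f, g, norm_cfc_le zero_le_one fun s _ => ?_, ?_, ?_⟩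
  · rw [Real.norm_eq_abs, abs_div, abs_of_pos (hpos s), div_le_one (hpos s)]
    linarith
  · rw [← cfc_mul g g y hg.continuousOn hg.continuousOn, cfc_congr fun s _ => hgg s,
      cfc_mul (fun s => s) f y continuousOn_id hf.continuousOn, cfc_id' ℝ y]
  · have hsub : y - cfc g y * cfc f y * cfc g y = cfc (fun s => s - g s * f s * g s) y := by
      rw [cfc_sub _ _ y (by fun_prop) (by fun_prop), cfc_mul _ g y (by fun_prop) (by fun_prop),
        cfc_mul g f y (by fun_prop) (by fun_prop), cfc_id' ℝ y]
    rw [hsub]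
    exact norm_cfc_le (by positivity) fun s _ => hgfg s

variable {A : VonNeumannAlgebra H} {Ω : H}

theorem exists_isSelfAdjoint_re_inner_le {x y : H →L[ℂ] H} (hx : x ∈ A.commutant) (hy : y ∈ A)
    (hy' : IsSelfAdjoint y) {ε : ℝ} (hε : 0 < ε) :
    ∃ h ∈ A, IsSelfAdjoint h ∧ ‖h‖ ≤ 1 ∧ ∃ r : ℝ, ⟪y Ω, h Ω⟫ = r ∧
      (⟪y Ω, x Ω⟫).re ≤ ‖x‖ * r + ε := by
  obtain ⟨f, g, hf, hgg, hgfg⟩ := exists_cfc_sign_approx hy'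
    (show 0 < ε / (2 * (‖Ω‖ * ‖x Ω‖ + 1)) by positivity)
  set h := cfc f y
  set q := cfc g y
  have hq : q ∈ A := cfc_mem hy g
  have hq' : IsSelfAdjoint q := cfc_predicate g y
  refine ⟨h, cfc_mem hy f, cfc_predicate f y, hf, ‖q Ω‖ ^ 2, ?_, ?_⟩
  · rw [inner_apply_left_of_isSelfAdjoint hy', ← mul_apply_eq_comp, ← hgg, mul_apply_eq_comp,
      ← inner_apply_left_of_isSelfAdjoint hq', inner_self_eq_norm_sq_to_K]
    norm_cast
  have herr : (⟪(y - q * h * q) Ω, x Ω⟫).re ≤ ε := calc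
    _ ≤ ‖(y - q * h * q) Ω‖ * ‖x Ω‖ := (re_le_norm _).trans (norm_inner_le_norm _ _)
    _ ≤ 2 * (ε / (2 * (‖Ω‖ * ‖x Ω‖ + 1))) * ‖Ω‖ * ‖x Ω‖ := by
        gcongr
        exact ContinuousLinearMap.le_of_opNorm_le _ hgfg _
    _ = ε * ((‖Ω‖ * ‖x Ω‖) / (‖Ω‖ * ‖x Ω‖ + 1)) := by field_simp
    _ ≤ ε := mul_le_of_le_one_right hε.le (div_le_one_of_le₀ (by linarith) (by positivity))
  have hmain : (⟪(q * h * q) Ω, x Ω⟫).re ≤ ‖x‖ * ‖q Ω‖ ^ 2 := calc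
    _ = (⟪h (q Ω), x (q Ω)⟫).re := by
        rw [mul_apply_eq_comp, mul_apply_eq_comp, inner_apply_left_of_isSelfAdjoint hq',
          apply_comm_of_mem_commutant hq hx]
    _ ≤ ‖h (q Ω)‖ * ‖x (q Ω)‖ := (re_le_norm _).trans (norm_inner_le_norm _ _)
    _ ≤ (1 * ‖q Ω‖) * (‖x‖ * ‖q Ω‖) := by
        gcongr
        · exact h.le_of_opNorm_le hf _
        · exact x.le_opNorm _
    _ = ‖x‖ * ‖q Ω‖ ^ 2 := by ring
  rw [← sub_add_cancel y (q * h * q), add_apply, inner_add_left, add_re]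
  linarith

theorem exists_starProjection_apply_eq
    (hΩ' : IsCyclicVector (A.commutant : Set (H →L[ℂ] H)) Ω) {x : H →L[ℂ] H}
    (hx : x ∈ A.commutant) {l : ℂ} (hl : 0 < l.re) :
    ∃ a ∈ A, IsSelfAdjoint a ∧
      (standardSubspace A Ω).starProjection (x Ω) = twistedProj (standardSubspace A Ω) l (a Ω) := by
  set K := standardSubspace A Ω
  set r : ℝ := ‖x‖ / (2 * l.re) with hr
  have hr0 : 0 ≤ r := by positivity
  have hSK : selfAdjointBall A Ω r ⊆ K := by
    rintro _ ⟨h, hh, hh', -, rfl⟩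
    exact apply_mem_standardSubspace hh hh'
  suffices hmem : K.starProjection (x Ω) ∈ twistedProj K l '' selfAdjointBall A Ω r by
    obtain ⟨_, ⟨a, ha, ha', -, rfl⟩, heq⟩ := hmem
    exact ⟨a, ha, ha', heq.symm⟩
  refine mem_of_forall_exists_inner_le (V := selfAdjointOrbit A Ω)
    (C := ‖twistedProj K l‖ * (r * ‖Ω‖)) ?_
    (isComplete_image_twistedProj K hl (isClosed_selfAdjointBall hΩ' hr0).isComplete hSK)
    ((convex_selfAdjointBall r).linear_image (twistedProj K l).toLinearMap) ?_ ?_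
    (K.starProjection_apply_mem _) ?_
  · exact ⟨_, mem_image_of_mem _ ⟨0, zero_mem A, .zero _, by simpa using hr0, rfl⟩⟩
  · rintro _ ⟨_, ⟨h, -, -, hn, rfl⟩, rfl⟩
    exact (twistedProj K l).le_opNorm_of_le (h.le_of_opNorm_le hn Ω)
  · rintro _ ⟨v, -, rfl⟩
    exact twistedProj_mem K l v
  · rintro _ ⟨y, hy, hy', rfl⟩ ε hε
    obtain ⟨h, hh, hh', hn, s, hs, hle⟩ := exists_isSelfAdjoint_re_inner_le (Ω := Ω) hx hy hy' hε
    have hyK : y Ω ∈ K := apply_mem_standardSubspace hy hy'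
    refine ⟨_, mem_image_of_mem _ ⟨(r : ℂ) • h, complex_smul_mem hh _,
      isSelfAdjoint_ofReal_smul hh' r, ?_, rfl⟩, ?_⟩
    · rw [norm_smul, norm_real, Real.norm_of_nonneg hr0]
      exact mul_le_of_le_one_right hr0 hn
    · rw [inner_twistedProj_of_mem K hyK, ← K.inner_starProjection_left_eq_right,
        Submodule.starProjection_eq_self_iff.mpr hyK, smul_apply, inner_smul_right, hs]
      have hval : 2 * (star l * (r * s : ℂ)).re = ‖x‖ * s := by
        rw [← ofReal_mul, re_mul_ofReal, hr, star_def, conj_re]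
        field_simp
      rwa [hval]

end RadonNikodym

section Compression

open Complex Set Filter Topology

attribute [local instance] InnerProductSpace.complexToReal

variable {A : VonNeumannAlgebra H} {Ω : H}

theorem exists_inner_vacuum_eq (hΩ' : IsCyclicVector (A.commutant : Set (H →L[ℂ] H)) Ω)
    {x : H →L[ℂ] H} (hx : x ∈ A.commutant) (hx' : IsSelfAdjoint x) {l : ℂ} (hl : 0 < l.re) :
    ∃ a ∈ A, IsSelfAdjoint a ∧
      ∀ y ∈ A, ⟪Ω, x (y Ω)⟫ = l * ⟪Ω, a (y Ω)⟫ + star l * ⟪Ω, y (a Ω)⟫ := by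
  obtain ⟨a, ha, ha', heq⟩ := exists_starProjection_apply_eq hΩ' hx hl
  have hself : ∀ y ∈ A, IsSelfAdjoint y →
      ⟪Ω, x (y Ω)⟫ = l * ⟪Ω, a (y Ω)⟫ + star l * ⟪Ω, y (a Ω)⟫ := fun y hy hy' => by
    have hyK := apply_mem_standardSubspace (Ω := Ω) hy hy'
    have hre : (⟪y Ω, x Ω⟫).re = 2 * (star l * ⟪y Ω, a Ω⟫).re := by
      rw [← inner_twistedProj_of_mem _ hyK, ← heq,
        ← Submodule.inner_starProjection_left_eq_right,
        Submodule.starProjection_eq_self_iff.mpr hyK]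
      rfl
    have him := im_inner_eq_zero_of_mem_commutant (Ω := Ω) hy hy' hx hx'
    rw [← inner_apply_left_of_isSelfAdjoint hx', ← inner_apply_left_of_isSelfAdjoint ha',
      ← inner_apply_left_of_isSelfAdjoint hy' Ω (a Ω), ← inner_conj_symm (x Ω),
      ← inner_conj_symm (a Ω)]
    apply Complex.ext <;> simp [hre, him, -inner_conj_symm] <;> ring
  refine ⟨a, ha, ha', fun y hy => ?_⟩
  obtain ⟨b, hb, c, hc, hb', hc', rfl, -⟩ := exists_eq_add_I_smul hy
  simp only [add_apply, smul_apply, map_add, map_smul, inner_add_right, inner_smul_right,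
    hself b hb hb', hself c hc hc']
  ring

theorem exists_isSelfAdjoint_apply_eq_starProjection
    (hΩ' : IsCyclicVector (A.commutant : Set (H →L[ℂ] H)) Ω) {x : H →L[ℂ] H}
    (hx : x ∈ A.commutant) :
    ∃ a ∈ A, IsSelfAdjoint a ∧ a Ω = (standardSubspace A Ω).starProjection (x Ω) := by
  obtain ⟨a, ha, ha', heq⟩ :=
    exists_starProjection_apply_eq hΩ' hx (l := ((1 / 2 : ℝ) : ℂ)) (by norm_num)
  refine ⟨a, ha, ha', ?_⟩
  rw [heq, twistedProj_apply, star_def, conj_ofReal, Complex.coe_smul, map_smul, smul_smul,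
    starProjection_apply_of_isSelfAdjoint ha ha']
  norm_num

theorem exists_apply_eq_diffProj (hΩ' : IsCyclicVector (A.commutant : Set (H →L[ℂ] H)) Ω)
    {x : H →L[ℂ] H} (hx : x ∈ A.commutant) :
    ∃ a ∈ A, a Ω = diffProj (standardSubspace A Ω) (x Ω) ∧
      star a Ω = sumProj (standardSubspace A Ω) (x Ω) := by
  obtain ⟨y, hy, z, hz, hy', hz', rfl, -⟩ := exists_eq_add_I_smul hx
  obtain ⟨b, hb, hb', hbΩ⟩ := exists_isSelfAdjoint_apply_eq_starProjection hΩ' hy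
  obtain ⟨c, hc, hc', hcΩ⟩ := exists_isSelfAdjoint_apply_eq_starProjection hΩ' hz
  refine ⟨b - I • c, sub_mem hb (complex_smul_mem hc I), ?_, ?_⟩
  · rw [_root_.sub_apply, smul_apply, add_apply, smul_apply, map_add, map_smulₛₗ, hbΩ, hcΩ,
      diffProj_apply_of_mem_commutant hy hy', diffProj_apply_of_mem_commutant hz hz', conj_I,
      neg_smul, sub_eq_add_neg]
  · rw [star_sub, star_smul, hb'.star_eq, hc'.star_eq, _root_.sub_apply, smul_apply, add_apply,
      smul_apply, map_add, map_smul, hbΩ, hcΩ, sumProj_apply_of_mem_commutant hy hy',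
      sumProj_apply_of_mem_commutant hz hz', star_def, conj_I, neg_smul, sub_neg_eq_add]

theorem exists_diffProj_apply_diffProj_eq (hΩ' : IsCyclicVector (A.commutant : Set (H →L[ℂ] H)) Ω)
    {x : H →L[ℂ] H} (hx : x ∈ A.commutant) (hx' : IsSelfAdjoint x) {l : ℂ} (hl : 0 < l.re) :
    ∃ a ∈ A, ∀ v, diffProj (standardSubspace A Ω) (x (diffProj (standardSubspace A Ω) v)) =
      l • (2 - sumProj (standardSubspace A Ω) : H →L[ℂ] H) (a (sumProj (standardSubspace A Ω) v)) +
      star l • sumProj (standardSubspace A Ω)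
        (a ((2 - sumProj (standardSubspace A Ω) : H →L[ℂ] H) v)) := by
  obtain ⟨a, ha, ha', heq⟩ := exists_inner_vacuum_eq hΩ' hx hx' hl
  refine ⟨a, ha, congrFun (Continuous.ext_on hΩ' (by fun_prop) (by fun_prop) ?_)⟩
  rintro _ ⟨y', hy', rfl⟩
  refine eq_of_forall_inner_apply_eq hΩ' fun z' hz' => ?_
  obtain ⟨y, hy, hyD, hyR⟩ := exists_apply_eq_diffProj hΩ' hy'
  obtain ⟨z, hz, hzD, hzR⟩ := exists_apply_eq_diffProj hΩ' hz'
  set K := standardSubspace A Ω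
  have hadj (w v : H) : ⟪y w, v⟫ = ⟪w, star y v⟫ := by
    rw [ContinuousLinearMap.star_eq_adjoint, ContinuousLinearMap.adjoint_inner_right]
  have hleft : ⟪z' Ω, diffProj K (x (diffProj K (y' Ω)))⟫ = ⟪Ω, x (star y (z Ω))⟫ := by
    rw [inner_diffProj_right, ← hzD, ← hyD, inner_apply_left_of_isSelfAdjoint hx',
      ← apply_comm_of_mem_commutant (star_mem hy) hx, hadj]
  have hmid : ⟪z' Ω, (2 - sumProj K : H →L[ℂ] H) (a (sumProj K (y' Ω)))⟫ =
      ⟪Ω, a (star y (z Ω))⟫ := by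
    have hD := diffProj_apply_of_mem (Ω := Ω) (mul_mem hy ha)
    rw [star_mul, ha'.star_eq, mul_apply_eq_comp, mul_apply_eq_comp] at hD
    rw [← hyR, ← hD, inner_diffProj_right, ← hzD, hadj, inner_apply_left_of_isSelfAdjoint ha']
  have hright : ⟪z' Ω, sumProj K (a ((2 - sumProj K : H →L[ℂ] H) (y' Ω)))⟫ =
      ⟪Ω, star y (z (a Ω))⟫ := by
    have hD := diffProj_apply_of_mem (Ω := Ω) (mul_mem hz ha)
    rw [star_mul, ha'.star_eq, mul_apply_eq_comp, mul_apply_eq_comp] at hD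
    have hsymm (w v : H) :
        ⟪(2 - sumProj K : H →L[ℂ] H) w, v⟫ = ⟪w, (2 - sumProj K : H →L[ℂ] H) v⟫ := by
      rw [← sumProj_orthogonal, inner_sumProj_left]
    rw [← inner_sumProj_left, ← hzR, ← inner_apply_left_of_isSelfAdjoint ha', ← hsymm, ← hD,
      ← inner_conj_symm, inner_diffProj_right, ← hyD, inner_conj_symm, hadj]
  have hvac := heq (star y * z) (mul_mem (star_mem hy) hz)
  simp only [mul_apply_eq_comp] at hvac
  rw [inner_add_right, inner_smul_right, inner_smul_right]
  exact hleft.trans (hvac.trans (by rw [← hmid, ← hright]))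

end Compression

section WeightedIntegral

open Complex Set Filter Topology MeasureTheory
open Complex.HadamardThreeLines (verticalStrip)

/-- The function `w ↦ R ^ (1 - w) (2 - R) ^ w a R ^ w (2 - R) ^ (1 - w) η`. On the edges of
`0 ≤ Re w ≤ 1` it is the modular orbit of `R a (2 - R)` and of `(2 - R) a R`, applied to `η`. -/
def stripOrbit (R a : H →L[ℂ] H) (η : H) (w : ℂ) : H :=
  modularPow R (1 - w) w (a (modularPow R w (1 - w) η))

theorem exp_mul_le_exp_abs_mul_abs (θ t : ℝ) : Real.exp (θ * t) ≤ Real.exp (|θ| * |t|) :=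
  Real.exp_le_exp.mpr ((le_abs_self _).trans (abs_mul θ t).le)

theorem continuous_integral_apply {X E : Type*} [MeasurableSpace X] {μ : Measure X}
    [NormedAddCommGroup E] [NormedSpace ℂ E] {F : X → E →L[ℂ] E} {g : X → ℝ}
    (hF : ∀ v, AEStronglyMeasurable (fun t => F t v) μ) (hg : Integrable g μ)
    (hb : ∀ t v, ‖F t v‖ ≤ g t * ‖v‖) : Continuous fun v => ∫ t, F t v ∂μ := by
  refine continuous_iff_continuousAt.mpr fun v₀ => ?_
  refine continuousAt_of_dominated (bound := fun t => ‖g t‖ * (‖v₀‖ + 1))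
    (.of_forall hF) ?_ (hg.norm.mul_const _) (.of_forall fun t => (F t).continuous.continuousAt)
  filter_upwards [continuousAt_id.norm.eventually_lt_const (lt_add_one ‖v₀‖)] with v hv
  refine .of_forall fun t => (hb t v).trans ?_
  gcongr
  exacts [Real.le_norm_self _, hv.le]

namespace IsStrictlyBetweenZeroTwo

variable {R : H →L[ℂ] H} (hR : IsStrictlyBetweenZeroTwo R)
include hR

theorem norm_modularPow_apply_modularPow_le (a : H →L[ℂ] H) (η : H) {α β : ℂ}
    (h : IsAdmissible α β) :
    ‖modularPow R α β (a (modularPow R β α η))‖ ≤ 4 * (‖a‖ * (4 * ‖η‖)) :=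
  (hR.norm_modularPow_apply_le h _).trans <| by
    gcongr
    exact a.le_opNorm_of_le (hR.norm_modularPow_apply_le h.symm η)

theorem diffContOnCl_modularPow_apply_modularPow (a : H →L[ℂ] H) (η : H) {α β : ℂ → ℂ} {U : Set ℂ}
    (hU : IsOpen U) (h : ∀ w ∈ closure U, IsAdmissible (α w) (β w)) (hα : DiffContOnCl ℂ α U)
    (hβ : DiffContOnCl ℂ β U) :
    DiffContOnCl ℂ (fun w => modularPow R (α w) (β w) (a (modularPow R (β w) (α w) η))) U :=
  hR.diffContOnCl_modularPow hU h hα hβ <| a.differentiable.comp_diffContOnCl <|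
    hR.diffContOnCl_modularPow hU (fun w hw => (h w hw).symm) hβ hα diffContOnCl_const

theorem diffContOnCl_stripOrbit (a : H →L[ℂ] H) (η : H) :
    DiffContOnCl ℂ (stripOrbit R a η) (verticalStrip 0 1) :=
  hR.diffContOnCl_modularPow_apply_modularPow a η (isOpen_Ioo.preimage continuous_re)
    (fun w hw => isAdmissible_one_sub (by rwa [closure_verticalStrip zero_lt_one] at hw))
    (differentiable_id.const_sub 1).diffContOnCl differentiable_id.diffContOnCl

theorem stripOrbit_I_mul (a : H →L[ℂ] H) (η : H) (t : ℝ) :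
    stripOrbit R a η (I * t) = modularAut R t (R * a * (2 - R)) η := by
  have hleft := hR.modularUnitary_apply_modularPow t isAdmissible_one_zero
    (a (modularPow R (I * t) (1 - I * t) η))
  have hright := hR.modularPow_apply_modularUnitary (-t) isAdmissible_one_zero.symm η
  rw [hR.modularPow_one_zero] at hleft
  rw [hR.modularPow_zero_one] at hright
  simp only [zero_add, zero_sub, ofReal_neg, mul_neg, neg_neg, ← sub_eq_add_neg] at hleft hright
  simp only [stripOrbit, modularAut, mul_apply_eq_comp, ← hleft, hright]

theorem stripOrbit_one_add_I_mul (a : H →L[ℂ] H) (η : H) (t : ℝ) :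
    stripOrbit R a η (1 + I * t) = modularAut R t ((2 - R) * a * R) η := by
  have hleft := hR.modularUnitary_apply_modularPow t isAdmissible_one_zero.symm
    (a (modularPow R (1 + I * t) (-(I * t)) η))
  have hright := hR.modularPow_apply_modularUnitary (-t) isAdmissible_one_zero η
  rw [hR.modularPow_zero_one] at hleft
  rw [hR.modularPow_one_zero] at hright
  simp only [zero_add, zero_sub, ofReal_neg, mul_neg, sub_neg_eq_add] at hleft hright
  simp only [stripOrbit, modularAut, mul_apply_eq_comp, sub_add_cancel_left, hleft, hright]

theorem modularPow_modularAut_modularPow (t : ℝ) {α β : ℂ} (h : IsAdmissible α β)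
    (b : H →L[ℂ] H) (η : H) : modularPow R α β (modularAut R t b (modularPow R α β η)) =
      modularAut R t (modularPow R α β * b * modularPow R α β) η := by
  simp only [modularAut, mul_apply_eq_comp]
  rw [hR.modularUnitary_apply_modularPow _ h, hR.modularPow_apply_modularUnitary _ h,
    hR.modularUnitary_apply_modularPow _ h, hR.modularPow_apply_modularUnitary _ h]

theorem integrable_inv_cosh_smul_exp_smul_modularAut {θ : ℝ} (hθ : |θ| < Real.pi)
    (b : H →L[ℂ] H) (v : H) :
    Integrable fun t : ℝ =>
      (Real.cosh (Real.pi * t))⁻¹ • Real.exp (θ * t) • modularAut R t b v := by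
  refine integrable_inv_cosh_smul (M := ‖b‖ * ‖v‖)
    ((by fun_prop : Continuous fun t : ℝ => Real.exp (θ * t)).smul
      (hR.continuous_modularAut_apply b v)) hθ fun t => ?_
  rw [norm_smul, Real.norm_of_nonneg (Real.exp_pos _).le, mul_comm]
  exact mul_le_mul (hR.norm_modularAut_apply_le t b v) (exp_mul_le_exp_abs_mul_abs θ t)
    (Real.exp_pos _).le (by positivity)

theorem continuous_integral_inv_cosh_smul_exp_smul_modularAut {θ : ℝ} (hθ : |θ| < Real.pi)
    (b : H →L[ℂ] H) : Continuous fun v =>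
      ∫ t : ℝ, (Real.cosh (Real.pi * t))⁻¹ • Real.exp (θ * t) • modularAut R t b v := by
  refine continuous_integral_apply
    (F := fun t => (Real.cosh (Real.pi * t))⁻¹ • Real.exp (θ * t) • modularAut R t b)
    (g := fun t => (Real.cosh (Real.pi * t))⁻¹ • (Real.exp (θ * t) * ‖b‖))
    (fun v => (hR.integrable_inv_cosh_smul_exp_smul_modularAut hθ b v).aestronglyMeasurable)
    ?_ fun t v => ?_
  · refine integrable_inv_cosh_smul (M := ‖b‖) (by fun_prop) hθ fun t => ?_
    rw [Real.norm_of_nonneg (by positivity), mul_comm]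
    exact mul_le_mul_of_nonneg_left (exp_mul_le_exp_abs_mul_abs θ t) (norm_nonneg b)
  · change ‖(Real.cosh (Real.pi * t))⁻¹ • Real.exp (θ * t) • modularAut R t b v‖ ≤ _
    rw [norm_smul, norm_smul, Real.norm_of_nonneg (inv_nonneg.mpr (Real.cosh_pos _).le),
      Real.norm_of_nonneg (Real.exp_pos _).le, smul_eq_mul, mul_assoc, mul_assoc]
    gcongr
    exact hR.norm_modularAut_apply_le t b v

theorem integral_modularAut_modularPow_half_half {θ : ℝ} (hθ : |θ| < Real.pi) {a b : H →L[ℂ] H}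
    (hab : ∀ v, modularPow R (1 / 2) (1 / 2) (b (modularPow R (1 / 2) (1 / 2) v)) =
      exp (-(I * θ / 2)) • (2 - R : H →L[ℂ] H) (a (R v)) +
        exp (I * θ / 2) • R (a ((2 - R : H →L[ℂ] H) v))) (η : H) :
    ∫ t : ℝ, (Real.cosh (Real.pi * t))⁻¹ • Real.exp (θ * t) •
        modularAut R t (modularPow R (1 / 2) (1 / 2) * b * modularPow R (1 / 2) (1 / 2)) η =
      (2 : ℝ) • modularPow R (1 / 2) (1 / 2) (a (modularPow R (1 / 2) (1 / 2) η)) := by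
  let G (w : ℂ) : H := exp (-(I * θ) * (w - 1 / 2)) • stripOrbit R a η w
  have hdiff : DiffContOnCl ℂ G (verticalStrip 0 1) :=
    (by fun_prop : Differentiable ℂ fun w => exp (-(I * θ) * (w - 1 / 2))).diffContOnCl.smul
      (hR.diffContOnCl_stripOrbit a η)
  have hbound (w : ℂ) (hw : w.re ∈ Icc 0 1) :
      ‖G w‖ ≤ 4 * (‖a‖ * (4 * ‖η‖)) * Real.exp (|θ| * |w.im|) := by
    rw [norm_smul, Complex.norm_exp, mul_comm]
    gcongr
    · exact hR.norm_modularPow_apply_modularPow_le a η (isAdmissible_one_sub hw)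
    · simpa [abs_mul] using le_abs_self (θ * w.im)
  have hpoisson := integral_inv_cosh_smul_add hdiff (abs_nonneg θ) hθ hbound
  have hhalf : G (1 / 2) = modularPow R (1 / 2) (1 / 2) (a (modularPow R (1 / 2) (1 / 2) η)) := by
    norm_num [G, stripOrbit]
  rw [← hhalf, ← hpoisson]
  refine integral_congr_ae (.of_forall fun t => ?_)
  have hexp0 : exp (-(I * θ) * (I * t - 1 / 2)) = Real.exp (θ * t) * exp (I * θ / 2) := by
    rw [ofReal_exp, ← Complex.exp_add]
    congr 1
    push_cast
    linear_combination (-θ * t : ℂ) * I_mul_I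
  have hexp1 : exp (-(I * θ) * (1 + I * t - 1 / 2)) = Real.exp (θ * t) * exp (-(I * θ / 2)) := by
    rw [ofReal_exp, ← Complex.exp_add]
    congr 1
    push_cast
    linear_combination (-θ * t : ℂ) * I_mul_I
  simp only [G, hexp0, hexp1, hR.stripOrbit_I_mul, hR.stripOrbit_one_add_I_mul, mul_smul,
    ← smul_add, Complex.coe_smul]
  simp only [modularAut, mul_apply_eq_comp, hab, map_add, map_smul]
  rw [add_comm]

theorem integral_modularAut {θ : ℝ} (hθ : |θ| < Real.pi) {a b : H →L[ℂ] H}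
    (hab : ∀ v, modularPow R (1 / 2) (1 / 2) (b (modularPow R (1 / 2) (1 / 2) v)) =
      exp (-(I * θ / 2)) • (2 - R : H →L[ℂ] H) (a (R v)) +
        exp (I * θ / 2) • R (a ((2 - R : H →L[ℂ] H) v))) (v : H) :
    ∫ t : ℝ, (Real.cosh (Real.pi * t))⁻¹ • Real.exp (θ * t) • modularAut R t b v =
      (2 : ℝ) • a v := by
  refine hR.denseRange_modularPow_half_half.induction_on v (isClosed_eq
    (hR.continuous_integral_inv_cosh_smul_exp_smul_modularAut hθ b) (by fun_prop)) fun η => ?_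
  apply hR.modularPow_half_half_injective
  rw [← ContinuousLinearMap.integral_comp_comm _
    (hR.integrable_inv_cosh_smul_exp_smul_modularAut hθ b _)]
  simp only [ContinuousLinearMap.map_smul_of_tower, ← hR.integral_modularAut_modularPow_half_half hθ
    hab, hR.modularPow_modularAut_modularPow _ isAdmissible_one_half]

end IsStrictlyBetweenZeroTwo

end WeightedIntegral

section TomitaTheorem

open Complex Set Filter Topology MeasureTheory
open Complex.HadamardThreeLines (verticalStrip)

attribute [local instance] InnerProductSpace.complexToReal

theorem re_exp_neg_I_mul_div_two_pos {θ : ℝ} (hθ : |θ| < Real.pi) :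
    0 < (exp (-(I * θ / 2))).re := by
  have harg : -(I * (θ : ℂ) / 2) = ((-(θ / 2) : ℝ) : ℂ) * I := by
    push_cast
    ring
  rw [harg, exp_ofReal_mul_I_re, Real.cos_neg]
  obtain ⟨hl, hu⟩ := abs_lt.mp hθ
  exact Real.cos_pos_of_mem_Ioo ⟨by linarith, by linarith⟩

theorem star_exp_neg_I_mul_div_two (θ : ℝ) : star (exp (-(I * θ / 2))) = exp (I * θ / 2) := by
  rw [← starRingEnd_apply, ← Complex.exp_conj]
  simp [map_ofNat, neg_div]

variable {A : VonNeumannAlgebra H} {Ω : H} (hΩ : IsCyclicVector (A : Set (H →L[ℂ] H)) Ω)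
  (hΩ' : IsCyclicVector (A.commutant : Set (H →L[ℂ] H)) Ω)
include hΩ hΩ'

theorem integral_exp_smul_commutator_eq_zero {x c : H →L[ℂ] H}
    (hx : x ∈ A.commutant) (hx' : IsSelfAdjoint x) (hc : c ∈ A.commutant) {θ : ℝ}
    (hθ : |θ| < Real.pi) (v : H) :
    let σ := fun t => modularAut (sumProj (standardSubspace A Ω)) t
      (conjOp (standardSubspace A Ω) x)
    ∫ t : ℝ, Real.exp (θ * t) • (Real.cosh (Real.pi * t))⁻¹ • (σ t (c v) - c (σ t v)) = 0 := by
  intro σ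
  have hK := isStandard_standardSubspace hΩ hΩ'
  have hR := hK.isStrictlyBetweenZeroTwo
  obtain ⟨a, ha, hxa⟩ :=
    exists_diffProj_apply_diffProj_eq hΩ' hx hx' (re_exp_neg_I_mul_div_two_pos hθ)
  have hint := hR.integral_modularAut hθ (a := a) (b := conjOp (standardSubspace A Ω) x)
    fun v => by
      rw [conjOp_apply, hK.modularConj_modularPow_half_half, hK.modularPow_half_half_modularConj,
        hxa, star_exp_neg_I_mul_div_two]
  have hi := hR.integrable_inv_cosh_smul_exp_smul_modularAut hθ
    (conjOp (standardSubspace A Ω) x)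
  calc ∫ t : ℝ, Real.exp (θ * t) • (Real.cosh (Real.pi * t))⁻¹ • (σ t (c v) - c (σ t v))
    _ = ∫ t : ℝ, ((Real.cosh (Real.pi * t))⁻¹ • Real.exp (θ * t) • σ t (c v) -
          c ((Real.cosh (Real.pi * t))⁻¹ • Real.exp (θ * t) • σ t v)) := by
        simp only [smul_comm (Real.exp _), smul_sub, ContinuousLinearMap.map_smul_of_tower]
    _ = (2 : ℝ) • a (c v) - c ((2 : ℝ) • a v) := by
        rw [integral_sub (hi _) (c.integrable_comp (hi v)), c.integral_comp_comm (hi v), hint, hint]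
    _ = 0 := by
        rw [ContinuousLinearMap.map_smul_of_tower, apply_comm_of_mem_commutant ha hc, sub_self]

theorem modularAut_conjOp_mem_of_isSelfAdjoint {x : H →L[ℂ] H}
    (hx : x ∈ A.commutant) (hx' : IsSelfAdjoint x) (t : ℝ) :
    modularAut (sumProj (standardSubspace A Ω)) t (conjOp (standardSubspace A Ω) x) ∈ A := by
  have hR := (isStandard_standardSubspace hΩ hΩ').isStrictlyBetweenZeroTwo
  refine mem_of_forall_mem_commutant fun c hc v => ?_
  set σ := fun t => modularAut (sumProj (standardSubspace A Ω)) t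
    (conjOp (standardSubspace A Ω) x)
  let M := ‖conjOp (standardSubspace A Ω) x‖ * ‖c v‖ +
    ‖c‖ * (‖conjOp (standardSubspace A Ω) x‖ * ‖v‖)
  have hbound (t : ℝ) : ‖σ t (c v) - c (σ t v)‖ ≤ M * Real.exp (0 * |t|) := by
    rw [zero_mul, Real.exp_zero, mul_one]
    exact (norm_sub_le _ _).trans <| add_le_add (hR.norm_modularAut_apply_le _ _ _) <|
      c.le_opNorm_of_le (hR.norm_modularAut_apply_le _ _ _)
  have hcont : Continuous fun t => σ t (c v) - c (σ t v) :=
    (hR.continuous_modularAut_apply _ _).sub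
      (c.continuous.comp (hR.continuous_modularAut_apply _ _))
  have hzero := eq_zero_of_integral_exp_smul_eq_zero
    (continuous_inv_cosh_pi_mul.smul hcont) Real.pi_pos
    (by simpa using norm_inv_cosh_smul_le hbound)
    (fun θ hθ => integral_exp_smul_commutator_eq_zero hΩ hΩ' hx hx' hc hθ v) t
  have hcosh : (Real.cosh (Real.pi * t))⁻¹ ≠ 0 := inv_ne_zero (Real.cosh_pos _).ne'
  exact (sub_eq_zero.mp ((smul_eq_zero_iff_right hcosh).mp hzero)).symm

theorem modularAut_conjOp_mem {x : H →L[ℂ] H}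
    (hx : x ∈ A.commutant) (t : ℝ) :
    modularAut (sumProj (standardSubspace A Ω)) t (conjOp (standardSubspace A Ω) x) ∈ A := by
  obtain ⟨b, hb, c, hc, hb', hc', rfl, -⟩ := exists_eq_add_I_smul hx
  have hsplit : modularAut (sumProj (standardSubspace A Ω)) t
        (conjOp (standardSubspace A Ω) (b + I • c)) =
      modularAut (sumProj (standardSubspace A Ω)) t (conjOp (standardSubspace A Ω) b) +
        (-I) • modularAut (sumProj (standardSubspace A Ω)) t
          (conjOp (standardSubspace A Ω) c) := by
    ext v
    simp [modularAut, conjOp_apply]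
  rw [hsplit]
  exact add_mem (modularAut_conjOp_mem_of_isSelfAdjoint hΩ hΩ' hb hb' t)
    (complex_smul_mem (modularAut_conjOp_mem_of_isSelfAdjoint hΩ hΩ' hc hc' t) _)

theorem exists_modularPow_eq_apply {b : H →L[ℂ] H} (hb : b ∈ A) :
    ∃ ζ, modularPow (sumProj (standardSubspace A Ω)) (1 / 2) 0 ζ = b Ω ∧
      modularPow (sumProj (standardSubspace A Ω)) 0 (1 / 2) ζ =
        modularConj (standardSubspace A Ω) (star b Ω) := by
  obtain ⟨c, hc, d, hd, hc', hd', hsum, hstar⟩ := exists_eq_add_I_smul hb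
  rw [hstar, hsum]
  exact (isStandard_standardSubspace hΩ hΩ').exists_modularPow_eq_add_I_smul
    (apply_mem_standardSubspace hc hc') (apply_mem_standardSubspace hd hd')

theorem modularPow_apply_eq_modularConj {b : H →L[ℂ] H} (hb : b ∈ A) :
    modularPow (sumProj (standardSubspace A Ω)) 0 (1 / 2) (b Ω) =
      modularPow (sumProj (standardSubspace A Ω)) (1 / 2) 0
        (modularConj (standardSubspace A Ω) (star b Ω)) := by
  have hR := (isStandard_standardSubspace hΩ hΩ').isStrictlyBetweenZeroTwo
  obtain ⟨ζ, hζ, hζ'⟩ := exists_modularPow_eq_apply hΩ hΩ' hb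
  rw [← hζ, ← hζ', hR.modularPow_apply_modularPow isAdmissible_zero_one_half
    isAdmissible_one_half_zero (by simpa using isAdmissible_one_half),
    hR.modularPow_apply_modularPow isAdmissible_one_half_zero isAdmissible_zero_one_half
    (by simpa using isAdmissible_one_half)]
  simp

theorem modularPow_apply_eq_conjOp_on_line {a b : H →L[ℂ] H} {ζ ξ : H}
    (ha : ∀ t, modularAut (sumProj (standardSubspace A Ω)) t a ∈ A) (hb : b ∈ A)
    (hζ : modularPow (sumProj (standardSubspace A Ω)) (1 / 2) 0 ζ = star a Ω)
    (hξ : modularPow (sumProj (standardSubspace A Ω)) (1 / 2) 0 ξ = star b Ω) (t : ℝ) :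
    let R := sumProj (standardSubspace A Ω)
    let J := modularConj (standardSubspace A Ω)
    modularPow R (I * t) (1 / 2 - I * t) (a (modularPow R (1 / 2 - I * t) (I * t) ξ)) =
      modularPow R (1 / 2) 0
        (conjOp (standardSubspace A Ω) b (modularPow R (I * t) (1 / 2 - I * t) (J ζ))) := by
  intro R J
  have hK := isStandard_standardSubspace hΩ hΩ'
  have hR := hK.isStrictlyBetweenZeroTwo
  have hΩR : R Ω = Ω := sumProj_vacuum
  have hleft : modularPow R (1 / 2 - I * t) (I * t) ξ = modularUnitary R t (star b Ω) := by
    rw [← hξ, hR.modularUnitary_apply_modularPow t isAdmissible_one_half_zero, zero_add]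
  have hright : modularPow R (I * t) (1 / 2 - I * t) (J ζ) =
      J (modularUnitary R (-t) (star a Ω)) := by
    rw [← hζ, hK.modularConj_modularUnitary, hK.modularConj_modularPow isAdmissible_one_half_zero,
      hR.modularUnitary_apply_modularPow (-t) isAdmissible_one_half_zero.star.symm]
    simp [J, R, ← sub_eq_add_neg]
  have hswap := modularPow_apply_eq_modularConj hΩ hΩ' (mul_mem (ha (-t)) (star_mem hb))
  rw [star_mul, star_star, hR.star_modularAut, mul_apply_eq_comp, mul_apply_eq_comp,
    hR.modularAut_apply_of_apply_eq_self hΩR] at hswap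
  have haut := hR.modularPow_apply_modularUnitary (-t) isAdmissible_zero_one_half
    (a (modularUnitary R t (star b Ω)))
  simp only [zero_sub, ofReal_neg, mul_neg, neg_neg, ← sub_eq_add_neg] at haut
  rw [hleft, hright, conjOp_apply, hK.modularConj_modularConj, ← hswap, ← haut, modularAut,
    mul_apply_eq_comp, mul_apply_eq_comp, neg_neg]

theorem modularPow_apply_eq_conjOp_on_strip {a b : H →L[ℂ] H} {ζ ξ : H}
    (ha : ∀ t, modularAut (sumProj (standardSubspace A Ω)) t a ∈ A) (hb : b ∈ A)
    (hζ : modularPow (sumProj (standardSubspace A Ω)) (1 / 2) 0 ζ = star a Ω)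
    (hξ : modularPow (sumProj (standardSubspace A Ω)) (1 / 2) 0 ξ = star b Ω) {w : ℂ}
    (hw : w.re ∈ Icc 0 (1 / 2)) :
    let R := sumProj (standardSubspace A Ω)
    let J := modularConj (standardSubspace A Ω)
    modularPow R w (1 / 2 - w) (a (modularPow R (1 / 2 - w) w ξ)) =
      modularPow R (1 / 2) 0
        (conjOp (standardSubspace A Ω) b (modularPow R w (1 / 2 - w) (J ζ))) := by
  intro R J
  have hR := (isStandard_standardSubspace hΩ hΩ').isStrictlyBetweenZeroTwo
  let T := modularPow R (1 / 2) 0 * conjOp (standardSubspace A Ω) b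
  let f (w : ℂ) : H := modularPow R w (1 / 2 - w) (a (modularPow R (1 / 2 - w) w ξ)) -
    T (modularPow R w (1 / 2 - w) (J ζ))
  have hopen : IsOpen (verticalStrip 0 (1 / 2)) := isOpen_Ioo.preimage continuous_re
  have hadm (w : ℂ) (hw : w ∈ closure (verticalStrip 0 (1 / 2))) :
      IsAdmissible w (1 / 2 - w) := by
    rw [closure_verticalStrip one_half_pos] at hw
    exact (isAdmissible_one_half_sub hw).symm
  have hid : DiffContOnCl ℂ (fun w : ℂ => w) (verticalStrip 0 (1 / 2)) :=
    differentiable_id.diffContOnCl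
  have hsub : DiffContOnCl ℂ (fun w : ℂ => 1 / 2 - w) (verticalStrip 0 (1 / 2)) :=
    (differentiable_id.const_sub _).diffContOnCl
  have hdiff : DiffContOnCl ℂ f (verticalStrip 0 (1 / 2)) :=
    (hR.diffContOnCl_modularPow_apply_modularPow a ξ hopen hadm hid hsub).sub <|
      T.differentiable.comp_diffContOnCl <|
        hR.diffContOnCl_modularPow hopen hadm hid hsub diffContOnCl_const
  have hbound (w : ℂ) (hw : w.re ∈ Icc 0 (1 / 2)) :
      ‖f w‖ ≤ 4 * (‖a‖ * (4 * ‖ξ‖)) + ‖T‖ * (4 * ‖J ζ‖) :=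
    have h := (isAdmissible_one_half_sub hw).symm
    (norm_sub_le _ _).trans <| add_le_add (hR.norm_modularPow_apply_modularPow_le a ξ h)
      (T.le_opNorm_of_le (hR.norm_modularPow_apply_le h _))
  refine sub_eq_zero.mp (eqOn_zero_of_eq_zero_on_left_line one_half_pos hdiff hbound ?_ hw)
  intro z hz
  have hz' : z = I * z.im := by simp [Complex.ext_iff, hz]
  rw [hz']
  exact sub_eq_zero.mpr (modularPow_apply_eq_conjOp_on_line hΩ hΩ' ha hb hζ hξ z.im)

theorem apply_modularConj_comm {a b : H →L[ℂ] H}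
    (ha : ∀ t, modularAut (sumProj (standardSubspace A Ω)) t a ∈ A) (hb : b ∈ A) :
    a (modularConj (standardSubspace A Ω) (b Ω)) =
      modularConj (standardSubspace A Ω) (b (modularConj (standardSubspace A Ω) (a Ω))) := by
  have hK := isStandard_standardSubspace hΩ hΩ'
  have hR := hK.isStrictlyBetweenZeroTwo
  have ha' : a ∈ A := by simpa only [hR.modularAut_zero] using ha 0
  obtain ⟨ζ, hζ, hζ'⟩ := exists_modularPow_eq_apply hΩ hΩ' (star_mem ha')
  obtain ⟨ξ, hξ, hξ'⟩ := exists_modularPow_eq_apply hΩ hΩ' (star_mem hb)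
  have hstrip := modularPow_apply_eq_conjOp_on_strip hΩ hΩ' ha hb hζ hξ (w := 1 / 2) (by norm_num)
  have hJζ := hK.modularConj_modularPow isAdmissible_zero_one_half ζ
  rw [star_one_half, star_zero] at hJζ
  rw [star_star] at hζ' hξ'
  simp only [sub_self, conjOp_apply, ← hJζ, hζ', hξ', hK.modularConj_modularConj] at hstrip
  exact hR.modularPow_half_zero_injective hstrip

theorem conjOp_mem_commutant {a : H →L[ℂ] H}
    (ha : ∀ t, modularAut (sumProj (standardSubspace A Ω)) t a ∈ A) :
    conjOp (standardSubspace A Ω) a ∈ A.commutant := by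
  have hK := isStandard_standardSubspace hΩ hΩ'
  have horbit {b : H →L[ℂ] H} (hb : b ∈ A) : conjOp (standardSubspace A Ω) a (b Ω) =
      b (modularConj (standardSubspace A Ω) (a Ω)) := by
    rw [conjOp_apply, apply_modularConj_comm hΩ hΩ' ha hb, hK.modularConj_modularConj]
  refine VonNeumannAlgebra.mem_commutant_iff.mpr fun c hc => ?_
  refine ContinuousLinearMap.ext (congrFun (Continuous.ext_on hΩ (by fun_prop) (by fun_prop) ?_))
  rintro _ ⟨b, hb, rfl⟩
  rw [mul_apply_eq_comp, mul_apply_eq_comp, horbit hb, ← mul_apply_eq_comp c b,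
    ← mul_apply_eq_comp c b, horbit (mul_mem hc hb)]

theorem modularAut_mem_commutant {x : H →L[ℂ] H}
    (hx : x ∈ A.commutant) (t : ℝ) :
    modularAut (sumProj (standardSubspace A Ω)) t x ∈ A.commutant := by
  have hK := isStandard_standardSubspace hΩ hΩ'
  rw [← hK.conjOp_modularAut_conjOp]
  refine conjOp_mem_commutant hΩ hΩ' fun s => ?_
  rw [hK.isStrictlyBetweenZeroTwo.modularAut_modularAut]
  exact modularAut_conjOp_mem hΩ hΩ' hx (s + t)

theorem modularAut_mem {a : H →L[ℂ] H} (ha : a ∈ A)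
    (t : ℝ) : modularAut (sumProj (standardSubspace A Ω)) t a ∈ A := by
  have hR := (isStandard_standardSubspace hΩ hΩ').isStrictlyBetweenZeroTwo
  refine mem_of_forall_mem_commutant fun x hx v => ?_
  let σ := modularAut (sumProj (standardSubspace A Ω))
  have hcomm : σ (-t) x * a = a * σ (-t) x :=
    ContinuousLinearMap.ext fun u =>
      (apply_comm_of_mem_commutant ha (modularAut_mem_commutant hΩ hΩ' hx (-t)) u).symm
  have hmul : x * σ t a = σ t a * x := by
    simpa only [σ, hR.modularAut_mul, hR.modularAut_modularAut, add_neg_cancel,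
      hR.modularAut_zero] using congrArg (σ t) hcomm
  exact DFunLike.congr_fun hmul v

end TomitaTheorem

section KMS

open Complex Set Filter Topology

attribute [local instance] InnerProductSpace.complexToReal

namespace IsStrictlyBetweenZeroTwo

variable {R : H →L[ℂ] H} (hR : IsStrictlyBetweenZeroTwo R)
include hR

theorem isOneParamUnitaryGroup_modularUnitary_neg :
    IsOneParamUnitaryGroup fun t => modularUnitary R (-t) := by
  refine ⟨fun t => hR.modularUnitary_mem_unitary (-t), ?_, fun s t => ?_, fun x => ?_⟩
  · simp only [neg_zero, hR.modularUnitary_zero]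
  · simp only [neg_add, hR.modularUnitary_add]
  · exact hR.continuous_modularUnitary_apply continuous_neg continuous_const

theorem inner_modularPow_modularUnitary_modularPow {α β γ δ : ℂ} (h : IsAdmissible α β)
    (h' : IsAdmissible γ δ) (h'' : IsAdmissible (star α + γ) (star β + δ)) (t : ℝ) (ζ ξ : H) :
    ⟪modularPow R α β ζ, modularUnitary R t (modularPow R γ δ ξ)⟫ =
      ⟪ζ, modularPow R (star α + γ - I * t) (star β + δ + I * t) ξ⟫ := by
  rw [hR.inner_modularPow_left h, hR.modularUnitary_apply_modularPow t h',
    hR.modularPow_apply_modularPow h.star (h'.sub_add_I_mul t)]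
  · simp only [add_sub_assoc, add_assoc]
  · simpa only [add_sub_assoc, add_assoc] using h''.sub_add_I_mul t

theorem norm_inner_modularPow_le {α β : ℂ} (h : IsAdmissible α β) (ζ ξ : H) :
    ‖⟪ζ, modularPow R α β ξ⟫‖ ≤ ‖ζ‖ * (4 * ‖ξ‖) :=
  (norm_inner_le_norm _ _).trans <|
    mul_le_mul_of_nonneg_left (hR.norm_modularPow_apply_le h ξ) (norm_nonneg ζ)

theorem differentiableOn_inner_modularPow (ζ ξ : H) :
    DifferentiableOn ℂ (fun z => ⟪ζ, modularPow R (1 - z) z ξ⟫) (interior unitStrip) := by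
  have hclosed : IsClosed unitStrip := isClosed_Icc.preimage continuous_re
  have hcl {w : ℂ} (hw : w ∈ closure (interior unitStrip)) : w ∈ unitStrip :=
    closure_minimal interior_subset hclosed hw
  exact (innerSL ℂ ζ).differentiable.comp_differentiableOn <|
    (hR.diffContOnCl_modularPow isOpen_interior (fun w hw => isAdmissible_one_sub (hcl hw))
      (differentiable_id.const_sub 1).diffContOnCl differentiable_id.diffContOnCl
      diffContOnCl_const).differentiableOn

end IsStrictlyBetweenZeroTwo

variable {A : VonNeumannAlgebra H} {Ω : H}

theorem exists_kms_function (hΩ : IsCyclicVector (A : Set (H →L[ℂ] H)) Ω)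
    (hΩ' : IsCyclicVector (A.commutant : Set (H →L[ℂ] H)) Ω) {a b : H →L[ℂ] H}
    (ha : a ∈ A) (hb : b ∈ A) :
    let Δ := modularUnitary (sumProj (standardSubspace A Ω))
    ∃ F : ℂ → ℂ, (∃ M : ℝ, ∀ z ∈ unitStrip, ‖F z‖ ≤ M) ∧ ContinuousOn F unitStrip ∧
      DifferentiableOn ℂ F (interior unitStrip) ∧ (∀ t : ℝ, F (I * t) = ⟪Ω, a (Δ t (b Ω))⟫) ∧
      ∀ t : ℝ, F (1 + I * t) = ⟪Ω, b (Δ (-t) (a Ω))⟫ := by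
  intro Δ
  have hK := isStandard_standardSubspace hΩ hΩ'
  have hR := hK.isStrictlyBetweenZeroTwo
  obtain ⟨ζ, hζ, hζ'⟩ := exists_modularPow_eq_apply hΩ hΩ' (star_mem ha)
  obtain ⟨ξ, hξ, hξ'⟩ := exists_modularPow_eq_apply hΩ hΩ' hb
  rw [star_star] at hζ'
  refine ⟨fun z => ⟪ζ, modularPow (sumProj (standardSubspace A Ω)) (1 - z) z ξ⟫,
    ⟨‖ζ‖ * (4 * ‖ξ‖), fun z hz => hR.norm_inner_modularPow_le (isAdmissible_one_sub hz) ζ ξ⟩,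
    continuousOn_const.inner (𝕜 := ℂ) <| hR.continuousOn_modularPow
      (fun z hz => isAdmissible_one_sub hz) (by fun_prop) (by fun_prop) continuousOn_const,
    hR.differentiableOn_inner_modularPow ζ ξ, fun t => ?_, fun t => ?_⟩
  · have h := hR.inner_modularPow_modularUnitary_modularPow isAdmissible_one_half_zero
      isAdmissible_one_half_zero (by norm_num [IsAdmissible, unitStrip]) t ζ ξ
    rw [hζ, hξ, ContinuousLinearMap.star_eq_adjoint, ContinuousLinearMap.adjoint_inner_left,
      star_one_half, star_zero, add_halves, zero_add, zero_add] at h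
    exact h.symm
  · have h := hR.inner_modularPow_modularUnitary_modularPow isAdmissible_zero_one_half
      isAdmissible_zero_one_half (by norm_num [IsAdmissible, unitStrip]) t ζ ξ
    rw [hζ', hξ', ← hK.modularConj_modularUnitary, hK.inner_modularConj_left,
      hK.modularConj_modularConj, hR.inner_modularUnitary_left,
      ContinuousLinearMap.star_eq_adjoint, ContinuousLinearMap.adjoint_inner_left,
      star_one_half, star_zero, add_halves, zero_add, zero_sub] at h
    simpa only [sub_add_cancel_left] using h.symm

end KMS

end TomitaTakesaki

open TomitaTakesaki

/-- **Tomita's theorem combined with the modular KMS theorem.**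
If `Ω` is cyclic and separating for the von Neumann algebra `A`, then there exists a
strongly continuous one-parameter unitary group `U` such that `(A, Ω, U)` satisfies the
KMS condition at inverse temperature `β = 1`. -/
theorem exists_kms_unitary_group
    (A : VonNeumannAlgebra H) (Ω : H)
    (hcyc : IsCyclicVector (A : Set (H →L[ℂ] H)) Ω)
    (hsep : IsCyclicVector (A.commutant : Set (H →L[ℂ] H)) Ω) :
    ∃ U : ℝ → (H →L[ℂ] H), IsOneParamUnitaryGroup U ∧ SatisfiesKMS A Ω U := by
  have hR := (isStandard_standardSubspace hcyc hsep).isStrictlyBetweenZeroTwo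
  refine ⟨fun t => modularUnitary (sumProj (standardSubspace A Ω)) (-t),
    hR.isOneParamUnitaryGroup_modularUnitary_neg,
    fun t => hR.modularUnitary_apply_of_apply_eq_self sumProj_vacuum (-t),
    fun t a ha => modularAut_mem hcyc hsep ha (-t), fun a ha b hb => ?_⟩
  obtain ⟨F, hbound, hcont, hdiff, hleft, hright⟩ := exists_kms_function hcyc hsep ha hb
  exact ⟨F, hbound, hcont, hdiff, fun t => by simp only [hleft, neg_neg], hright⟩
end
end

section
/- Let H be a complex Hilbert space, 𝒜 a von Neumann algebra on H, and Ω ∈ H a vector that is cyclic and separating for 𝒜. If U and V are strongly continuous one-parameter unitary groups on H such that both triples (𝒜, Ω, U) and (𝒜, Ω, V) satisfy the KMS condition at inverse temperature β = 1, then U(t) = V(t) for every t ∈ ℝ. (Uniqueness of the thermal arrow of time: any Hamiltonian satisfying the KMS condition must generate the modular flow.) -/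
open scoped ComplexInnerProductSpace

noncomputable section

variable {H : Type*} [NormedAddCommGroup H] [InnerProductSpace ℂ H] [CompleteSpace H]

open MeasureTheory Filter Topology Set Metric Complex BoundedContinuousFunction

/-!
Fix `a`, `b` and put `P (s, t) = ⟪Ω, a (V s (U (-t) (b Ω)))⟫` and
`Q (t, s) = ⟪Ω, b (U t (V (-s) (a Ω)))⟫`. The KMS condition for `U` continues `P (s, ·)` across the
strip to `Q (·, s)`, and the one for `V` continues `Q (t, ·)` to `P (·, t)`. Hence, after smoothing
against Gaussians in both variables, `P` becomes an entire function along the complexified diagonal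
which has period `1` and is bounded on the strip, so it is constant by Liouville's theorem. Letting
the Gaussians shrink, `P` itself is constant along the diagonal: `V t (U (-t) (b Ω))` has the same
matrix coefficients as `b Ω`.
-/

section ComplexAnalysis

variable {E : Type*} [NormedAddCommGroup E] [NormedSpace ℂ E]

theorem differentiableAt_integral_of_norm_le {α : Type*} [MeasurableSpace α] {μ : Measure α}
    {F : ℂ → α → E} {bound : α → ℝ} {z₀ : ℂ} {r : ℝ} (hr : 0 < r)
    (hF_meas : ∀ z ∈ ball z₀ r, AEStronglyMeasurable (F z) μ)
    (hF_diff : ∀ᵐ x ∂μ, DifferentiableOn ℂ (F · x) (ball z₀ r))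
    (hF_bound : ∀ᵐ x ∂μ, ∀ z ∈ ball z₀ r, ‖F z x‖ ≤ bound x) (hbound : Integrable bound μ) :
    DifferentiableAt ℂ (fun z => ∫ x, F z x ∂μ) z₀ := by
  have hz₀ : z₀ ∈ ball z₀ r := mem_ball_self hr
  have hsub : ∀ z ∈ ball z₀ (r / 2), closedBall z (r / 2) ⊆ ball z₀ r := fun z hz =>
    closedBall_subset_ball' (by linarith [mem_ball.1 hz])
  have hderiv : ∀ᵐ x ∂μ, ∀ z ∈ ball z₀ r, HasDerivAt (F · x) (deriv (F · x) z) z := by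
    filter_upwards [hF_diff] with x hx z hz
    exact (hx.differentiableAt (isOpen_ball.mem_nhds hz)).hasDerivAt
  have hderiv_meas : AEStronglyMeasurable (fun x => deriv (F · x) z₀) μ := by
    obtain ⟨u, hu_lim, hu_mem⟩ := exists_seq_forall_of_frequently
      (eventually_nhdsWithin_of_eventually_nhds (s := {z₀}ᶜ) (ball_mem_nhds z₀ hr)).frequently
    refine aestronglyMeasurable_of_tendsto_ae atTop (f := fun k x => slope (F · x) z₀ (u k))
      (fun k => ((hF_meas _ (hu_mem k)).sub (hF_meas z₀ hz₀)).const_smul _) ?_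
    filter_upwards [hderiv] with x hx
    exact (hx z₀ hz₀).tendsto_slope.comp hu_lim
  have hderiv_bound : ∀ᵐ x ∂μ, ∀ z ∈ ball z₀ (r / 2), ‖deriv (F · x) z‖ ≤ bound x / (r / 2) := by
    filter_upwards [hF_diff, hF_bound] with x hdiff hb z hz
    exact norm_deriv_le_of_forall_mem_sphere_norm_le (half_pos hr)
      (hdiff.diffContOnCl_ball (hsub z hz))
      fun w hw => hb w (hsub z hz (sphere_subset_closedBall hw))
  exact (hasDerivAt_integral_of_dominated_loc_of_deriv_le (ball_mem_nhds z₀ (half_pos hr))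
    (eventually_of_mem (ball_mem_nhds z₀ hr) hF_meas)
    (hbound.mono' (hF_meas z₀ hz₀) (hF_bound.mono fun x hx => hx z₀ hz₀)) hderiv_meas
    hderiv_bound (hbound.div_const _)
    (hderiv.mono fun x hx z hz =>
      hx z (ball_subset_ball (half_le_self hr.le) hz))).2.differentiableAt

theorem tendsto_intervalIntegral_horizontal_of_norm_le {f : ℂ → E} {a b : ℝ} (hab : a ≤ b)
    {g : ℝ → ℝ} (hfg : ∀ z : ℂ, z.re ∈ Icc a b → ‖f z‖ ≤ g z.im) {l : Filter ℝ}
    (hg : Tendsto g l (𝓝 0)) :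
    Tendsto (fun y : ℝ => ∫ x in a..b, f (x + y * I)) l (𝓝 0) := by
  refine squeeze_zero_norm (a := fun y => g y * |b - a|) (fun y => ?_)
    (by simpa using hg.mul_const |b - a|)
  refine intervalIntegral.norm_integral_le_of_norm_le_const fun x hx => ?_
  rw [uIoc_of_le hab] at hx
  simpa using hfg (x + y * I) (by simpa using Ioc_subset_Icc_self hx)

theorem integral_verticalLine_eq_of_norm_le {f : ℂ → E} {a b : ℝ} (hab : a ≤ b)
    (hc : ContinuousOn f (re ⁻¹' Icc a b)) (hd : DifferentiableOn ℂ f (re ⁻¹' Ioo a b))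
    {g : ℝ → ℝ} (hfg : ∀ z : ℂ, z.re ∈ Icc a b → ‖f z‖ ≤ g z.im) (hg : Integrable g)
    (hg_lim : Tendsto g (cocompact ℝ) (𝓝 0)) :
    ∫ y : ℝ, f (a + y * I) = ∫ y : ℝ, f (b + y * I) := by
  have hline : ∀ c ∈ Icc a b, Tendsto (fun R : ℝ => ∫ y in (-R)..R, f (c + y * I)) atTop
      (𝓝 (∫ y : ℝ, f (c + y * I))) := by
    intro c hc'
    have hcont : Continuous fun y : ℝ => f (c + y * I) :=
      hc.comp_continuous (by fun_prop) fun y => by simpa using hc'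
    refine intervalIntegral_tendsto_integral ?_ tendsto_neg_atTop_atBot tendsto_id
    refine hg.mono' hcont.aestronglyMeasurable (ae_of_all _ fun y => ?_)
    simpa using hfg (c + y * I) (by simpa using hc')
  have hbot := (tendsto_intervalIntegral_horizontal_of_norm_le hab hfg
    (hg_lim.mono_left atBot_le_cocompact)).comp tendsto_neg_atTop_atBot
  have htop := tendsto_intervalIntegral_horizontal_of_norm_le hab hfg
    (hg_lim.mono_left atTop_le_cocompact)
  have hrect : ∀ R : ℝ, (∫ x in a..b, f (x + (-R : ℝ) * I)) - (∫ x in a..b, f (x + R * I)) +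
      I • (∫ y in (-R)..R, f (b + y * I)) - I • (∫ y in (-R)..R, f (a + y * I)) = 0 := by
    intro R
    refine integral_boundary_rect_eq_zero_of_continuousOn_of_differentiableOn f ⟨a, -R⟩ ⟨b, R⟩
      (hc.mono fun z hz => ?_) (hd.mono fun z hz => ?_)
    · simpa [uIcc_of_le hab] using hz.1
    · simpa [hab] using hz.1
  have hlim := ((hbot.sub htop).add ((hline b (right_mem_Icc.2 hab)).const_smul I)).sub
    ((hline a (left_mem_Icc.2 hab)).const_smul I)
  have hzero := tendsto_nhds_unique (hlim.congr hrect) tendsto_const_nhds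
  rw [sub_self, zero_add, sub_eq_zero] at hzero
  exact (smul_right_injective E I_ne_zero hzero).symm

end ComplexAnalysis

theorem continuous_integral_smul_comp_add_smul {E F : Type*} [NormedAddCommGroup E]
    [NormedSpace ℝ E] [MeasurableSpace E] [OpensMeasurableSpace E] [SecondCountableTopology E]
    {μ : Measure E} [NormedAddCommGroup F] [NormedSpace ℝ F] {φ : E → ℝ} (hφ : Integrable φ μ)
    (f : E →ᵇ F) (x₀ : E) :
    Continuous fun ε : ℝ => ∫ x, φ x • f (x₀ + ε • x) ∂μ := by
  refine continuous_of_dominated (bound := fun x => ‖φ x‖ * ‖f‖)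
    (fun ε => hφ.1.smul (Continuous.aestronglyMeasurable (by fun_prop)))
    (fun ε => ae_of_all _ fun x => ?_) (hφ.norm.mul_const _) (ae_of_all _ fun x => by fun_prop)
  rw [norm_smul]
  gcongr
  exact f.norm_coe_le_norm _

section GaussianKernel

/-- The Gaussian `t ↦ exp (-n (t - s) ^ 2)` centred at `s`, continued analytically in its centre:
the parameter `ζ = I * s` is the position of the centre on the imaginary axis, where the left
boundary of `unitStrip` lies. -/
def gaussianKernel (n : ℝ) (ζ : ℂ) (t : ℝ) : ℂ := cexp (n * (I * t - ζ) ^ 2)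

theorem norm_gaussianKernel (n : ℝ) (ζ : ℂ) (t : ℝ) :
    ‖gaussianKernel n ζ t‖ = Real.exp (n * ζ.re ^ 2) * Real.exp (-n * (t - ζ.im) ^ 2) := by
  rw [gaussianKernel, norm_exp, ← Real.exp_add]
  congr 1
  simp only [pow_two, mul_re, mul_im, sub_re, sub_im, I_re, I_im, ofReal_re, ofReal_im]
  ring

@[fun_prop]
theorem continuous_gaussianKernel (n : ℝ) (ζ : ℂ) : Continuous (gaussianKernel n ζ) := by
  unfold gaussianKernel
  fun_prop

theorem differentiable_gaussianKernel (n t : ℝ) : Differentiable ℂ (gaussianKernel n · t) := by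
  unfold gaussianKernel
  fun_prop

theorem gaussianKernel_add_mul {ε : ℝ} (hε : ε ≠ 0) (s t : ℝ) :
    gaussianKernel (ε ^ 2)⁻¹ (I * s) (s + ε * t) = Real.exp (-1 * t ^ 2) := by
  have hε' : (ε : ℂ) ≠ 0 := ofReal_ne_zero.2 hε
  have hsq : (((ε ^ 2)⁻¹ : ℝ) : ℂ) * (I * (s + ε * t : ℝ) - I * s) ^ 2 = I ^ 2 * t ^ 2 := by
    push_cast
    field_simp
    ring
  rw [gaussianKernel, hsq, I_sq, ofReal_exp]
  norm_cast

variable {n : ℝ}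

theorem norm_gaussianKernel_le (hn : 0 ≤ n) {ζ : ℂ} {r : ℝ} (hζ : ‖ζ‖ ≤ r) (t : ℝ) :
    ‖gaussianKernel n ζ t‖ ≤ Real.exp (n * r ^ 2) * Real.exp (-(n / 2) * t ^ 2) := by
  have hsq : ζ.re ^ 2 + ζ.im ^ 2 ≤ r ^ 2 := by
    calc ζ.re ^ 2 + ζ.im ^ 2 = ‖ζ‖ ^ 2 := by rw [Complex.sq_norm, normSq_apply]; ring
      _ ≤ r ^ 2 := by gcongr
  have hexp : ζ.re ^ 2 - (t - ζ.im) ^ 2 ≤ r ^ 2 - t ^ 2 / 2 := by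
    nlinarith [sq_nonneg (t - 2 * ζ.im)]
  rw [norm_gaussianKernel, ← Real.exp_add, ← Real.exp_add, Real.exp_le_exp]
  linarith [mul_le_mul_of_nonneg_left hexp hn]

theorem integrable_gaussianKernel (hn : 0 < n) (ζ : ℂ) : Integrable (gaussianKernel n ζ) :=
  ((integrable_exp_neg_mul_sq (half_pos hn)).const_mul _).mono'
    (continuous_gaussianKernel n ζ).aestronglyMeasurable
    (ae_of_all _ (norm_gaussianKernel_le hn.le le_rfl))

theorem integral_norm_gaussianKernel (n : ℝ) (ζ : ℂ) :
    ∫ t, ‖gaussianKernel n ζ t‖ = Real.exp (n * ζ.re ^ 2) * √(Real.pi / n) := by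
  simp only [norm_gaussianKernel]
  rw [integral_const_mul, integral_sub_right_eq_self (fun t : ℝ => Real.exp (-n * t ^ 2)),
    integral_gaussian]

end GaussianKernel

section StripBoundary

/-- `p` and `q` are the values on the left and on the right edge of the strip of a function that
is bounded and continuous on `unitStrip` and holomorphic in its interior. This is the analytic
content of the KMS condition. -/
def IsStripBoundary (p q : ℝ → ℂ) : Prop :=
  ∃ F : ℂ → ℂ,
    (∃ M : ℝ, ∀ z ∈ unitStrip, ‖F z‖ ≤ M) ∧
    ContinuousOn F unitStrip ∧
    DifferentiableOn ℂ F (interior unitStrip) ∧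
    (∀ t : ℝ, F (I * (t : ℂ)) = p t) ∧
    (∀ t : ℝ, F (1 + I * (t : ℂ)) = q t)

variable {n : ℝ} {p q : ℝ → ℂ}

theorem IsStripBoundary.integral_gaussianKernel_mul (h : IsStripBoundary p q) (hn : 0 < n)
    (ζ : ℂ) : ∫ t, gaussianKernel n (ζ + 1) t * p t = ∫ t, gaussianKernel n ζ t * q t := by
  obtain ⟨F, ⟨M, hM⟩, hc, hd, hp, hq⟩ := h
  let f : ℂ → ℂ := fun z => cexp (n * (z - (ζ + 1)) ^ 2) * F z
  let g : ℝ → ℝ := fun y =>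
    Real.exp (n * (‖ζ + 1‖ + 1) ^ 2) * Real.exp (-(n / 2) * y ^ 2) * M
  have hfg : ∀ z : ℂ, z.re ∈ Icc 0 1 → ‖f z‖ ≤ g z.im := by
    intro z hz
    have hkernel : cexp (n * (z - (ζ + 1)) ^ 2) = gaussianKernel n (ζ + 1 - z.re) z.im := by
      rw [gaussianKernel]
      congr 3
      linear_combination -re_add_im z
    have hr : ‖ζ + 1 - z.re‖ ≤ ‖ζ + 1‖ + 1 := (norm_sub_le _ _).trans <| by
      gcongr
      simpa [abs_of_nonneg hz.1] using hz.2
    rw [norm_mul, hkernel]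
    exact mul_le_mul (norm_gaussianKernel_le hn.le hr _) (hM z hz) (norm_nonneg _) (by positivity)
  have hg : Integrable g := ((integrable_exp_neg_mul_sq (half_pos hn)).const_mul _).mul_const _
  have hg_lim : Tendsto g (cocompact ℝ) (𝓝 0) := by
    simpa [g] using ((tendsto_rpow_abs_mul_exp_neg_mul_sq_cocompact (half_pos hn) 0).const_mul
      (Real.exp (n * (‖ζ + 1‖ + 1) ^ 2))).mul_const M
  have hfc : ContinuousOn f (re ⁻¹' Icc 0 1) := ContinuousOn.mul (by fun_prop) hc
  have hfd : DifferentiableOn ℂ f (re ⁻¹' Ioo 0 1) := DifferentiableOn.mul (by fun_prop) <|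
    hd.mono <| interior_maximal (preimage_mono Ioo_subset_Icc_self)
      (isOpen_Ioo.preimage continuous_re)
  have hleft (t : ℝ) : f ((0 : ℝ) + t * I) = gaussianKernel n (ζ + 1) t * p t := by
    simp only [f, gaussianKernel, ← hp, ofReal_zero, zero_add, mul_comm I]
  have hright (t : ℝ) : f ((1 : ℝ) + t * I) = gaussianKernel n ζ t * q t := by
    simp only [f, gaussianKernel, ← hq, ofReal_one, mul_comm I]
    ring_nf
  simpa only [hleft, hright] using
    integral_verticalLine_eq_of_norm_le zero_le_one hfc hfd hfg hg hg_lim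

end StripBoundary

section Smoothing

/-- The convolution of `P` with a Gaussian in each variable, evaluated at complex points `ζ`, `η`
encoded as in `gaussianKernel`. -/
def gaussianSmoothing (n : ℝ) (P : ℝ × ℝ → ℂ) (ζ η : ℂ) : ℂ :=
  ∫ x : ℝ × ℝ, gaussianKernel n ζ x.1 * gaussianKernel n η x.2 * P x

variable {n : ℝ} {P Q : ℝ × ℝ →ᵇ ℂ}

theorem integrable_gaussianKernel_mul (hn : 0 < n) (P : ℝ × ℝ →ᵇ ℂ) (ζ η : ℂ) :
    Integrable fun x : ℝ × ℝ => gaussianKernel n ζ x.1 * gaussianKernel n η x.2 * P x :=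
  ((integrable_gaussianKernel hn ζ).mul_prod (integrable_gaussianKernel hn η)).mul_bdd
    P.continuous.aestronglyMeasurable (ae_of_all _ P.norm_coe_le_norm)

theorem gaussianSmoothing_add_one_right (hn : 0 < n)
    (h : ∀ s, IsStripBoundary (fun t => P (s, t)) (fun t => Q (t, s))) (ζ η : ℂ) :
    gaussianSmoothing n P ζ (η + 1) = gaussianSmoothing n Q η ζ := by
  calc gaussianSmoothing n P ζ (η + 1)
      = ∫ s, ∫ t, gaussianKernel n ζ s * gaussianKernel n (η + 1) t * P (s, t) :=
        integral_prod _ (integrable_gaussianKernel_mul hn P ζ (η + 1))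
    _ = ∫ s, ∫ t, gaussianKernel n η t * gaussianKernel n ζ s * Q (t, s) := by
        congr with s
        simp only [mul_assoc, mul_left_comm _ (gaussianKernel n ζ s), integral_const_mul,
          (h s).integral_gaussianKernel_mul hn]
    _ = gaussianSmoothing n Q η ζ :=
        (integral_prod_symm _ (integrable_gaussianKernel_mul hn Q η ζ)).symm

theorem gaussianSmoothing_add_one_add_one (hn : 0 < n)
    (hPQ : ∀ s, IsStripBoundary (fun t => P (s, t)) (fun t => Q (t, s)))
    (hQP : ∀ s, IsStripBoundary (fun t => Q (s, t)) (fun t => P (t, s))) (ζ η : ℂ) :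
    gaussianSmoothing n P (ζ + 1) (η + 1) = gaussianSmoothing n P ζ η := by
  rw [gaussianSmoothing_add_one_right hn hPQ, gaussianSmoothing_add_one_right hn hQP]

theorem norm_gaussianSmoothing_le (hn : 0 < n) (P : ℝ × ℝ →ᵇ ℂ) (ζ η : ℂ) :
    ‖gaussianSmoothing n P ζ η‖ ≤
      (Real.exp (n * ζ.re ^ 2) * √(Real.pi / n)) * (Real.exp (n * η.re ^ 2) * √(Real.pi / n)) *
        ‖P‖ := by
  rw [← integral_norm_gaussianKernel, ← integral_norm_gaussianKernel, ← integral_prod_mul,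
    ← integral_mul_const]
  refine norm_integral_le_of_norm_le (((integrable_gaussianKernel hn ζ).norm.mul_prod
    (integrable_gaussianKernel hn η).norm).mul_const _) (ae_of_all _ fun x => ?_)
  rw [norm_mul, norm_mul]
  gcongr
  exact P.norm_coe_le_norm x

theorem differentiable_gaussianSmoothing_diagonal (hn : 0 < n) (P : ℝ × ℝ →ᵇ ℂ) (ζ η : ℂ) :
    Differentiable ℂ fun z => gaussianSmoothing n P (ζ + z) (η + z) := by
  intro z₀
  obtain ⟨r, hr⟩ : ∃ r : ℂ → ℝ, ∀ w, ∀ z ∈ ball z₀ 1, ‖w + z‖ ≤ r w :=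
    ⟨fun w => ‖w‖ + (‖z₀‖ + 1), fun w z hz =>
      (norm_add_le _ _).trans (add_le_add le_rfl (norm_lt_of_mem_ball hz).le)⟩
  let bound (w : ℂ) (t : ℝ) : ℝ := Real.exp (n * r w ^ 2) * Real.exp (-(n / 2) * t ^ 2)
  have hbound_int (w : ℂ) : Integrable (bound w) :=
    (integrable_exp_neg_mul_sq (half_pos hn)).const_mul _
  have hbound {z : ℂ} (hz : z ∈ ball z₀ 1) (w : ℂ) (t : ℝ) :
      ‖gaussianKernel n (w + z) t‖ ≤ bound w t := norm_gaussianKernel_le hn.le (hr w z hz) t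
  have hdiff (w : ℂ) (t : ℝ) : Differentiable ℂ fun z => gaussianKernel n (w + z) t :=
    (differentiable_gaussianKernel n t).comp (by fun_prop)
  refine differentiableAt_integral_of_norm_le one_pos
    (F := fun z (x : ℝ × ℝ) => gaussianKernel n (ζ + z) x.1 * gaussianKernel n (η + z) x.2 * P x)
    (bound := fun x => bound ζ x.1 * bound η x.2 * ‖P‖)
    (fun z _ => (integrable_gaussianKernel_mul hn P _ _).1)
    (ae_of_all _ fun x => (((hdiff ζ x.1).mul (hdiff η x.2)).mul_const (P x)).differentiableOn)
    (ae_of_all _ fun x z hz => ?_) (((hbound_int ζ).mul_prod (hbound_int η)).mul_const _)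
  rw [norm_mul, norm_mul]
  gcongr
  exacts [hbound hz ζ x.1, hbound hz η x.2, P.norm_coe_le_norm x]

theorem gaussianSmoothing_diagonal_eq (hn : 0 < n)
    (hPQ : ∀ s, IsStripBoundary (fun t => P (s, t)) (fun t => Q (t, s)))
    (hQP : ∀ s, IsStripBoundary (fun t => Q (s, t)) (fun t => P (t, s))) (ζ η z : ℂ) :
    gaussianSmoothing n P (ζ + z) (η + z) = gaussianSmoothing n P ζ η := by
  let G : ℂ → ℂ := fun z => gaussianSmoothing n P (ζ + z) (η + z)
  have hper : Function.Periodic G 1 := fun z => by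
    simp only [G, ← add_assoc, gaussianSmoothing_add_one_add_one hn hPQ hQP]
  let B (w : ℂ) : ℝ := Real.exp (n * (|w.re| + 1) ^ 2) * √(Real.pi / n)
  have hstrip : ∀ z : ℂ, z.re ∈ Icc 0 1 → ‖G z‖ ≤ B ζ * B η * ‖P‖ := by
    intro z hz
    have hB (w : ℂ) : Real.exp (n * (w + z).re ^ 2) * √(Real.pi / n) ≤ B w := by
      have hre : (w + z).re ^ 2 ≤ (|w.re| + 1) ^ 2 := by
        rw [add_re]
        refine sq_le_sq' ?_ ?_ <;> linarith [hz.1, hz.2, neg_abs_le w.re, le_abs_self w.re]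
      dsimp only [B]
      gcongr Real.exp (n * ?_) * _
    refine (norm_gaussianSmoothing_le hn P _ _).trans ?_
    gcongr <;> exact hB _
  have hbdd : Bornology.IsBounded (range G) := by
    refine isBounded_iff_forall_norm_le.2 ⟨B ζ * B η * ‖P‖, forall_mem_range.2 fun z => ?_⟩
    rw [← hper.sub_int_mul_eq ⌊z.re⌋]
    refine hstrip _ ?_
    simpa using (Int.fract_lt_one z.re).le
  simpa [G] using
    (differentiable_gaussianSmoothing_diagonal hn P ζ η).apply_eq_apply_of_bounded hbdd z 0

theorem gaussianSmoothing_I_mul {ε : ℝ} (hε : ε ≠ 0) (P : ℝ × ℝ → ℂ) (s t : ℝ) :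
    gaussianSmoothing (ε ^ 2)⁻¹ P (I * s) (I * t) = (ε ^ 2) •
      ∫ x : ℝ × ℝ, (Real.exp (-1 * x.1 ^ 2) * Real.exp (-1 * x.2 ^ 2)) • P ((s, t) + ε • x) := by
  let f : ℝ × ℝ → ℂ := fun x =>
    gaussianKernel (ε ^ 2)⁻¹ (I * s) x.1 * gaussianKernel (ε ^ 2)⁻¹ (I * t) x.2 * P x
  have hf (x : ℝ × ℝ) : f ((s, t) + ε • x) =
      (Real.exp (-1 * x.1 ^ 2) * Real.exp (-1 * x.2 ^ 2)) • P ((s, t) + ε • x) := by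
    simp only [f, Prod.fst_add, Prod.snd_add, Prod.smul_fst, Prod.smul_snd, smul_eq_mul,
      gaussianKernel_add_mul hε, real_smul, ofReal_mul]
  have hscale := Measure.integral_comp_smul volume (fun x => f ((s, t) + x)) ε
  rw [integral_add_left_eq_self f (s, t)] at hscale
  simp only [hf, Module.finrank_prod, Module.finrank_self, Nat.reduceAdd] at hscale
  rw [hscale, smul_smul, abs_of_pos (by positivity), mul_inv_cancel₀ (by positivity), one_smul]
  rfl

theorem diagonal_invariant_of_isStripBoundary
    (hPQ : ∀ s, IsStripBoundary (fun t => P (s, t)) (fun t => Q (t, s)))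
    (hQP : ∀ s, IsStripBoundary (fun t => Q (s, t)) (fun t => P (t, s))) (s t T : ℝ) :
    P (s + T, t + T) = P (s, t) := by
  let φ : ℝ × ℝ → ℝ := fun x => Real.exp (-1 * x.1 ^ 2) * Real.exp (-1 * x.2 ^ 2)
  have hφ : Integrable φ :=
    (integrable_exp_neg_mul_sq one_pos).mul_prod (integrable_exp_neg_mul_sq one_pos)
  have hφ_ne : ∫ x, φ x ≠ 0 := by
    have hφ_eq : ∫ x, φ x = √(Real.pi / 1) * √(Real.pi / 1) := by
      rw [← integral_gaussian, ← integral_prod_mul]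
      rfl
    rw [hφ_eq]
    positivity
  have hne : EqOn (fun ε : ℝ => ∫ x, φ x • P ((s + T, t + T) + ε • x))
      (fun ε : ℝ => ∫ x, φ x • P ((s, t) + ε • x)) {0}ᶜ := by
    intro ε hε
    have hε' : ε ^ 2 ≠ 0 := pow_ne_zero 2 hε
    have hshift := gaussianSmoothing_diagonal_eq (n := (ε ^ 2)⁻¹) (by positivity) hPQ hQP
      (I * s) (I * t) (I * T)
    rw [← mul_add, ← mul_add, ← ofReal_add, ← ofReal_add, gaussianSmoothing_I_mul hε,
      gaussianSmoothing_I_mul hε] at hshift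
    exact smul_right_injective ℂ hε' hshift
  have hzero := congrFun ((continuous_integral_smul_comp_add_smul hφ P _).ext_on
    (dense_compl_singleton 0) (continuous_integral_smul_comp_add_smul hφ P _) hne) 0
  simp only [zero_smul, add_zero, integral_smul_const] at hzero
  exact smul_right_injective ℂ hφ_ne hzero

end Smoothing

section KMS

theorem inner_map_of_mem_unitary_of_map_eq {u : H →L[ℂ] H} (hu : u ∈ unitary (H →L[ℂ] H)) {Ω : H}
    (hΩ : u Ω = Ω) (x : H) : ⟪Ω, u x⟫ = ⟪Ω, x⟫ := by
  simpa only [hΩ] using ContinuousLinearMap.inner_map_map_of_mem_unitary hu Ω x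

namespace IsOneParamUnitaryGroup

variable {U : ℝ → H →L[ℂ] H}

theorem norm_apply (hU : IsOneParamUnitaryGroup U) (t : ℝ) (x : H) : ‖U t x‖ = ‖x‖ :=
  ContinuousLinearMap.norm_map_of_mem_unitary (hU.1 t) x

theorem neg_mul_self (hU : IsOneParamUnitaryGroup U) (t : ℝ) : U (-t) * U t = 1 := by
  rw [← hU.2.2.1, neg_add_cancel, hU.2.1]

theorem continuous_uncurry (hU : IsOneParamUnitaryGroup U) :
    Continuous fun p : ℝ × H => U p.1 p.2 :=
  continuous_prod_of_continuous_lipschitzWith' _ 1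
    (fun t => (AddMonoidHomClass.isometry_of_norm (U t) (hU.norm_apply t)).lipschitz)
    hU.2.2.2

end IsOneParamUnitaryGroup

/-- The KMS condition at inverse temperature `β = 1` for an arbitrary set `S` of observables. For
a von Neumann algebra this is `SatisfiesKMS`. -/
structure SatisfiesKMSOn (S : Set (H →L[ℂ] H)) (Ω : H) (U : ℝ → H →L[ℂ] H) : Prop where
  map_eq : ∀ t, U t Ω = Ω
  conj_mem : ∀ t, ∀ a ∈ S, U t * a * U (-t) ∈ S
  isStripBoundary : ∀ a ∈ S, ∀ b ∈ S,
    IsStripBoundary (fun t => ⟪Ω, a (U (-t) (b Ω))⟫) (fun t => ⟪Ω, b (U t (a Ω))⟫)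

variable {S : Set (H →L[ℂ] H)} {Ω : H} {U V : ℝ → H →L[ℂ] H}

/-- The two-time correlation function `(s, t) ↦ ⟪Ω, a (V s (U (-t) (b Ω)))⟫` of two dynamics. -/
def twoTimeCorrelation (Ω : H) (hV : IsOneParamUnitaryGroup V) (hU : IsOneParamUnitaryGroup U)
    (a b : H →L[ℂ] H) : ℝ × ℝ →ᵇ ℂ :=
  BoundedContinuousFunction.ofNormedAddCommGroup
    (fun x => ⟪Ω, a (V x.1 (U (-x.2) (b Ω)))⟫)
    (by
      have hVU : Continuous fun x : ℝ × ℝ => V x.1 (U (-x.2) (b Ω)) :=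
        hV.continuous_uncurry.comp
          (continuous_fst.prodMk ((hU.2.2.2 (b Ω)).comp continuous_snd.neg))
      exact continuous_const.inner (a.continuous.comp hVU))
    (‖Ω‖ * (‖a‖ * ‖b Ω‖))
    (fun x => (norm_inner_le_norm _ _).trans <| by
      gcongr
      simpa only [hV.norm_apply, hU.norm_apply] using a.le_opNorm (V x.1 (U (-x.2) (b Ω))))

theorem isStripBoundary_twoTimeCorrelation (hV : IsOneParamUnitaryGroup V)
    (hU : IsOneParamUnitaryGroup U) (hVkms : SatisfiesKMSOn S Ω V) (hUkms : SatisfiesKMSOn S Ω U)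
    {a b : H →L[ℂ] H} (ha : a ∈ S) (hb : b ∈ S) (s : ℝ) :
    IsStripBoundary (fun t => twoTimeCorrelation Ω hV hU a b (s, t))
      (fun t => twoTimeCorrelation Ω hU hV b a (t, s)) := by
  have h := hUkms.isStripBoundary _ (hVkms.conj_mem (-s) a ha) b hb
  simpa only [twoTimeCorrelation, BoundedContinuousFunction.coe_ofNormedAddCommGroup,
    mul_apply_eq_comp, neg_neg, hVkms.map_eq,
    inner_map_of_mem_unitary_of_map_eq (hV.1 _) (hVkms.map_eq _)] using h

theorem inner_apply_apply_neg_eq (hV : IsOneParamUnitaryGroup V) (hU : IsOneParamUnitaryGroup U)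
    (hVkms : SatisfiesKMSOn S Ω V) (hUkms : SatisfiesKMSOn S Ω U) {a b : H →L[ℂ] H}
    (ha : a ∈ S) (hb : b ∈ S) (t : ℝ) :
    ⟪Ω, a (V t (U (-t) (b Ω)))⟫ = ⟪Ω, a (b Ω)⟫ := by
  have h := diagonal_invariant_of_isStripBoundary
    (isStripBoundary_twoTimeCorrelation hV hU hVkms hUkms ha hb)
    (isStripBoundary_twoTimeCorrelation hU hV hUkms hVkms hb ha) 0 0 t
  simpa [twoTimeCorrelation, hU.2.1, hV.2.1] using h

theorem kms_unitary_group_unique_general (hstar : ∀ a ∈ S, star a ∈ S) (hcyc : IsCyclicVector S Ω)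
    (hU : IsOneParamUnitaryGroup U) (hV : IsOneParamUnitaryGroup V)
    (hUkms : SatisfiesKMSOn S Ω U) (hVkms : SatisfiesKMSOn S Ω V) (t : ℝ) : U t = V t := by
  have hfix : ∀ b ∈ S, V t (U (-t) (b Ω)) = b Ω := by
    intro b hb
    refine hcyc.eq_of_inner_right ℂ ?_
    rintro _ ⟨a, ha, rfl⟩
    simpa only [ContinuousLinearMap.star_eq_adjoint, ContinuousLinearMap.adjoint_inner_right]
      using inner_apply_apply_neg_eq hV hU hVkms hUkms (hstar a ha) hb t
  have hVU : V t * U (-t) = 1 := by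
    refine ContinuousLinearMap.coeFn_injective <| Continuous.ext_on hcyc
      (V t * U (-t)).continuous (1 : H →L[ℂ] H).continuous ?_
    rintro _ ⟨b, hb, rfl⟩
    exact hfix b hb
  calc U t = V t * U (-t) * U t := by rw [hVU, one_mul]
    _ = V t := by rw [mul_assoc, hU.neg_mul_self, mul_one]

theorem SatisfiesKMS.satisfiesKMSOn {A : VonNeumannAlgebra H} (h : SatisfiesKMS A Ω U) :
    SatisfiesKMSOn (A : Set (H →L[ℂ] H)) Ω U :=
  ⟨h.1, h.2.1, h.2.2⟩

end KMS

/-- **Uniqueness of the thermal arrow of time.**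
If `Ω` is cyclic and separating for the von Neumann algebra `A`, and `U`, `V` are strongly
continuous one-parameter unitary groups such that both `(A, Ω, U)` and `(A, Ω, V)` satisfy
the KMS condition at inverse temperature `β = 1`, then `U = V`. -/
theorem kms_unitary_group_unique
    (A : VonNeumannAlgebra H) (Ω : H)
    (hcyc : IsCyclicVector (A : Set (H →L[ℂ] H)) Ω)
    (hsep : IsCyclicVector (A.commutant : Set (H →L[ℂ] H)) Ω)
    (U V : ℝ → (H →L[ℂ] H))
    (hU : IsOneParamUnitaryGroup U) (hV : IsOneParamUnitaryGroup V)
    (hUkms : SatisfiesKMS A Ω U) (hVkms : SatisfiesKMS A Ω V) :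
    ∀ t : ℝ, U t = V t :=
  kms_unitary_group_unique_general (fun _ => star_mem) hcyc hU hV hUkms.satisfiesKMSOn
    hVkms.satisfiesKMSOn
end
end
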